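/- arXiv:1408.5391 — 3 statements merged into one kernel-verified Lean document; each statement's English description precedes it below -/
import Mathlib

section
/- For every integer n ≥ 1, 2^{binomial(n,2)} = Σ_{A} 2^{N(A)}, where the sum is over all n×n alternating sign matrices A and N(A) denotes the number of entries of A equal to −1. -/
/-!
The sums of the first `m` rows of an alternating sign matrix form the indicator vector of an
`m`-element set `S` of columns, and row `m` can be `1_S - 1_S'` exactly when `S'` interlaces `S`.
Let `F(S)` be the sum of `2 ^ N(A)` over the `m × n` matrices `A` that can arise as these first
`m` rows. Then `F(S) = ∑ 2 ^ #(S' \ S) F(S')`, summed over the `S'` interlacing `S`. If `S` has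
elements `k₁ < ⋯ < kₘ`, the weight is a product of trapezoidal weights: the `i`-th element of `S'`
runs over `[kᵢ, kᵢ₊₁]`, endpoints counting once and interior points twice.

The Delannoy numbers obey `D(x + 1, j + 1) - D(x, j + 1) = D(x, j) + D(x + 1, j)`, so `D(·, j + 1)`
is a trapezoidal antiderivative of `D(·, j)`, and by multilinearity `det D(kᵢ, j)` satisfies the
recursion of `F`. For `S` the set of all columns, `F(S)` is therefore the determinant of the
`n × n` Delannoy matrix, which is `2 ^ n.choose 2`.
-/

open scoped Classical

/-- An `n × n` alternating sign matrix: entries in `{-1,0,1}`, all row and column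
sums equal to 1, and all partial row and column sums equal to 0 or 1. -/
def IsASM (n : ℕ) (A : Fin n → Fin n → ℤ) : Prop :=
  (∀ i j, A i j = -1 ∨ A i j = 0 ∨ A i j = 1) ∧
  (∀ i, ∑ j, A i j = 1) ∧
  (∀ j, ∑ i, A i j = 1) ∧
  (∀ i k, (∑ j ∈ Finset.Iic k, A i j) = 0 ∨ (∑ j ∈ Finset.Iic k, A i j) = 1) ∧
  (∀ j k, (∑ i ∈ Finset.Iic k, A i j) = 0 ∨ (∑ i ∈ Finset.Iic k, A i j) = 1)

/-- The number of `-1` entries of a matrix. -/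
def negCount (n : ℕ) (A : Fin n → Fin n → ℤ) : ℕ :=
  (Finset.univ.filter (fun p : Fin n × Fin n => A p.1 p.2 = -1)).card

namespace AlternatingSign

open Finset

section Delannoy

/-- The Delannoy numbers: `delannoy i j` counts the lattice paths from `(0, 0)` to `(i, j)` with
steps `(1, 0)`, `(0, 1)` and `(1, 1)`. -/
def delannoy : ℕ → ℕ → ℕ
  | _, 0 => 1
  | 0, _ + 1 => 1
  | i + 1, j + 1 => delannoy i (j + 1) + delannoy i j + delannoy (i + 1) j

@[simp]
theorem delannoy_zero_right (i : ℕ) : delannoy i 0 = 1 := by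
  simp [delannoy]

theorem delannoy_succ_succ (i j : ℕ) :
    delannoy (i + 1) (j + 1) = delannoy i (j + 1) + delannoy i j + delannoy (i + 1) j := by
  rw [delannoy]

theorem delannoy_succ_sub (i j : ℕ) :
    (delannoy (i + 1) (j + 1) - delannoy i (j + 1) : ℤ) = delannoy i j + delannoy (i + 1) j := by
  rw [delannoy_succ_succ]
  push_cast
  ring

/-- The matrix `(D(kᵢ, j))` formed by `m` rows and the first `m` columns of the array of Delannoy
numbers `D`. -/
def delannoyMatrix {m : ℕ} (k : Fin m → ℕ) : Matrix (Fin m) (Fin m) ℤ :=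
  Matrix.of fun i j => (delannoy (k i) j : ℤ)

theorem delannoyMatrix_apply {m : ℕ} (k : Fin m → ℕ) (i j : Fin m) :
    delannoyMatrix k i j = delannoy (k i) j :=
  rfl

theorem det_delannoyMatrix_eq_zero {m : ℕ} {k : Fin m → ℕ} (hk : ¬ Function.Injective k) :
    (delannoyMatrix k).det = 0 := by
  obtain ⟨i, j, hij, hne⟩ := Function.not_injective_iff.1 hk
  refine Matrix.det_zero_of_row_eq hne (funext fun x => ?_)
  rw [delannoyMatrix_apply, delannoyMatrix_apply, hij]

theorem det_eq_det_sub_of_col_zero_eq_one {R : Type*} [CommRing R] {m : ℕ}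
    {A : Matrix (Fin (m + 1)) (Fin (m + 1)) R} (hA : ∀ i, A i 0 = 1) :
    A.det = (Matrix.of fun i j : Fin m => A i.succ j.succ - A i.castSucc j.succ).det := by
  let B : Matrix (Fin (m + 1)) (Fin (m + 1)) R :=
    Matrix.of (Fin.cons (A 0) fun i : Fin m => A i.succ - A i.castSucc)
  have hAB : A.det = B.det :=
    Matrix.det_eq_of_forall_row_eq_smul_add_pred (fun _ => 1) (fun _ => rfl) fun i j => by simp [B]
  rw [hAB, Matrix.det_succ_column_zero, Fin.sum_univ_succ]
  simp [B, hA, Matrix.submatrix]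

theorem det_delannoyMatrix_succ {m : ℕ} (k : Fin (m + 1) → ℕ) :
    (delannoyMatrix k).det =
      (Matrix.of fun i j : Fin m =>
        (delannoy (k i.succ) (j + 1) - delannoy (k i.castSucc) (j + 1) : ℤ)).det := by
  rw [det_eq_det_sub_of_col_zero_eq_one fun i => by simp [delannoyMatrix_apply]]
  simp only [delannoyMatrix_apply, Fin.val_succ]

theorem det_delannoy_add_delannoy_succ {m : ℕ} (k : Fin m → ℕ) :
    (Matrix.of fun i j : Fin m => (delannoy (k i) j + delannoy (k i + 1) j : ℤ)).det =
      2 ^ m * (delannoyMatrix k).det := by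
  cases m with
  | zero => simp
  | succ m =>
    have hsmul : ((2 : ℤ) • delannoyMatrix k).det = 2 ^ (m + 1) * (delannoyMatrix k).det := by
      rw [Matrix.det_smul, Fintype.card_fin]
    rw [← hsmul]
    refine Matrix.det_eq_of_forall_col_eq_smul_add_pred (fun _ => 1) (fun i => ?_) fun i j => ?_
    · simp [delannoyMatrix_apply]
    · simp only [Matrix.of_apply, Matrix.smul_apply, delannoyMatrix_apply, Fin.val_succ,
        Fin.val_castSucc, delannoy_succ_succ]
      push_cast
      ring

theorem det_delannoyMatrix_val (n : ℕ) :
    (delannoyMatrix (Fin.val : Fin n → ℕ)).det = 2 ^ n.choose 2 := by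
  induction n with
  | zero => simp
  | succ n ih =>
    rw [det_delannoyMatrix_succ]
    simp only [Fin.val_succ, Fin.val_castSucc, delannoy_succ_sub]
    rw [det_delannoy_add_delannoy_succ fun i : Fin n => (i : ℕ), ih, ← pow_add,
      Nat.choose_succ_succ' n 1, Nat.choose_one_right]

end Delannoy

section Trapezoid

/-- The weight of `x` in the trapezoidal sum over an interval `[a, b]` with `a < b`, scaled to be
integral: endpoints count once, interior points twice. -/
def trapezoidWeight {α : Type*} [DecidableEq α] (a b x : α) : ℤ :=
  if x = a ∨ x = b then 1 else 2

theorem sum_trapezoidWeight_mul (f : ℕ → ℤ) {a b : ℕ} (hab : a < b) :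
    ∑ x ∈ Icc a b, trapezoidWeight a b x * f x = ∑ x ∈ Ico a b, (f x + f (x + 1)) := by
  have hweight : ∀ x ∈ Icc a b, trapezoidWeight a b x * f x =
      (if x < b then f x else 0) + (if a < x then f x else 0) := by
    intro x hx
    rw [mem_Icc] at hx
    unfold trapezoidWeight
    split_ifs <;> omega
  have hIco : {x ∈ Icc a b | x < b} = Ico a b := by
    ext; simp only [mem_filter, mem_Icc, mem_Ico]; omega
  have hIoc : {x ∈ Icc a b | a < x} = Ico (a + 1) (b + 1) := by
    ext; simp only [mem_filter, mem_Icc, mem_Ico]; omega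
  rw [sum_congr rfl hweight, sum_add_distrib, ← sum_filter, ← sum_filter, hIco, hIoc,
    ← sum_Ico_add' f a b 1, sum_add_distrib]

theorem sum_trapezoidWeight_mul_delannoy {N : ℕ} {a b : Fin N} (hab : a < b) (j : ℕ) :
    ∑ x ∈ Icc a b, trapezoidWeight a b x * (delannoy x j : ℤ) =
      delannoy b (j + 1) - delannoy a (j + 1) := by
  calc ∑ x ∈ Icc a b, trapezoidWeight a b x * (delannoy x j : ℤ)
      = ∑ x ∈ Icc (a : ℕ) b, trapezoidWeight (a : ℕ) b x * (delannoy x j : ℤ) := by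
        simp only [← Fin.map_valEmbedding_Icc, sum_map, Fin.valEmbedding_apply, trapezoidWeight,
          Fin.val_inj]
    _ = ∑ x ∈ Ico (a : ℕ) b, (delannoy x j + delannoy (x + 1) j : ℤ) :=
        sum_trapezoidWeight_mul _ hab
    _ = ∑ x ∈ Ico (a : ℕ) b, (delannoy (x + 1) (j + 1) - delannoy x (j + 1) : ℤ) := by
        simp only [delannoy_succ_sub]
    _ = delannoy b (j + 1) - delannoy a (j + 1) :=
        sum_Ico_sub (fun x => (delannoy x (j + 1) : ℤ)) hab.le

theorem det_sum_mul_row {R ι κ : Type*} [CommRing R] [Fintype ι] [DecidableEq ι]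
    (s : ι → Finset κ) (w : ι → κ → R) (v : κ → ι → R) :
    (Matrix.of fun i j => ∑ x ∈ s i, w i x * v x j).det =
      ∑ l ∈ Fintype.piFinset s, (∏ i, w i (l i)) * (Matrix.of fun i => v (l i)).det := by
  have h := (Matrix.detRowAlternating (R := R) (n := ι)).toMultilinearMap.map_sum_finset
    (fun i x => w i x • v x) s
  simp only [MultilinearMap.map_smul_univ] at h
  refine (congrArg Matrix.det ?_).trans h
  ext i j
  simp [Finset.sum_apply]

theorem sum_prod_trapezoidWeight_mul_det {N m : ℕ} {k : Fin (m + 1) → Fin N} (hk : StrictMono k) :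
    ∑ l ∈ Fintype.piFinset fun i : Fin m => Icc (k i.castSucc) (k i.succ),
      (∏ i, trapezoidWeight (k i.castSucc) (k i.succ) (l i)) *
        (delannoyMatrix fun i => l i).det =
      (delannoyMatrix fun i => k i).det := by
  rw [det_delannoyMatrix_succ]
  simp only [← sum_trapezoidWeight_mul_delannoy (hk Fin.castSucc_lt_succ)]
  exact (det_sum_mul_row _ _ fun (x : Fin N) (j : Fin m) => (delannoy x j : ℤ)).symm

end Trapezoid

section Interlacing

variable {α : Type*}

/-- The tuple `l` interlaces the tuple `k`, as consecutive rows of a Gelfand-Tsetlin pattern do: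
`k₀ ≤ l₀ ≤ k₁ ≤ l₁ ≤ ⋯ ≤ kₘ`. -/
def Interlaces [LE α] {m : ℕ} (k : Fin (m + 1) → α) (l : Fin m → α) : Prop :=
  ∀ i, k i.castSucc ≤ l i ∧ l i ≤ k i.succ

theorem Interlaces.monotone [Preorder α] {m : ℕ} {k : Fin (m + 1) → α} {l : Fin m → α}
    (h : Interlaces k l) (hk : Monotone k) : Monotone l := by
  intro i j hij
  obtain rfl | hij := hij.eq_or_lt
  · exact le_rfl
  · exact (h i).2.trans ((hk (Fin.succ_le_castSucc_iff.2 hij)).trans (h j).1)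

variable [LinearOrder α]

theorem Interlaces.mem_map_iff {m : ℕ} {k : Fin (m + 1) ↪o α} {l : Fin m → α}
    (h : Interlaces k l) (i : Fin m) :
    l i ∈ univ.map k.toEmbedding ↔ l i = k i.castSucc ∨ l i = k i.succ := by
  simp only [mem_map, mem_univ, true_and, RelEmbedding.coe_toEmbedding]
  constructor
  · rintro ⟨j, hj⟩
    obtain hji | hji := le_or_gt j i.castSucc
    · exact Or.inl (le_antisymm (hj ▸ k.monotone hji) (h i).1)
    · exact Or.inr (le_antisymm (h i).2 (hj ▸ k.monotone (Fin.castSucc_lt_iff_succ_le.1 hji)))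
  · rintro (hi | hi)
    · exact ⟨_, hi.symm⟩
    · exact ⟨_, hi.symm⟩

theorem Interlaces.prod_trapezoidWeight {m : ℕ} {k : Fin (m + 1) ↪o α} {l : Fin m ↪o α}
    (h : Interlaces k l) :
    ∏ i, trapezoidWeight (k i.castSucc) (k i.succ) (l i) =
      2 ^ #(univ.map l.toEmbedding \ univ.map k.toEmbedding) := by
  have hsdiff : univ.map l.toEmbedding \ univ.map k.toEmbedding =
      ({i | l i ∉ univ.map k.toEmbedding} : Finset (Fin m)).map l.toEmbedding := by
    ext x
    simp only [mem_sdiff, mem_map, mem_filter, mem_univ, true_and, RelEmbedding.coe_toEmbedding]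
    grind
  rw [hsdiff, card_map, ← prod_const, prod_filter]
  refine prod_congr rfl fun i _ => ?_
  rw [trapezoidWeight, ite_not]
  exact if_congr (h.mem_map_iff i).symm rfl rfl

theorem apply_le_iff_lt_card {m : ℕ} (k : Fin m ↪o α) (i : Fin m) (x : α) :
    k i ≤ x ↔ (i : ℕ) < #{j | k j ≤ x} := by
  constructor
  · intro h
    have hsub : Iic i ⊆ ({j | k j ≤ x} : Finset (Fin m)) := fun j hj => by
      simpa using (k.monotone (mem_Iic.1 hj)).trans h
    simpa using card_le_card hsub
  · intro h
    by_contra hx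
    have hsub : ({j | k j ≤ x} : Finset (Fin m)) ⊆ Iio i := fun j hj =>
      mem_Iio.2 (k.lt_iff_lt.1 ((mem_filter.1 hj).2.trans_lt (not_le.1 hx)))
    have hcard := card_le_card hsub
    rw [Fin.card_Iio] at hcard
    omega

theorem interlaces_iff_forall_card {m : ℕ} {k : Fin (m + 1) ↪o α} {l : Fin m ↪o α} :
    Interlaces k l ↔ ∀ x, #{i | l i ≤ x} ≤ #{i | k i ≤ x} ∧
      #{i | k i ≤ x} ≤ #{i | l i ≤ x} + 1 := by
  refine ⟨fun h x => ⟨?_, ?_⟩, fun h i => ⟨?_, ?_⟩⟩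
  · by_contra! hlt
    have hm : #{i | k i ≤ x} < m := hlt.trans_le ((card_le_univ _).trans_eq (Fintype.card_fin m))
    have hl : l ⟨_, hm⟩ ≤ x := (apply_le_iff_lt_card l _ x).2 hlt
    exact lt_irrefl _ ((apply_le_iff_lt_card k _ x).1 ((h _).1.trans hl))
  · by_contra! hlt
    have hm : #{i | l i ≤ x} < m :=
      Nat.lt_of_succ_lt_succ (hlt.trans_le ((card_le_univ _).trans_eq (Fintype.card_fin _)))
    have hk : k (Fin.succ ⟨_, hm⟩) ≤ x := (apply_le_iff_lt_card k _ x).2 hlt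
    exact lt_irrefl _ ((apply_le_iff_lt_card l _ x).1 ((h _).2.trans hk))
  · exact (apply_le_iff_lt_card k _ _).2
      (((apply_le_iff_lt_card l i _).1 le_rfl).trans_le (h (l i)).1)
  · have hk := (apply_le_iff_lt_card k i.succ _).1 le_rfl
    exact (apply_le_iff_lt_card l i _).2 (Nat.lt_of_succ_lt_succ (hk.trans_le (h (k i.succ)).2))

theorem sum_interlaces_eq_sum_orderEmbedding [Fintype α] {M : Type*} [AddCommMonoid M] {m : ℕ}
    (k : Fin (m + 1) ↪o α) {F : (Fin m → α) → M} (hF : ∀ l, ¬ Function.Injective l → F l = 0) :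
    ∑ l : Fin m → α with Interlaces k l, F l =
      ∑ l ∈ univ.filter fun l : Fin m ↪o α => Interlaces k l, F l := by
  symm
  refine sum_of_injOn (fun l => ⇑l) DFunLike.coe_injective.injOn (fun l hl => ?_)
    (fun l hl hl' => hF l fun hinj => hl' ?_) fun _ _ => rfl
  · simpa using hl
  · have hl : Interlaces k l := (mem_filter.1 hl).2
    have hmono : StrictMono l := (hl.monotone k.monotone).strictMono_of_injective hinj
    exact ⟨OrderEmbedding.ofStrictMono l hmono, by simpa using hl, rfl⟩

end Interlacing

section Rows

variable {α : Type*} [DecidableEq α]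

/-- The indicator vector `1_S` of a set `S` of columns. -/
def indicatorRow (S : Finset α) (j : α) : ℤ := if j ∈ S then 1 else 0

theorem indicatorRow_eq_zero_or_one (S : Finset α) (j : α) :
    indicatorRow S j = 0 ∨ indicatorRow S j = 1 := by
  unfold indicatorRow
  split_ifs <;> simp

theorem indicatorRow_injective : Function.Injective (indicatorRow (α := α)) := by
  intro S S' h
  ext j
  have hj := congrFun h j
  unfold indicatorRow at hj
  split_ifs at hj <;> simp_all

theorem sum_indicatorRow [Fintype α] (S : Finset α) : ∑ j, indicatorRow S j = #S := by
  simp [indicatorRow]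

/-- The number of entries `-1` of a rectangular matrix. -/
def negEntryCount {ι κ : Type*} [Fintype ι] [Fintype κ] (A : ι → κ → ℤ) : ℕ :=
  #{p : ι × κ | A p.1 p.2 = -1}

theorem negEntryCount_snoc [Fintype α] {m : ℕ} (A : Fin m → α → ℤ) (S S' : Finset α) :
    negEntryCount (Fin.snoc A (indicatorRow S - indicatorRow S') : Fin (m + 1) → α → ℤ) =
      negEntryCount A + #(S' \ S) := by
  have hlast : ({j | (indicatorRow S - indicatorRow S') j = -1} : Finset α) = S' \ S := by
    ext j
    rw [mem_filter, mem_sdiff, Pi.sub_apply, indicatorRow, indicatorRow]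
    split_ifs <;> simp_all
  simp only [negEntryCount, card_filter, Fintype.sum_prod_type, Fin.sum_univ_castSucc,
    Fin.snoc_castSucc, Fin.snoc_last]
  rw [← card_filter, hlast]

end Rows

section Alternating

variable {α : Type*}

/-- All partial sums of `r` are `0` or `1`, that is, the nonzero entries of `r` are
`1, -1, 1, -1, …`. -/
def IsAlternating [Preorder α] [LocallyFiniteOrderBot α] (r : α → ℤ) : Prop :=
  ∀ x, ∑ j ∈ Iic x, r j = 0 ∨ ∑ j ∈ Iic x, r j = 1

theorem isAlternating_fin_succ_iff {m : ℕ} {r : Fin (m + 1) → ℤ} :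
    IsAlternating r ↔
      IsAlternating (fun i : Fin m => r i.castSucc) ∧ (∑ i, r i = 0 ∨ ∑ i, r i = 1) := by
  have hlast : Iic (Fin.last m) = univ := Iic_top
  simp only [IsAlternating, Fin.forall_fin_succ', Fin.sum_Iic_castSucc, hlast]

theorem IsAlternating.sum_eq_zero_or_one {m : ℕ} {r : Fin m → ℤ} (hr : IsAlternating r) :
    ∑ i, r i = 0 ∨ ∑ i, r i = 1 := by
  cases m with
  | zero => simp
  | succ m => exact (isAlternating_fin_succ_iff.1 hr).2

variable [LinearOrder α] [LocallyFiniteOrderBot α]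

theorem sum_Iic_indicatorRow_map {m : ℕ} (k : Fin m ↪o α) (x : α) :
    ∑ j ∈ Iic x, indicatorRow (univ.map k.toEmbedding) j = #{i | k i ≤ x} := by
  have hinter : {j ∈ Iic x | j ∈ univ.map k.toEmbedding} =
      ({i | k i ≤ x} : Finset (Fin m)).map k.toEmbedding := by
    ext y
    simp only [mem_filter, mem_Iic, mem_map, mem_univ, true_and, RelEmbedding.coe_toEmbedding]
    grind
  simp only [indicatorRow, sum_boole]
  rw [hinter, card_map]

variable [Fintype α]

/-- The sets `S'` such that `1_S - 1_S'` is a possible row of an alternating sign matrix. -/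
noncomputable def interlacingSets (S : Finset α) : Finset (Finset α) :=
  {S' | IsAlternating (indicatorRow S - indicatorRow S') ∧
    ∑ j, (indicatorRow S - indicatorRow S') j = 1}

theorem card_of_mem_interlacingSets {S S' : Finset α} (h : S' ∈ interlacingSets S) :
    #S = #S' + 1 := by
  have hsum := (mem_filter.1 h).2.2
  simp only [Pi.sub_apply, sum_sub_distrib, sum_indicatorRow] at hsum
  omega

theorem map_mem_interlacingSets_iff {m : ℕ} {k : Fin (m + 1) ↪o α} {l : Fin m ↪o α} :
    univ.map l.toEmbedding ∈ interlacingSets (univ.map k.toEmbedding) ↔ Interlaces k l := by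
  simp only [interlacingSets, mem_filter, mem_univ, true_and, IsAlternating, Pi.sub_apply,
    sum_sub_distrib, sum_indicatorRow, sum_Iic_indicatorRow_map, card_map, card_fin,
    interlaces_iff_forall_card]
  refine (and_iff_left (by push_cast; ring)).trans (forall_congr' fun x => ?_)
  omega

theorem sum_interlacingSets {M : Type*} [AddCommMonoid M] {m : ℕ} (k : Fin (m + 1) ↪o α)
    (f : Finset α → M) :
    ∑ S' ∈ interlacingSets (univ.map k.toEmbedding), f S' =
      ∑ l ∈ univ.filter fun l : Fin m ↪o α => Interlaces k l, f (univ.map l.toEmbedding) := by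
  symm
  refine sum_nbij (fun l => univ.map l.toEmbedding) (fun l hl => ?_) (fun l _ l' _ heq => ?_)
    (fun S' hS' => ?_) fun _ _ => rfl
  · exact map_mem_interlacingSets_iff.2 (mem_filter.1 hl).2
  · refine DFunLike.coe_injective ((l.strictMono.range_inj l'.strictMono).1 ?_)
    simpa using congrArg (fun s : Finset α => (s : Set α)) heq
  · have hcard : #S' = m := by
      have := card_of_mem_interlacingSets hS'
      rwa [card_map, card_fin, Nat.add_right_cancel_iff, eq_comm] at this
    have hmap := S'.map_orderEmbOfFin_univ hcard
    refine ⟨S'.orderEmbOfFin hcard, ?_, hmap⟩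
    rw [← hmap, mem_coe, map_mem_interlacingSets_iff] at hS'
    simpa using hS'

end Alternating

theorem sum_interlacingSets_mul_det {N m : ℕ} (k : Fin (m + 1) ↪o Fin N) {f : Finset (Fin N) → ℤ}
    (hf : ∀ l : Fin m ↪o Fin N,
      f (univ.map l.toEmbedding) = (delannoyMatrix fun i => l i).det) :
    ∑ S' ∈ interlacingSets (univ.map k.toEmbedding), 2 ^ #(S' \ univ.map k.toEmbedding) * f S' =
      (delannoyMatrix fun i => k i).det := by
  have hpi : Fintype.piFinset (fun i : Fin m => Icc (k i.castSucc) (k i.succ)) =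
      ({l | Interlaces k l} : Finset (Fin m → Fin N)) := by
    ext l
    simp only [Fintype.mem_piFinset, mem_Icc, mem_filter, mem_univ, true_and]
    rfl
  rw [← sum_prod_trapezoidWeight_mul_det k.strictMono, hpi, sum_interlacingSets,
    sum_interlaces_eq_sum_orderEmbedding]
  · refine sum_congr rfl fun l hl => ?_
    rw [hf, (mem_filter.1 hl).2.prod_trapezoidWeight]
  · intro l hl
    rw [det_delannoyMatrix_eq_zero, mul_zero]
    exact fun h => hl (Function.Injective.of_comp h)

section PartialASM

variable {α : Type*} [LinearOrder α] [LocallyFiniteOrderBot α] [Fintype α]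

/-- The matrices formed by the first `m` rows of an alternating sign matrix with columns `α`, when
these rows add up to the indicator vector of `S`. Confining the entries to `{-1, 0, 1}` makes these
matrices a `Finset`. -/
noncomputable def partialASMs (m : ℕ) (S : Finset α) : Finset (Fin m → α → ℤ) :=
  {A ∈ Fintype.piFinset fun _ => Fintype.piFinset fun _ => {-1, 0, 1} |
    (∀ i, IsAlternating (A i) ∧ ∑ j, A i j = 1) ∧
      ∀ j, IsAlternating (fun i => A i j) ∧ ∑ i, A i j = indicatorRow S j}

theorem snoc_mem_partialASMs_iff {m : ℕ} {S S' : Finset α} {A : Fin m → α → ℤ} :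
    (Fin.snoc A (indicatorRow S - indicatorRow S') : Fin (m + 1) → α → ℤ) ∈
        partialASMs (m + 1) S ↔
      S' ∈ interlacingSets S ∧ A ∈ partialASMs m S' := by
  have hentry (j : α) : indicatorRow S j - indicatorRow S' j = -1 ∨
      indicatorRow S j - indicatorRow S' j = 0 ∨ indicatorRow S j - indicatorRow S' j = 1 := by
    have hS := indicatorRow_eq_zero_or_one S j
    have hS' := indicatorRow_eq_zero_or_one S' j
    omega
  have hcol (j : α) : (∑ i, A i j + (indicatorRow S j - indicatorRow S' j) = 0 ∨
        ∑ i, A i j + (indicatorRow S j - indicatorRow S' j) = 1) ∧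
      ∑ i, A i j + (indicatorRow S j - indicatorRow S' j) = indicatorRow S j ↔
        ∑ i, A i j = indicatorRow S' j := by
    have hS := indicatorRow_eq_zero_or_one S j
    omega
  simp only [partialASMs, interlacingSets, mem_filter, mem_univ, true_and, Fintype.mem_piFinset,
    mem_insert, mem_singleton, Fin.forall_fin_succ', isAlternating_fin_succ_iff,
    Fin.sum_univ_castSucc, Fin.snoc_castSucc, Fin.snoc_last, Pi.sub_apply, and_assoc, hentry, hcol]
  tauto

theorem exists_last_eq_of_mem_partialASMs {m : ℕ} {S : Finset α} {A : Fin (m + 1) → α → ℤ}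
    (hA : A ∈ partialASMs (m + 1) S) :
    ∃ S', A (Fin.last m) = indicatorRow S - indicatorRow S' := by
  refine ⟨({j | ∑ i : Fin m, A i.castSucc j = 1} : Finset α), funext fun j => ?_⟩
  obtain ⟨halt, hsum⟩ := (mem_filter.1 hA).2.2 j
  have hinit := (isAlternating_fin_succ_iff.1 halt).1.sum_eq_zero_or_one
  rw [Fin.sum_univ_castSucc] at hsum
  rw [Pi.sub_apply, ← hsum]
  simp only [indicatorRow, mem_filter, mem_univ, true_and]
  split_ifs <;> omega

theorem sum_partialASMs_succ (m : ℕ) (S : Finset α) :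
    ∑ A ∈ partialASMs (m + 1) S, (2 : ℤ) ^ negEntryCount A =
      ∑ S' ∈ interlacingSets S,
        2 ^ #(S' \ S) * ∑ A ∈ partialASMs m S', (2 : ℤ) ^ negEntryCount A := by
  simp only [mul_sum]
  rw [sum_sigma']
  symm
  refine sum_nbij
    (fun p => (Fin.snoc p.2 (indicatorRow S - indicatorRow p.1) : Fin (m + 1) → α → ℤ))
    (fun p hp => ?_) (fun p _ q _ heq => ?_) (fun A hA => ?_) fun p _ => ?_
  · exact snoc_mem_partialASMs_iff.2 (mem_sigma.1 hp)
  · obtain ⟨hinit, hlast⟩ := Fin.snoc_injective2 heq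
    exact Sigma.ext (indicatorRow_injective (sub_right_injective hlast)) (heq_of_eq hinit)
  · obtain ⟨S', hS'⟩ := exists_last_eq_of_mem_partialASMs hA
    have hsnoc := Fin.snoc_init_self A
    rw [hS'] at hsnoc
    refine ⟨⟨S', Fin.init A⟩, mem_coe.2 (mem_sigma.2 ?_), hsnoc⟩
    rwa [← hsnoc, mem_coe, snoc_mem_partialASMs_iff] at hA
  · rw [negEntryCount_snoc, pow_add, mul_comm]

end PartialASM

theorem sum_partialASMs_map {N m : ℕ} (k : Fin m ↪o Fin N) :
    ∑ A ∈ partialASMs m (univ.map k.toEmbedding), (2 : ℤ) ^ negEntryCount A =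
      (delannoyMatrix fun i => k i).det := by
  induction m with
  | zero => simp [partialASMs, negEntryCount, indicatorRow, IsAlternating]
  | succ m ih => rw [sum_partialASMs_succ, sum_interlacingSets_mul_det k ih]

theorem sum_partialASMs_univ (n : ℕ) :
    ∑ A ∈ partialASMs n (univ : Finset (Fin n)), (2 : ℤ) ^ negEntryCount A = 2 ^ n.choose 2 := by
  have h := sum_partialASMs_map (RelEmbedding.refl (· ≤ ·) : Fin n ↪o Fin n)
  rw [← det_delannoyMatrix_val]
  simpa using h

theorem isASM_iff_mem_partialASMs {n : ℕ} {A : Fin n → Fin n → ℤ} :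
    IsASM n A ↔ A ∈ partialASMs n univ := by
  simp only [IsASM, partialASMs, mem_filter, Fintype.mem_piFinset, mem_insert, mem_singleton,
    IsAlternating, indicatorRow, mem_univ, if_true, forall_and]
  tauto

end AlternatingSign

open AlternatingSign

/-- The 2-enumeration of alternating sign matrices:
`2^(binomial(n,2)) = Σ_A 2^(N(A))`, the sum being over all `n × n` ASMs `A`. -/
theorem stmt16 (n : ℕ) (hn : 1 ≤ n) :
    2 ^ (n.choose 2) =
      ∑ᶠ A ∈ {A : Fin n → Fin n → ℤ | IsASM n A}, 2 ^ (negCount n A) := by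
  have hset : {A | IsASM n A} = ↑(partialASMs n (Finset.univ : Finset (Fin n))) :=
    Set.ext fun _ => isASM_iff_mem_partialASMs
  rw [hset, finsum_mem_coe_finset]
  exact_mod_cast (sum_partialASMs_univ n).symm
end

section
/- For every integer n ≥ 1, the number of order ideals of the full tetrahedral poset T_n (with all six colors of edges) satisfies |J(T_n)| · ∏_{1 ≤ i ≤ j ≤ k ≤ n−1} (i+j+k−2) = ∏_{1 ≤ i ≤ j ≤ k ≤ n−1} (i+j+k−1); equivalently, |J(T_n)| equals the number of totally symmetric plane partitions inside an (n−1)×(n−1)×(n−1) box, which is ∏_{1 ≤ i ≤ j ≤ k ≤ n−1} (i+j+k−1)/(i+j+k−2). -/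
open scoped Classical

noncomputable section

/-- `V3 n` is the set `{(a,b,c) ∈ ℤ≥0³ : a + b + c ≤ n - 2}`. -/
def V3 (n : ℕ) : Finset (ℤ × ℤ × ℤ) :=
  ((Finset.Icc (0:ℤ) (n:ℤ) ×ˢ Finset.Icc (0:ℤ) (n:ℤ) ×ˢ Finset.Icc (0:ℤ) (n:ℤ)).filter
    (fun p => p.1 + p.2.1 + p.2.2 ≤ (n:ℤ) - 2))

/-- The six edge vectors. -/
def vr : ℤ × ℤ × ℤ := (1,0,0)
def vg : ℤ × ℤ × ℤ := (0,1,0)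
def vy : ℤ × ℤ × ℤ := (0,0,1)
def vb : ℤ × ℤ × ℤ := (-1,1,0)
def vo : ℤ × ℤ × ℤ := (-1,0,1)
def vs : ℤ × ℤ × ℤ := (0,1,-1)

/-- One step: add a vector of `S`, staying inside `W`. -/
def step3 (S : Set (ℤ × ℤ × ℤ)) (W : Finset (ℤ × ℤ × ℤ)) (u v : ℤ × ℤ × ℤ) : Prop :=
  u ∈ W ∧ v ∈ W ∧ ∃ e ∈ S, v = u + e

/-- The order relation of `T_n(S)`: reflexive-transitive closure of `step3`,
restricted to `W`. -/
def le3 (S : Set (ℤ × ℤ × ℤ)) (W : Finset (ℤ × ℤ × ℤ)) (u v : ℤ × ℤ × ℤ) : Prop :=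
  u ∈ W ∧ v ∈ W ∧ Relation.ReflTransGen (step3 S W) u v

/-- An order ideal: a downward closed subset of `W`. -/
def IsIdeal3 (S : Set (ℤ × ℤ × ℤ)) (W : Finset (ℤ × ℤ × ℤ))
    (I : Finset (ℤ × ℤ × ℤ)) : Prop :=
  I ⊆ W ∧ ∀ u v : ℤ × ℤ × ℤ, le3 S W u v → v ∈ I → u ∈ I

/-- The set of all order ideals of `T_n(S)`. -/
def ideals3 (S : Set (ℤ × ℤ × ℤ)) (W : Finset (ℤ × ℤ × ℤ)) :
    Finset (Finset (ℤ × ℤ × ℤ)) :=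
  W.powerset.filter (fun I => IsIdeal3 S W I)

/-- The rank generating function `F(J(T_n(S)),q) = Σ_{I} q^{|I|}`. -/
def genF3 (S : Set (ℤ × ℤ × ℤ)) (W : Finset (ℤ × ℤ × ℤ)) : Polynomial ℤ :=
  ∑ I ∈ ideals3 S W, Polynomial.X ^ I.card

/-- A plane partition in the box `{1,…,m}³`: a subset of the box that is downward
closed in each coordinate (within positive coordinates). -/
def IsPP (m : ℕ) (π : Set (ℕ × ℕ × ℕ)) : Prop :=
  (∀ p ∈ π, (1 ≤ p.1 ∧ p.1 ≤ m) ∧ (1 ≤ p.2.1 ∧ p.2.1 ≤ m) ∧ (1 ≤ p.2.2 ∧ p.2.2 ≤ m)) ∧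
  (∀ i j k i' j' k', (i, j, k) ∈ π → 1 ≤ i' → i' ≤ i → 1 ≤ j' → j' ≤ j →
    1 ≤ k' → k' ≤ k → (i', j', k') ∈ π)

/-- Totally symmetric: closed under all permutations of the three coordinates. -/
def IsTS (π : Set (ℕ × ℕ × ℕ)) : Prop :=
  ∀ i j k, (i, j, k) ∈ π →
    (i, k, j) ∈ π ∧ (j, i, k) ∈ π ∧ (j, k, i) ∈ π ∧ (k, i, j) ∈ π ∧ (k, j, i) ∈ π

/-- Self-complementary in the `2n`-box:
`(i,j,k) ∈ π ↔ (2n+1-i, 2n+1-j, 2n+1-k) ∉ π`. -/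
def IsSC (n : ℕ) (π : Set (ℕ × ℕ × ℕ)) : Prop :=
  ∀ i j k, 1 ≤ i → i ≤ 2 * n → 1 ≤ j → j ≤ 2 * n → 1 ≤ k → k ≤ 2 * n →
    ((i, j, k) ∈ π ↔ (2 * n + 1 - i, 2 * n + 1 - j, 2 * n + 1 - k) ∉ π)

/-- A totally symmetric self-complementary plane partition in a `2n×2n×2n` box. -/
def IsTSSCPP (n : ℕ) (π : Set (ℕ × ℕ × ℕ)) : Prop :=
  IsPP (2 * n) π ∧ IsTS π ∧ IsSC n π

/-- A totally symmetric plane partition in an `m×m×m` box. -/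
def IsTSPP (m : ℕ) (π : Set (ℕ × ℕ × ℕ)) : Prop :=
  IsPP m π ∧ IsTS π

/-- The index set `{(i,j,k) : 1 ≤ i ≤ j ≤ k ≤ m}`. -/
def tripleIdx (m : ℕ) : Finset (ℕ × ℕ × ℕ) :=
  ((Finset.Icc 1 m ×ˢ Finset.Icc 1 m ×ˢ Finset.Icc 1 m).filter
    (fun t => t.1 ≤ t.2.1 ∧ t.2.1 ≤ t.2.2))

end

/-!
Cut an order ideal into its layers `C = d`, each a row of column heights in the direction `A`, and
record the row `K_0, K_1, …` as the product of the `e_{K_c - 1}` over `K_c ≠ 0` in the exterior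
algebra of `R^m`, where `m = n - 1`. Passing from one layer to the next then amounts to applying the
summation operator `e_t ↦ ∑_{t' > t} e_{t'}` and multiplying by `1 + λ_0`, so the sum over all
ideals is `(1 + λ_{m-1}) ⋯ (1 + λ_0)` with `λ_p = ∑_t C(t, p) e_t`. Multiplying by
`(1 + e_0) (1 - e_1) (1 + e_2) ⋯` completes each monomial to a top form, and the number of ideals is
the coefficient of that form.

A family of polynomials with `deg q_j ≤ j` and `q_j(-1 - x) = (-1)^j q_j(x)` provides a linear
substitution under which `λ_p` and `(-1)^p e_p` become the sum and the difference of the same two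
vectors. The product therefore collapses, from the middle outwards, to a product of central
quadratic factors, and its top coefficient is a determinant of values `⟨q_{2a}, q_{2b+1}⟩` of a
bilinear form. On powers of `x (1 + x)` and corrected products of such powers with `2x + 1` these
values have a closed form, and for explicit hypergeometric combinations of the powers the matrix is
triangular, as creative telescoping shows. Its diagonal entries have the ratios of the product
formula.
-/

namespace TetrahedralPoset

open ExteriorAlgebra Finset

open Polynomial (X C)

open scoped Polynomial

section TopForm

variable (R : Type*) [CommRing R]

/-- The coefficient of `e_{m-1} ∧ ⋯ ∧ e_0` on the exterior algebra of `R^m`. -/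
noncomputable def topForm (m : ℕ) : ExteriorAlgebra R (Fin m → R) →ₗ[R] R :=
  liftAlternating fun i =>
    if h : i = m then
      (Pi.basisFun R (Fin m)).det.domDomCongr (Fin.revPerm.trans (finCongr h.symm)) else 0

variable {R}

theorem topForm_ιMulti_of_ne {m i : ℕ} (h : i ≠ m) (v : Fin i → Fin m → R) :
    topForm R m (ιMulti R i v) = 0 := by
  simp [topForm, liftAlternating_apply_ιMulti, h]

theorem topForm_ιMulti {m : ℕ} (v : Fin m → Fin m → R) :
    topForm R m (ιMulti R m v) = (Pi.basisFun R (Fin m)).det fun i => v i.rev := by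
  simp only [topForm, liftAlternating_apply_ιMulti, dite_true]
  rfl

theorem topForm_map {m : ℕ} (f : (Fin m → R) →ₗ[R] (Fin m → R))
    (z : ExteriorAlgebra R (Fin m → R)) :
    topForm R m (map f z) = LinearMap.det f * topForm R m z := by
  suffices h : topForm R m ∘ₗ (map f).toLinearMap = LinearMap.det f • topForm R m from
    LinearMap.congr_fun h z
  apply lhom_ext
  intro i
  ext v
  simp only [LinearMap.compAlternatingMap_apply, LinearMap.comp_apply, AlgHom.toLinearMap_apply,
    map_apply_ιMulti, LinearMap.smul_apply, smul_eq_mul]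
  obtain rfl | h := eq_or_ne i m
  · rw [topForm_ιMulti, topForm_ιMulti, ← Module.Basis.det_comp]
    rfl
  · rw [topForm_ιMulti_of_ne h, topForm_ιMulti_of_ne h, mul_zero]

theorem topForm_of_mem_pow {m i : ℕ} (h : i ≠ m) {z : ExteriorAlgebra R (Fin m → R)}
    (hz : z ∈ LinearMap.range (ι R : (Fin m → R) →ₗ[R] _) ^ i) : topForm R m z = 0 := by
  have hle : Submodule.span R (Set.range (ιMulti R i : (Fin i → Fin m → R) → _)) ≤
      LinearMap.ker (topForm R m) :=
    Submodule.span_le.2 (Set.range_subset_iff.2 (topForm_ιMulti_of_ne h))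
  exact hle ((ιMulti_span_fixedDegree R i).ge hz)

theorem ι_mul_ι_swap {M : Type*} [AddCommGroup M] [Module R M] (x y : M) :
    ι R x * ι R y = -(ι R y * ι R x) :=
  eq_neg_of_add_eq_zero_left (ι_add_mul_swap x y)

end TopForm

section Monomials

variable (R : Type*) [CommRing R]

/-- The basis vector `e_t` of `R^m`, indexed from `0`; it is `0` when `m ≤ t`. -/
def stdVec (m t : ℕ) : Fin m → R := fun i => if (i : ℕ) = t then 1 else 0

/-- The generator `e_t` of the exterior algebra of `R^m`. -/
noncomputable def extGen (m t : ℕ) : ExteriorAlgebra R (Fin m → R) := ι R (stdVec R m t)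

/-- The decreasing monomial `e_{r-1} ∧ ⋯ ∧ e_0`. -/
noncomputable def descProd (m r : ℕ) : ExteriorAlgebra R (Fin m → R) :=
  ((List.range r).reverse.map (extGen R m)).prod

/-- The signed increasing product `(1 + (-1)^r e_r) ⋯ (1 + (-1)^{r+k-1} e_{r+k-1})`. Multiplying by
it completes every decreasing monomial to a volume form, and the signs make its coefficient `1`. -/
noncomputable def ascProd (m r k : ℕ) : ExteriorAlgebra R (Fin m → R) :=
  ((List.range' r k).map fun t => 1 + (-1 : R) ^ t • extGen R m t).prod

/-- The coordinate projection of `R^m` killing `e_r`. -/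
noncomputable def killCoord (m r : ℕ) : (Fin m → R) →ₗ[R] (Fin m → R) :=
  Matrix.toLin' (Matrix.diagonal fun i => if (i : ℕ) = r then 0 else 1)

/-- The multivectors not involving `e_r`, as the fixed points of the projection killing `e_r`. -/
noncomputable def withoutCoord (m r : ℕ) : Subalgebra R (ExteriorAlgebra R (Fin m → R)) :=
  AlgHom.equalizer (map (killCoord R m r)) (AlgHom.id R _)

variable {R}

theorem stdVec_coe {m : ℕ} (i : Fin m) : stdVec R m i = Pi.basisFun R (Fin m) i := by
  ext j
  simp [stdVec, Pi.single_apply, Fin.ext_iff]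

theorem descProd_zero (m : ℕ) : descProd R m 0 = 1 := by
  simp [descProd]

theorem descProd_succ (m r : ℕ) : descProd R m (r + 1) = extGen R m r * descProd R m r := by
  simp [descProd, List.range_succ]

theorem ascProd_succ (m r k : ℕ) : ascProd R m r (k + 1) =
    (1 + (-1 : R) ^ r • extGen R m r) * ascProd R m (r + 1) k := by
  simp [ascProd, List.range'_succ]

theorem topForm_descProd (m : ℕ) : topForm R m (descProd R m m) = 1 := by
  have hlist : (List.range m).reverse.map (extGen R m) =
      List.ofFn fun i : Fin m => ι R (stdVec R m i.rev) := by
    refine List.ext_getElem (by simp) fun i h _ => ?_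
    simp only [List.length_map, List.length_reverse, List.length_range] at h
    simp [extGen, Nat.sub_sub, Nat.add_comm]
  rw [descProd, hlist, ← ιMulti_apply, topForm_ιMulti]
  simp only [Fin.rev_rev, stdVec_coe]
  exact Module.Basis.det_self _

theorem descProd_mul_ι (m r : ℕ) (x : Fin m → R) :
    descProd R m r * ι R x = (-1 : R) ^ r • (ι R x * descProd R m r) := by
  induction r with
  | zero => simp [descProd_zero]
  | succ r ih =>
    rw [descProd_succ, mul_assoc, ih, mul_smul_comm, ← mul_assoc, extGen, ι_mul_ι_swap, pow_succ,
      mul_smul, neg_mul, smul_neg, neg_smul, one_smul, smul_neg, mul_assoc]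

theorem descProd_mul_signed_extGen (m r : ℕ) :
    descProd R m r * ((-1 : R) ^ r • extGen R m r) = descProd R m (r + 1) := by
  rw [descProd_succ, mul_smul_comm, extGen, descProd_mul_ι, smul_smul, ← mul_pow]
  simp

theorem descProd_succ_mul_extGen (m r : ℕ) : descProd R m (r + 1) * extGen R m r = 0 := by
  rw [extGen, descProd_mul_ι, descProd_succ, extGen, ← mul_assoc, ι_sq_zero, zero_mul, smul_zero]

theorem det_killCoord {m r : ℕ} (h : r < m) : LinearMap.det (killCoord R m r) = 0 := by
  rw [killCoord, LinearMap.det_toLin', Matrix.det_diagonal]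
  exact prod_eq_zero (mem_univ ⟨r, h⟩) (if_pos rfl)

theorem topForm_eq_zero_of_mem_withoutCoord {m r : ℕ} (hr : r < m)
    {z : ExteriorAlgebra R (Fin m → R)} (hz : z ∈ withoutCoord R m r) : topForm R m z = 0 := by
  have hfix : map (killCoord R m r) z = z := hz
  rw [← hfix, topForm_map, det_killCoord hr, zero_mul]

theorem extGen_mem_withoutCoord {m r t : ℕ} (h : t ≠ r) : extGen R m t ∈ withoutCoord R m r := by
  have hfix : killCoord R m r (stdVec R m t) = stdVec R m t := by
    ext i
    simp only [killCoord, Matrix.toLin'_apply, Matrix.mulVec_diagonal, stdVec]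
    grind
  change map _ (extGen R m t) = extGen R m t
  rw [extGen, map_apply_ι, hfix]

theorem prod_map_extGen_mem_withoutCoord {m r : ℕ} {l : List ℕ} (h : r ∉ l) :
    (l.map (extGen R m)).prod ∈ withoutCoord R m r := by
  refine list_prod_mem fun x hx => ?_
  obtain ⟨t, ht, rfl⟩ := List.mem_map.1 hx
  exact extGen_mem_withoutCoord (ne_of_mem_of_not_mem ht h)

theorem ascProd_mem_withoutCoord {m r s k : ℕ} (h : r < s) :
    ascProd R m s k ∈ withoutCoord R m r := by
  refine list_prod_mem fun x hx => ?_
  obtain ⟨t, ht, rfl⟩ := List.mem_map.1 hx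
  have htr : t ≠ r := by grind
  exact add_mem (one_mem _) (Subalgebra.smul_mem _ (extGen_mem_withoutCoord htr) _)

-- Scanning `r` upwards, `e_r` is taken from the list if it occurs there, else from `ascProd`.
theorem topForm_prod_mul_descProd_mul_ascProd {m k r : ℕ} (hr : r + k = m) {l : List ℕ}
    (hl : l.Pairwise (· > ·)) (hlr : ∀ t ∈ l, r ≤ t) (hlm : ∀ t ∈ l, t < m) :
    topForm R m ((l.map (extGen R m)).prod * (descProd R m r * ascProd R m r k)) = 1 := by
  induction k generalizing r l with
  | zero =>
    have : l = [] := List.eq_nil_iff_forall_not_mem.2 fun t ht => by grind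
    subst this
    obtain rfl : r = m := hr
    simpa [ascProd] using topForm_descProd r
  | succ k ih =>
    rw [ascProd_succ]
    by_cases hmem : r ∈ l
    · obtain ⟨l', rfl⟩ : ∃ l', l = l' ++ [r] := by
        obtain ⟨s, t, rfl⟩ := List.append_of_mem hmem
        have hlt : ∀ x ∈ t, x < r := (List.pairwise_cons.1 (List.pairwise_append.1 hl).2.1).1
        obtain rfl : t = [] := List.eq_nil_iff_forall_not_mem.2 fun x hx =>
          (hlt x hx).not_ge (hlr x (by simp [hx]))
        exact ⟨s, rfl⟩
      rw [← ih (r := r + 1) (by omega) (List.pairwise_append.1 hl).1 (by grind) (by grind)]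
      congr 1
      simp only [List.map_append, List.prod_append, List.map_singleton, List.prod_singleton]
      rw [mul_assoc, ← mul_assoc (extGen R m r), ← descProd_succ, ← mul_assoc (descProd R m _),
        mul_add, mul_one, mul_smul_comm, descProd_succ_mul_extGen, smul_zero, add_zero]
    · have hvanish : topForm R m
          ((l.map (extGen R m)).prod * (descProd R m r * ascProd R m (r + 1) k)) = 0 :=
        topForm_eq_zero_of_mem_withoutCoord (by omega : r < m) <|
          mul_mem (prod_map_extGen_mem_withoutCoord hmem) <|
            mul_mem (prod_map_extGen_mem_withoutCoord (by simp))
              (ascProd_mem_withoutCoord (by omega))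
      rw [← mul_assoc (descProd R m r), mul_add, mul_one, descProd_mul_signed_extGen, add_mul,
        mul_add, map_add, hvanish, zero_add]
      exact ih (by omega) hl (by grind) hlm

theorem topForm_prod_mul_ascProd {m : ℕ} {l : List ℕ} (hl : l.Pairwise (· > ·))
    (hlm : ∀ t ∈ l, t < m) : topForm R m ((l.map (extGen R m)).prod * ascProd R m 0 m) = 1 := by
  have h := topForm_prod_mul_descProd_mul_ascProd (R := R) (zero_add m) hl
    (fun t _ => t.zero_le) hlm
  rwa [descProd_zero, one_mul] at h

end Monomials

section Rows

variable (R : Type*) [CommRing R]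

/-- The factor of a row monomial contributed by the entry `K`: no column for `K = 0`, and `e_{K-1}`
for positive `K`. -/
noncomputable def entryFactor (m : ℕ) : ℕ → ExteriorAlgebra R (Fin m → R)
  | 0 => 1
  | t + 1 => extGen R m t

/-- The monomial of a row `K_0, K_1, …` of column heights. -/
noncomputable def rowProd (m : ℕ) {q : ℕ} (K : Fin q → ℕ) : ExteriorAlgebra R (Fin m → R) :=
  (List.ofFn fun c => entryFactor R m (K c)).prod

/-- The indicator vector of the coordinates at least `κ`. -/
def tailVec (m κ : ℕ) : Fin m → R := fun i => if κ ≤ (i : ℕ) then 1 else 0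

/-- The strict summation operator `e_t ↦ ∑_{t' > t} e_{t'}`. -/
def sumOp (m : ℕ) : (Fin m → R) →ₗ[R] (Fin m → R) where
  toFun w i := ∑ j : Fin (i : ℕ), w ⟨j, j.2.trans i.2⟩
  map_add' v w := by ext i; simp [sum_add_distrib]
  map_smul' a w := by ext i; simp [mul_sum]

/-- The vector `λ_p = ∑_t C(t, p) e_t`. -/
def binVec (m p : ℕ) : Fin m → R := fun i => ((i : ℕ).choose p : R)

/-- The entries allowed in a new row above the entry `c` of the preceding row, whose left neighbour
is `p`: columns that have started must grow strictly. -/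
def gap : ℕ → ℕ → Finset ℕ
  | 0, p => Icc 0 p
  | c + 1, p => Ioc (c + 1) p

/-- The rows that can follow the row `κ`, with all entries at most `p`. -/
def nextRows {q : ℕ} (p : ℕ) (κ : Fin q → ℕ) : Finset (Fin q → ℕ) :=
  Fintype.piFinset fun c => gap (κ c) ((Fin.cons p κ : Fin (q + 1) → ℕ) c.castSucc)

/-- The ordered product of the sums of `entryFactor` over the gaps of a row with left bound `p`. -/
noncomputable def gapProd (m : ℕ) : ℕ → List ℕ → ExteriorAlgebra R (Fin m → R)
  | _, [] => 1
  | p, c :: l => (∑ K ∈ gap c p, entryFactor R m K) * gapProd m c l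

/-- The product `(1 + λ_{d-1}) ⋯ (1 + λ_0)`. -/
noncomputable def binProd (m d : ℕ) : ExteriorAlgebra R (Fin m → R) :=
  ((List.range d).reverse.map fun p => 1 + ι R (binVec R m p)).prod

variable {R}

theorem tailVec_self (m : ℕ) : tailVec R m m = 0 := by
  ext i
  simp [tailVec]

theorem binVec_zero (m : ℕ) : binVec R m 0 = tailVec R m 0 := by
  ext i
  simp [binVec, tailVec]

theorem sumOp_binVec (m p : ℕ) : sumOp R m (binVec R m p) = binVec R m (p + 1) := by
  have hockey_stick : ∀ n : ℕ, ∑ j ∈ range n, j.choose p = n.choose (p + 1) := fun n => by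
    induction n with
    | zero => simp
    | succ n ih => rw [sum_range_succ, ih, Nat.choose_succ_succ', add_comm]
  ext i
  simp only [sumOp, binVec, LinearMap.coe_mk, AddHom.coe_mk]
  rw [Fin.sum_univ_eq_sum_range (fun j => ((j.choose p : ℕ) : R)), ← hockey_stick, Nat.cast_sum]

theorem sumOp_stdVec (m t : ℕ) : sumOp R m (stdVec R m t) = tailVec R m (t + 1) := by
  ext i
  simp only [sumOp, stdVec, tailVec, LinearMap.coe_mk, AddHom.coe_mk]
  rw [Fin.sum_univ_eq_sum_range (fun j => if j = t then (1 : R) else 0), sum_ite_eq']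
  simp

theorem map_sumOp_entryFactor_succ (m t : ℕ) :
    map (sumOp R m) (entryFactor R m (t + 1)) = ι R (tailVec R m (t + 1)) := by
  rw [entryFactor, extGen, map_apply_ι, sumOp_stdVec]

theorem tailVec_sub_tailVec {m κ p : ℕ} (h : κ ≤ p) :
    tailVec R m κ - tailVec R m p = ∑ t ∈ Ico κ p, stdVec R m t := by
  ext i
  simp only [Finset.sum_apply, Pi.sub_apply, tailVec, stdVec, sum_ite_eq, mem_Ico]
  grind

theorem sum_Ioc_entryFactor {m κ p : ℕ} (h : κ ≤ p) :
    ∑ K ∈ Ioc κ p, entryFactor R m K = ι R (tailVec R m κ - tailVec R m p) := by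
  calc ∑ K ∈ Ioc κ p, entryFactor R m K
      = ∑ K ∈ Ico (κ + 1) (p + 1), entryFactor R m K := by
        rw [Ico_add_one_add_one_eq_Ioc]
    _ = ∑ t ∈ Ico κ p, extGen R m t := (sum_Ico_add' (entryFactor R m) κ p 1).symm
    _ = ι R (tailVec R m κ - tailVec R m p) := by
        rw [tailVec_sub_tailVec h, map_sum]
        rfl

theorem sum_gap_zero (m p : ℕ) : ∑ K ∈ gap 0 p, entryFactor R m K =
    1 + ι R (tailVec R m 0 - tailVec R m p) := by
  rw [gap, Icc_eq_cons_Ioc p.zero_le, sum_cons, sum_Ioc_entryFactor p.zero_le, entryFactor]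

theorem sum_gap_succ {m c p : ℕ} (h : c + 1 ≤ p) : ∑ K ∈ gap (c + 1) p, entryFactor R m K =
    ι R (tailVec R m (c + 1) - tailVec R m p) :=
  sum_Ioc_entryFactor h

theorem gapProd_zero {m : ℕ} {l : List ℕ} (h : ∀ c ∈ l, c = 0) : gapProd R m 0 l = 1 := by
  induction l with
  | nil => rfl
  | cons c l ih =>
    obtain rfl : c = 0 := h c (by simp)
    rw [gapProd, ih fun c hc => h c (by simp [hc]), sum_gap_zero]
    simp

theorem prod_map_entryFactor_of_eq_zero {m : ℕ} {l : List ℕ} (h : ∀ c ∈ l, c = 0) :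
    (l.map (entryFactor R m)).prod = 1 := by
  refine List.prod_eq_one fun x hx => ?_
  obtain ⟨c, hc, rfl⟩ := List.mem_map.1 hx
  rw [h c hc, entryFactor]

-- The term `-ι (tailVec p)` of each gap sum is killed by the factor to its left.
theorem mul_gapProd {m p : ℕ} {l : List ℕ} (hl : (p :: l).Pairwise (· ≥ ·)) (h0 : 0 ∈ l)
    {x : ExteriorAlgebra R (Fin m → R)} (hx : x * ι R (tailVec R m p) = 0) :
    x * gapProd R m p l = x * (map (sumOp R m) (l.map (entryFactor R m)).prod *
      (1 + ι R (binVec R m 0))) := by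
  induction l generalizing p x with
  | nil => simp at h0
  | cons c l ih =>
    rw [List.pairwise_cons] at hl
    rw [List.map_cons, List.prod_cons, map_mul, gapProd]
    obtain _ | t := c
    · have hzero : ∀ c ∈ l, c = 0 := fun c hc =>
        Nat.le_zero.1 ((List.pairwise_cons.1 hl.2).1 c hc)
      rw [gapProd_zero hzero, prod_map_entryFactor_of_eq_zero hzero, sum_gap_zero, map_sub,
        binVec_zero, entryFactor]
      simp [mul_add, mul_sub, hx]
    · rw [sum_gap_succ (hl.1 _ (by simp)), map_sumOp_entryFactor_succ, map_sub, ← mul_assoc,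
        mul_sub, hx, sub_zero, ih hl.2 (by grind) (by rw [mul_assoc, ι_sq_zero, mul_zero])]
      simp only [mul_assoc]

theorem gapProd_eq {m : ℕ} {l : List ℕ} (hl : (m :: l).Pairwise (· ≥ ·)) (h0 : 0 ∈ l) :
    gapProd R m m l =
      map (sumOp R m) (l.map (entryFactor R m)).prod * (1 + ι R (binVec R m 0)) := by
  have htail : 1 * ι R (tailVec R m m) = 0 := by rw [tailVec_self, map_zero, mul_zero]
  simpa only [one_mul] using mul_gapProd hl h0 htail

theorem gapProd_ofFn (m : ℕ) {q : ℕ} (p : ℕ) (κ : Fin q → ℕ) :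
    gapProd R m p (List.ofFn κ) = (List.ofFn fun c => ∑ K ∈
      gap (κ c) ((Fin.cons p κ : Fin (q + 1) → ℕ) c.castSucc), entryFactor R m K).prod := by
  induction q generalizing p with
  | zero => simp [gapProd]
  | succ q ih =>
    rw [List.ofFn_succ, gapProd, ih, List.ofFn_succ, List.prod_cons]
    congr 3
    ext c
    congr 2
    rw [← Fin.succ_castSucc, Fin.cons_succ]
    exact congrFun (Fin.cons_self_tail κ) _

theorem sum_rowProd_nextRows (m : ℕ) {q : ℕ} (p : ℕ) (κ : Fin q → ℕ) :
    ∑ K ∈ nextRows p κ, rowProd R m K = gapProd R m p (List.ofFn κ) := by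
  rw [gapProd_ofFn]
  exact ((MultilinearMap.mkPiAlgebraFin R q (ExteriorAlgebra R (Fin m → R))).map_sum_finset
    (fun _ K => entryFactor R m K)
    fun c => gap (κ c) ((Fin.cons p κ : Fin (q + 1) → ℕ) c.castSucc)).symm

theorem sum_rowProd_nextRows_eq {m q : ℕ} {κ : Fin q → ℕ} (hκ : Antitone κ) (hm : ∀ c, κ c ≤ m)
    (h0 : ∃ c, κ c = 0) : ∑ K ∈ nextRows m κ, rowProd R m K =
      map (sumOp R m) (rowProd R m κ) * (1 + ι R (binVec R m 0)) := by
  have hsorted : (m :: List.ofFn κ).Pairwise (· ≥ ·) :=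
    List.pairwise_cons.2 ⟨List.forall_mem_ofFn_iff.2 hm, List.pairwise_ofFn.2 fun i j hij =>
      hκ hij.le⟩
  rw [sum_rowProd_nextRows, gapProd_eq hsorted (List.mem_ofFn.2 h0), List.map_ofFn]
  rfl

theorem binProd_zero (m : ℕ) : binProd R m 0 = 1 := by
  simp [binProd]

theorem binProd_succ (m d : ℕ) :
    binProd R m (d + 1) = (1 + ι R (binVec R m d)) * binProd R m d := by
  simp [binProd, List.range_succ]

theorem map_sumOp_binProd_mul (m d : ℕ) :
    map (sumOp R m) (binProd R m d) * (1 + ι R (binVec R m 0)) = binProd R m (d + 1) := by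
  induction d with
  | zero => simp [binProd_zero, binProd_succ]
  | succ d ih =>
    rw [binProd_succ m d, map_mul, mul_assoc, ih, map_add, map_one, map_apply_ι, sumOp_binVec,
      ← binProd_succ]

theorem prod_map_entryFactor (m : ℕ) (l : List ℕ) : (l.map (entryFactor R m)).prod =
    (((l.filter (· ≠ 0)).map (· - 1)).map (extGen R m)).prod := by
  induction l with
  | nil => simp
  | cons c l ih =>
    obtain _ | t := c
    · simpa [entryFactor] using ih
    · rw [List.map_cons, List.prod_cons, ih, List.filter_cons_of_pos (by simp)]
      simp [entryFactor]

theorem topForm_rowProd_mul_ascProd {m q : ℕ} {K : Fin q → ℕ}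
    (hK : (List.ofFn K).Pairwise fun x y => y = 0 ∨ y < x) (hm : ∀ c, K c ≤ m) :
    topForm R m (rowProd R m K * ascProd R m 0 m) = 1 := by
  have hrow : rowProd R m K = ((List.ofFn K).map (entryFactor R m)).prod := by
    rw [rowProd, List.map_ofFn]
    rfl
  rw [hrow, prod_map_entryFactor]
  apply topForm_prod_mul_ascProd
  · rw [List.pairwise_map, List.pairwise_filter]
    refine hK.imp fun {x y} h hx hy => ?_
    simp only [ne_eq, decide_eq_true_eq] at hx hy
    omega
  · intro t ht
    simp only [List.mem_map, List.mem_filter, List.mem_ofFn, ne_eq, decide_eq_true_eq] at ht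
    obtain ⟨_, ⟨⟨c, rfl⟩, hc⟩, rfl⟩ := ht
    have := hm c
    omega

end Rows

section Layers

/-- The layers `C ≥ d` of an order ideal, in the natural-number coordinates in which the silver,
orange and red covering relations are the three conditions below. The total size is bounded only
through the first and last coordinates, which suffices once `d = 0`. -/
structure IsPartialIdeal (m d : ℕ) (I : Finset (ℕ × ℕ × ℕ)) : Prop where
  bound : ∀ A B C, (A, B, C) ∈ I → A < m ∧ d ≤ C ∧ C < m
  red : ∀ A B C, (A + 1, B, C) ∈ I → (A, B, C) ∈ I
  orange : ∀ A B C, (A, B, C + 1) ∈ I → d ≤ C → (A + 1, B, C) ∈ I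
  silver : ∀ A B C, (A, B + 1, C) ∈ I → (A, B, C + 1) ∈ I

/-- The height of the column of `I` over `(B, C)`. -/
noncomputable def colHeight (I : Finset (ℕ × ℕ × ℕ)) (C B : ℕ) : ℕ := sInf {A | (A, B, C) ∉ I}

/-- The row of column heights of the layer `C = d`. -/
noncomputable def layerRow (m d : ℕ) (I : Finset (ℕ × ℕ × ℕ)) : Fin (m + 1) → ℕ :=
  fun c => colHeight I d c

/-- The layers `C ≥ d` of `I`. -/
def layersFrom (d : ℕ) (I : Finset (ℕ × ℕ × ℕ)) : Finset (ℕ × ℕ × ℕ) := {p ∈ I | d ≤ p.2.2}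

/-- The set `I` together with a layer `C = d` of column heights `K`. -/
def addLayer {q : ℕ} (d : ℕ) (I : Finset (ℕ × ℕ × ℕ)) (K : Fin q → ℕ) : Finset (ℕ × ℕ × ℕ) :=
  I ∪ univ.biUnion fun c : Fin q => (range (K c)).image fun A => (A, (c : ℕ), d)

/-- The partial ideals consisting of the layers `C ≥ d`. -/
noncomputable def partialIdeals (m d : ℕ) : Finset (Finset (ℕ × ℕ × ℕ)) :=
  (range m ×ˢ range m ×ˢ range m).powerset.filter (IsPartialIdeal m d)

theorem mem_layersFrom {d A B C : ℕ} {I : Finset (ℕ × ℕ × ℕ)} :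
    (A, B, C) ∈ layersFrom d I ↔ (A, B, C) ∈ I ∧ d ≤ C := by
  simp [layersFrom]

theorem mem_addLayer {q d A B C : ℕ} {I : Finset (ℕ × ℕ × ℕ)} {K : Fin q → ℕ} :
    (A, B, C) ∈ addLayer d I K ↔ (A, B, C) ∈ I ∨ C = d ∧ ∃ c : Fin q, (c : ℕ) = B ∧ A < K c := by
  simp only [addLayer, mem_union, mem_biUnion, mem_univ, true_and, mem_image, mem_range,
    Prod.mk.injEq]
  grind

theorem mem_nextRows {m p : ℕ} {κ K : Fin (m + 1) → ℕ} : K ∈ nextRows p κ ↔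
    K 0 ≤ p ∧ (∀ c : Fin m, K c.succ ≤ κ c.castSucc) ∧ ∀ c, κ c ≠ 0 → κ c < K c := by
  have hgap : ∀ c p K : ℕ, K ∈ gap c p ↔ K ≤ p ∧ (c ≠ 0 → c < K) := by
    rintro (_ | c) p K <;> simp [gap, and_comm]
  simp only [nextRows, Fintype.mem_piFinset, hgap, forall_and, ← and_assoc]
  rw [Fin.forall_fin_succ]
  simp

namespace IsPartialIdeal

variable {m d : ℕ} {I : Finset (ℕ × ℕ × ℕ)}

theorem red_iterate (hI : IsPartialIdeal m d I) {A B C : ℕ} (k : ℕ) (h : (A + k, B, C) ∈ I) :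
    (A, B, C) ∈ I := by
  induction k with
  | zero => exact h
  | succ k ih => exact ih (hI.red _ _ _ h)

theorem silver_iterate (hI : IsPartialIdeal m d I) {A B C : ℕ} (k : ℕ) (h : (A, B + k, C) ∈ I) :
    (A, B, C + k) ∈ I := by
  induction k generalizing B with
  | zero => exact h
  | succ k ih => exact hI.silver _ _ _ (ih (B := B + 1) (by rwa [add_assoc, add_comm 1]))

theorem orange_iterate (hI : IsPartialIdeal m d I) {A B C : ℕ} (hC : d ≤ C) (k : ℕ)
    (h : (A, B, C + k) ∈ I) : (A + k, B, C) ∈ I := by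
  induction k generalizing C with
  | zero => exact h
  | succ k ih =>
    exact hI.orange _ _ _ (ih (C := C + 1) (by omega) (by rwa [add_assoc, add_comm 1])) hC

theorem snd_add_lt (hI : IsPartialIdeal m d I) {A B C : ℕ} (h : (A, B, C) ∈ I) : B + C < m := by
  have := (hI.bound _ _ _ (hI.silver_iterate (B := 0) B (by rwa [zero_add]))).2.2
  omega

theorem mem_iff_lt_colHeight (hI : IsPartialIdeal m d I) {A B C : ℕ} :
    (A, B, C) ∈ I ↔ A < colHeight I C B := by
  refine ⟨fun h => ?_, fun h => by_contra fun hn => Nat.notMem_of_lt_sInf h hn⟩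
  by_contra! hle
  have hne : {A | (A, B, C) ∉ I}.Nonempty := ⟨m, fun hm => lt_irrefl m (hI.bound _ _ _ hm).1⟩
  refine Nat.sInf_mem hne (hI.red_iterate (A - colHeight I C B) ?_)
  rwa [← colHeight, Nat.add_sub_cancel' hle]

theorem colHeight_le (hI : IsPartialIdeal m d I) (C B : ℕ) : colHeight I C B ≤ m := by
  by_contra! hlt
  exact lt_irrefl m (hI.bound _ _ _ (hI.mem_iff_lt_colHeight.2 hlt)).1

theorem colHeight_eq_zero (hI : IsPartialIdeal m d I) {B C : ℕ} (h : m ≤ B + C) :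
    colHeight I C B = 0 := by
  by_contra hne
  exact h.not_gt (hI.snd_add_lt (hI.mem_iff_lt_colHeight.2 (Nat.pos_of_ne_zero hne)))

theorem colHeight_add_le (hI : IsPartialIdeal m d I) {B C k : ℕ} (hC : d ≤ C)
    (h : colHeight I C (B + k) ≠ 0) : colHeight I C (B + k) + k ≤ colHeight I C B := by
  have htop : (colHeight I C (B + k) - 1, B + k, C) ∈ I := hI.mem_iff_lt_colHeight.2 (by omega)
  have := hI.mem_iff_lt_colHeight.1 (hI.orange_iterate hC k (hI.silver_iterate k htop))
  omega

theorem pairwise_layerRow (hI : IsPartialIdeal m d I) :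
    (List.ofFn (layerRow m d I)).Pairwise fun x y => y = 0 ∨ y < x := by
  refine List.pairwise_ofFn.2 fun i j hij => or_iff_not_imp_left.2 fun h => ?_
  obtain ⟨k, hk⟩ := Nat.exists_eq_add_of_lt (Fin.lt_def.1 hij)
  have := hI.colHeight_add_le le_rfl (B := i) (k := k + 1) (by rwa [← add_assoc, ← hk])
  rw [← add_assoc (i : ℕ), ← hk] at this
  simp only [layerRow]
  omega

theorem antitone_layerRow (hI : IsPartialIdeal m d I) : Antitone (layerRow m d I) :=
  antitone_iff_forall_lt.2 fun _ _ hij => by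
    have := List.pairwise_ofFn.1 hI.pairwise_layerRow hij
    omega

theorem layersFrom_succ (hI : IsPartialIdeal m d I) :
    IsPartialIdeal m (d + 1) (layersFrom (d + 1) I) where
  bound A B C h := by
    have h := mem_layersFrom.1 h
    exact ⟨(hI.bound _ _ _ h.1).1, h.2, (hI.bound _ _ _ h.1).2.2⟩
  red A B C h := by
    rw [mem_layersFrom] at h ⊢
    exact ⟨hI.red _ _ _ h.1, h.2⟩
  orange A B C h hC := by
    rw [mem_layersFrom] at h ⊢
    exact ⟨hI.orange _ _ _ h.1 (by omega), hC⟩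
  silver A B C h := by
    rw [mem_layersFrom] at h ⊢
    exact ⟨hI.silver _ _ _ h.1, by omega⟩

theorem layerRow_mem_nextRows (hI : IsPartialIdeal m d I) :
    layerRow m d I ∈ nextRows m (layerRow m (d + 1) (layersFrom (d + 1) I)) := by
  have hrow : layerRow m (d + 1) (layersFrom (d + 1) I) = layerRow m (d + 1) I := by
    ext c
    simp [layerRow, colHeight, mem_layersFrom]
  rw [hrow, mem_nextRows]
  refine ⟨hI.colHeight_le _ _, fun c => le_of_forall_lt fun A hA => ?_, fun c hc => ?_⟩
  · exact hI.mem_iff_lt_colHeight.1 (hI.silver _ _ _ (hI.mem_iff_lt_colHeight.2 hA))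
  · have htop : (layerRow m (d + 1) I c - 1, (c : ℕ), d + 1) ∈ I :=
      hI.mem_iff_lt_colHeight.2 (Nat.sub_one_lt hc)
    have := hI.mem_iff_lt_colHeight.1 (hI.orange _ _ _ htop le_rfl)
    rwa [Nat.sub_add_cancel (Nat.pos_of_ne_zero hc)] at this

theorem addLayer_layersFrom (hI : IsPartialIdeal m d I) :
    addLayer d (layersFrom (d + 1) I) (layerRow m d I) = I := by
  ext ⟨A, B, C⟩
  rw [mem_addLayer, mem_layersFrom]
  constructor
  · rintro (h | ⟨rfl, c, rfl, h⟩)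
    · exact h.1
    · exact hI.mem_iff_lt_colHeight.2 h
  · intro h
    obtain hC | rfl := (hI.bound _ _ _ h).2.1.lt_or_eq
    · exact Or.inl ⟨h, hC⟩
    · have := hI.snd_add_lt h
      exact Or.inr ⟨rfl, ⟨B, by omega⟩, rfl, hI.mem_iff_lt_colHeight.1 h⟩

theorem isPartialIdeal_addLayer (hd : d < m) (hI : IsPartialIdeal m (d + 1) I) {K : Fin (m + 1) → ℕ}
    (hK : K ∈ nextRows m (layerRow m (d + 1) I)) : IsPartialIdeal m d (addLayer d I K) := by
  obtain ⟨hK0, hKsucc, hKlt⟩ := mem_nextRows.1 hK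
  have hKm : ∀ c, K c ≤ m :=
    Fin.cases hK0 fun c => (hKsucc c).trans (hI.colHeight_le _ _)
  refine ⟨fun A B C h => ?_, fun A B C h => ?_, fun A B C h hC => ?_, fun A B C h => ?_⟩ <;>
    rw [mem_addLayer] at *
  · obtain h | ⟨rfl, c, rfl, h⟩ := h
    · have := hI.bound _ _ _ h
      omega
    · exact ⟨h.trans_le (hKm c), le_rfl, hd⟩
  · obtain h | ⟨rfl, c, rfl, h⟩ := h
    · exact Or.inl (hI.red _ _ _ h)
    · exact Or.inr ⟨rfl, c, rfl, by omega⟩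
  · obtain h | ⟨rfl, -⟩ := h
    · obtain hC | rfl := hC.lt_or_eq
      · exact Or.inl (hI.orange _ _ _ h hC)
      · have hB := hI.snd_add_lt h
        have hA : A < layerRow m (d + 1) I ⟨B, by omega⟩ := hI.mem_iff_lt_colHeight.1 h
        have := hKlt ⟨B, by omega⟩ (by omega)
        exact Or.inr ⟨rfl, ⟨B, by omega⟩, rfl, by omega⟩
    · omega
  · obtain h | ⟨rfl, c, hc, h⟩ := h
    · exact Or.inl (hI.silver _ _ _ h)
    · obtain ⟨c, rfl⟩ := Fin.exists_succ_eq.2 (show c ≠ 0 by rintro rfl; simp at hc)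
      obtain rfl : (c : ℕ) = B := by simpa using hc
      exact Or.inl (hI.mem_iff_lt_colHeight.2 (h.trans_le (hKsucc c)))

theorem layersFrom_addLayer (hI : IsPartialIdeal m (d + 1) I) {q : ℕ} (K : Fin q → ℕ) :
    layersFrom (d + 1) (addLayer d I K) = I := by
  ext ⟨A, B, C⟩
  rw [mem_layersFrom, mem_addLayer]
  constructor
  · rintro ⟨h | h, hC⟩
    · exact h
    · omega
  · exact fun h => ⟨Or.inl h, (hI.bound _ _ _ h).2.1⟩

theorem layerRow_addLayer (hd : d < m) (hI : IsPartialIdeal m (d + 1) I) {K : Fin (m + 1) → ℕ}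
    (hK : K ∈ nextRows m (layerRow m (d + 1) I)) :
    layerRow m d (addLayer d I K) = K := by
  ext c
  refine eq_of_forall_lt_iff fun A => ?_
  rw [layerRow, ← (hI.isPartialIdeal_addLayer hd hK).mem_iff_lt_colHeight, mem_addLayer]
  constructor
  · rintro (h | ⟨-, c', hc', h⟩)
    · have := (hI.bound _ _ _ h).2.1
      omega
    · rwa [← Fin.ext hc']
  · exact fun h => Or.inr ⟨rfl, c, rfl, h⟩

end IsPartialIdeal

theorem mem_partialIdeals {m d : ℕ} {I : Finset (ℕ × ℕ × ℕ)} :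
    I ∈ partialIdeals m d ↔ IsPartialIdeal m d I := by
  refine ⟨fun h => (mem_filter.1 h).2, fun h => mem_filter.2 ⟨mem_powerset.2 ?_, h⟩⟩
  rintro ⟨A, B, C⟩ hp
  have hbound := h.bound _ _ _ hp
  have hsum := h.snd_add_lt hp
  simp only [mem_product, mem_range]
  omega

theorem partialIdeals_self (m : ℕ) : partialIdeals m m = {∅} := by
  ext I
  rw [mem_partialIdeals, mem_singleton]
  constructor
  · refine fun hI => eq_empty_of_forall_notMem fun ⟨A, B, C⟩ h => ?_
    have := hI.bound _ _ _ h
    omega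
  · rintro rfl
    constructor <;> simp

theorem sum_partialIdeals_succ {M : Type*} [AddCommMonoid M] {m d : ℕ} (hd : d < m)
    (f : (Fin (m + 1) → ℕ) → M) : ∑ I ∈ partialIdeals m d, f (layerRow m d I) =
      ∑ I ∈ partialIdeals m (d + 1), ∑ K ∈ nextRows m (layerRow m (d + 1) I), f K := by
  rw [sum_sigma']
  refine sum_nbij' (fun I => ⟨layersFrom (d + 1) I, layerRow m d I⟩) (fun p => addLayer d p.1 p.2)
    (fun I hI => ?_) (fun p hp => ?_) (fun I hI => ?_) (fun p hp => ?_) (fun _ _ => rfl)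
  · have hI := mem_partialIdeals.1 hI
    exact mem_sigma.2 ⟨mem_partialIdeals.2 hI.layersFrom_succ, hI.layerRow_mem_nextRows⟩
  · obtain ⟨hI, hK⟩ := mem_sigma.1 hp
    exact mem_partialIdeals.2 ((mem_partialIdeals.1 hI).isPartialIdeal_addLayer hd hK)
  · exact (mem_partialIdeals.1 hI).addLayer_layersFrom
  · obtain ⟨hI, hK⟩ := mem_sigma.1 hp
    have hI := mem_partialIdeals.1 hI
    exact Sigma.ext (hI.layersFrom_addLayer p.2) (heq_of_eq (hI.layerRow_addLayer hd hK))

theorem sum_rowProd_partialIdeals (R : Type*) [CommRing R] {m d k : ℕ} (h : d + k = m) :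
    ∑ I ∈ partialIdeals m d, rowProd R m (layerRow m d I) = binProd R m k := by
  induction k generalizing d with
  | zero =>
    obtain rfl : d = m := h
    have hrow : layerRow d d ∅ = 0 := by
      ext
      simp [layerRow, colHeight]
    simp [partialIdeals_self, hrow, rowProd, entryFactor, binProd_zero]
  | succ k ih =>
    rw [sum_partialIdeals_succ (by omega) (rowProd R m), ← map_sumOp_binProd_mul,
      ← ih (d := d + 1) (by omega), map_sum, sum_mul]
    refine sum_congr rfl fun I hI => ?_
    have hI := mem_partialIdeals.1 hI
    exact sum_rowProd_nextRows_eq hI.antitone_layerRow (fun c => hI.colHeight_le _ _)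
      ⟨Fin.last m, hI.colHeight_eq_zero (by simp)⟩

theorem card_partialIdeals_eq_topForm (R : Type*) [CommRing R] (m : ℕ) :
    ((partialIdeals m 0).card : R) = topForm R m (binProd R m m * ascProd R m 0 m) := by
  rw [← sum_rowProd_partialIdeals R (zero_add m), sum_mul, map_sum, sum_congr rfl fun I hI =>
    have hI := mem_partialIdeals.1 hI
    topForm_rowProd_mul_ascProd hI.pairwise_layerRow fun c => hI.colHeight_le _ _]
  simp

end Layers

section OrderIdeals

theorem mem_V3 {n : ℕ} {a b c : ℤ} :
    (a, b, c) ∈ V3 n ↔ 0 ≤ a ∧ 0 ≤ b ∧ 0 ≤ c ∧ a + b + c ≤ (n : ℤ) - 2 := by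
  simp only [V3, mem_filter, mem_product, mem_Icc]
  omega

theorem isIdeal3_iff {S : Set (ℤ × ℤ × ℤ)} {W I : Finset (ℤ × ℤ × ℤ)} :
    IsIdeal3 S W I ↔ I ⊆ W ∧ ∀ u ∈ W, ∀ e ∈ S, u + e ∈ I → u ∈ I := by
  constructor
  · rintro ⟨hIW, hlower⟩
    exact ⟨hIW, fun u hu e he hue => hlower u (u + e)
      ⟨hu, hIW hue, Relation.ReflTransGen.single ⟨hu, hIW hue, e, he, rfl⟩⟩ hue⟩
  · rintro ⟨hIW, hlower⟩
    refine ⟨hIW, ?_⟩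
    rintro u v ⟨-, -, h⟩ hv
    induction h using Relation.ReflTransGen.head_induction_on with
    | refl => exact hv
    | head hstep _ ih =>
      obtain ⟨hu, -, e, he, rfl⟩ := hstep
      exact hlower _ hu e he ih

/-- The embedding of natural-number triples into integer triples. -/
def natTriple : ℕ × ℕ × ℕ ↪ ℤ × ℤ × ℤ where
  toFun p := (p.1, p.2.1, p.2.2)
  inj' p q h := by
    simp only [Prod.mk.injEq, Nat.cast_inj] at h
    exact Prod.ext h.1 (Prod.ext h.2.1 h.2.2)

theorem natTriple_apply (A B C : ℕ) : natTriple (A, B, C) = (↑A, ↑B, ↑C) :=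
  rfl

theorem exists_natTriple_eq {n : ℕ} {v : ℤ × ℤ × ℤ} (hv : v ∈ V3 n) : ∃ p, natTriple p = v := by
  obtain ⟨a, b, c⟩ := v
  obtain ⟨ha, hb, hc, -⟩ := mem_V3.1 hv
  lift a to ℕ using ha
  lift b to ℕ using hb
  lift c to ℕ using hc
  exact ⟨(a, b, c), rfl⟩

theorem natTriple_mem_V3 {n A B C : ℕ} : natTriple (A, B, C) ∈ V3 n ↔ A + B + C + 2 ≤ n := by
  rw [natTriple_apply, mem_V3]
  omega

variable {n : ℕ} {J : Finset (ℕ × ℕ × ℕ)}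

theorem IsPartialIdeal.of_isIdeal3
    (hJ : IsIdeal3 {vr, vg, vy, vb, vo, vs} (V3 n) (J.map natTriple)) :
    IsPartialIdeal (n - 1) 0 J := by
  obtain ⟨hsub, hlower⟩ := isIdeal3_iff.1 hJ
  have hsum : ∀ {A B C}, (A, B, C) ∈ J → A + B + C + 2 ≤ n := fun h =>
    natTriple_mem_V3.1 (hsub (mem_map_of_mem _ h))
  have hmem : ∀ {p A B C e}, p ∈ J → A + B + C + 2 ≤ n →
      e ∈ ({vr, vg, vy, vb, vo, vs} : Set (ℤ × ℤ × ℤ)) →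
      natTriple (A, B, C) + e = natTriple p → (A, B, C) ∈ J := fun hp hle he heq =>
    (mem_map' natTriple).1 <|
      hlower _ (natTriple_mem_V3.2 hle) _ he (heq ▸ mem_map_of_mem _ hp)
  refine ⟨fun A B C h => ?_, fun A B C h => ?_, fun A B C h _ => ?_, fun A B C h => ?_⟩ <;>
    have := hsum h
  · omega
  · exact hmem h (by omega) (e := vr) (by simp) (by simp [natTriple_apply, vr])
  · exact hmem h (by omega) (e := vo) (by simp) (by simp [natTriple_apply, vo])
  · exact hmem h (by omega) (e := vs) (by simp) (by simp [natTriple_apply, vs])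

theorem IsPartialIdeal.sum_lt {m A B C : ℕ} (hJ : IsPartialIdeal m 0 J) (h : (A, B, C) ∈ J) :
    A + B + C < m := by
  have hsilver := hJ.silver_iterate (B := 0) B (by rwa [zero_add])
  have horange := hJ.orange_iterate (C := 0) le_rfl (C + B) (by rwa [zero_add])
  have := (hJ.bound _ _ _ horange).1
  omega

-- The green, yellow and blue steps are composites of red, orange and silver ones.
theorem IsPartialIdeal.isIdeal3 (hJ : IsPartialIdeal (n - 1) 0 J) :
    IsIdeal3 {vr, vg, vy, vb, vo, vs} (V3 n) (J.map natTriple) := by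
  have horange : ∀ {A B C}, (A, B, C + 1) ∈ J → (A + 1, B, C) ∈ J := fun h =>
    hJ.orange _ _ _ h (Nat.zero_le _)
  rw [isIdeal3_iff]
  constructor
  · intro v hv
    obtain ⟨⟨A, B, C⟩, h, rfl⟩ := mem_map.1 hv
    have := hJ.sum_lt h
    exact natTriple_mem_V3.2 (by omega)
  · intro u hu e he h
    obtain ⟨⟨a, b, c⟩, rfl⟩ := exists_natTriple_eq hu
    obtain ⟨⟨A, B, C⟩, hmem, heq⟩ := mem_map.1 h
    rw [mem_map']
    simp only [natTriple_apply] at heq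
    rcases he with rfl | rfl | rfl | rfl | rfl | rfl <;>
      simp only [vr, vg, vy, vb, vo, vs, Prod.mk_add_mk, Prod.mk.injEq] at heq <;>
      obtain ⟨hA, hB, hC⟩ := heq
    · obtain ⟨rfl, rfl, rfl⟩ : A = a + 1 ∧ B = b ∧ C = c := by omega
      exact hJ.red _ _ _ hmem
    · obtain ⟨rfl, rfl, rfl⟩ : A = a ∧ B = b + 1 ∧ C = c := by omega
      exact hJ.red _ _ _ (horange (hJ.silver _ _ _ hmem))
    · obtain ⟨rfl, rfl, rfl⟩ : A = a ∧ B = b ∧ C = c + 1 := by omega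
      exact hJ.red _ _ _ (horange hmem)
    · obtain ⟨rfl, rfl, rfl⟩ : a = A + 1 ∧ B = b + 1 ∧ C = c := by omega
      exact horange (hJ.silver _ _ _ hmem)
    · obtain ⟨rfl, rfl, rfl⟩ : a = A + 1 ∧ B = b ∧ C = c + 1 := by omega
      exact horange hmem
    · obtain ⟨rfl, rfl, rfl⟩ : A = a ∧ B = b + 1 ∧ c = C + 1 := by omega
      exact hJ.silver _ _ _ hmem

theorem exists_map_natTriple_eq {I : Finset (ℤ × ℤ × ℤ)} (hI : I ⊆ V3 n) :
    ∃ J : Finset (ℕ × ℕ × ℕ), J.map natTriple = I := by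
  refine ⟨I.preimage natTriple natTriple.injective.injOn, ?_⟩
  rw [map_eq_image, image_preimage, filter_eq_self]
  exact fun v hv => exists_natTriple_eq (hI hv)

theorem card_ideals3 (n : ℕ) :
    (ideals3 {vr, vg, vy, vb, vo, vs} (V3 n)).card = (partialIdeals (n - 1) 0).card := by
  refine (card_bij (fun J _ => J.map natTriple) (fun J hJ => ?_)
    (fun J _ J' _ h => map_injective _ h) fun I hI => ?_).symm
  · have hJ := (mem_partialIdeals.1 hJ).isIdeal3
    exact mem_filter.2 ⟨mem_powerset.2 hJ.1, hJ⟩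
  · have hI := (mem_filter.1 hI).2
    obtain ⟨J, rfl⟩ := exists_map_natTriple_eq hI.1
    exact ⟨J, mem_partialIdeals.2 (.of_isIdeal3 hI), rfl⟩

end OrderIdeals

section TotallySymmetric

/-- The triples `(A, B, C)` for which the triple `(A + B + C + 1, B + C + 1, B + 1)`, the generic
weakly decreasing triple of positive integers, belongs to `π`. -/
noncomputable def tsppIdeal (m : ℕ) (π : Set (ℕ × ℕ × ℕ)) : Finset (ℕ × ℕ × ℕ) :=
  {p ∈ range m ×ˢ range m ×ˢ range m |
    (p.1 + p.2.1 + p.2.2 + 1, p.2.1 + p.2.2 + 1, p.2.1 + 1) ∈ π}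

/-- The triples `p` that sort to `(A + B + C + 1, B + C + 1, B + 1)`; sorting is expressed through
the maximum, the minimum and the sum. -/
def SortsTo (p : ℕ × ℕ × ℕ) (A B C : ℕ) : Prop :=
  max p.1 (max p.2.1 p.2.2) = A + B + C + 1 ∧ min p.1 (min p.2.1 p.2.2) = B + 1 ∧
    p.1 + p.2.1 + p.2.2 = A + 3 * B + 2 * C + 3

/-- The symmetric set of triples whose sorted representatives are those encoded by `I`: the inverse
of `tsppIdeal`. -/
def symmetrize (I : Finset (ℕ × ℕ × ℕ)) : Set (ℕ × ℕ × ℕ) :=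
  {p | ∃ A B C, SortsTo p A B C ∧ (A, B, C) ∈ I}

theorem exists_sortsTo {i j k : ℕ} (hi : 1 ≤ i) (hj : 1 ≤ j) (hk : 1 ≤ k) :
    ∃ A B C, SortsTo (i, j, k) A B C := by
  let a := max i (max j k)
  let c := min i (min j k)
  let b := i + j + k - a - c
  refine ⟨a - b, c - 1, b - c, ?_, ?_, ?_⟩ <;> simp only [a, b, c] <;> omega

theorem sortsTo_self (A B C : ℕ) : SortsTo (A + B + C + 1, B + C + 1, B + 1) A B C := by
  refine ⟨?_, ?_, ?_⟩ <;> simp only <;> omega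

theorem mem_symmetrize_iff {I : Finset (ℕ × ℕ × ℕ)} {p : ℕ × ℕ × ℕ} {A B C : ℕ}
    (h : SortsTo p A B C) : p ∈ symmetrize I ↔ (A, B, C) ∈ I := by
  refine ⟨fun ⟨A', B', C', h', hI⟩ => ?_, fun hI => ⟨A, B, C, h, hI⟩⟩
  obtain ⟨hmax, hmin, hsum⟩ := h
  obtain ⟨hmax', hmin', hsum'⟩ := h'
  obtain ⟨rfl, rfl, rfl⟩ : A = A' ∧ B = B' ∧ C = C' := by omega
  exact hI

theorem mem_iff_of_sortsTo {π : Set (ℕ × ℕ × ℕ)} (hπ : IsTS π) {p : ℕ × ℕ × ℕ} {A B C : ℕ}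
    (h : SortsTo p A B C) : p ∈ π ↔ (A + B + C + 1, B + C + 1, B + 1) ∈ π := by
  obtain ⟨i, j, k⟩ := p
  obtain ⟨hmax, hmin, hsum⟩ := h
  dsimp only at hmax hmin hsum
  generalize ha : A + B + C + 1 = a at *
  generalize hb : B + C + 1 = b at *
  generalize hc : B + 1 = c at *
  replace hsum : i + j + k = a + b + c := by omega
  have hperm : i = a ∧ j = b ∧ k = c ∨ i = a ∧ j = c ∧ k = b ∨ i = b ∧ j = a ∧ k = c ∨
      i = b ∧ j = c ∧ k = a ∨ i = c ∧ j = a ∧ k = b ∨ i = c ∧ j = b ∧ k = a := by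
    rcases le_total i j with h₁ | h₁ <;> rcases le_total j k with h₂ | h₂ <;>
      rcases le_total i k with h₃ | h₃ <;>
      simp only [h₁, h₂, h₃, max_eq_left, max_eq_right, min_eq_left, min_eq_right] at hmax hmin <;>
      subst hmax hmin <;> omega
  rcases hperm with ⟨rfl, rfl, rfl⟩ | ⟨rfl, rfl, rfl⟩ | ⟨rfl, rfl, rfl⟩ | ⟨rfl, rfl, rfl⟩ |
    ⟨rfl, rfl, rfl⟩ | ⟨rfl, rfl, rfl⟩ <;>
  exact ⟨fun h => by have := hπ _ _ _ h; tauto, fun h => by have := hπ _ _ _ h; tauto⟩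

variable {m : ℕ} {π : Set (ℕ × ℕ × ℕ)} {I : Finset (ℕ × ℕ × ℕ)}

theorem mem_tsppIdeal (hπ : IsPP m π) {A B C : ℕ} :
    (A, B, C) ∈ tsppIdeal m π ↔ (A + B + C + 1, B + C + 1, B + 1) ∈ π := by
  simp only [tsppIdeal, mem_filter, mem_product, mem_range, and_iff_right_iff_imp]
  intro h
  have := hπ.1 _ h
  omega

theorem isPartialIdeal_tsppIdeal (hπ : IsPP m π) : IsPartialIdeal m 0 (tsppIdeal m π) := by
  refine ⟨fun A B C h => ?_, fun A B C h => ?_, fun A B C h _ => ?_, fun A B C h => ?_⟩ <;>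
    rw [mem_tsppIdeal hπ] at h
  · have := hπ.1 _ h
    omega
  all_goals
    rw [mem_tsppIdeal hπ]
    exact hπ.2 _ _ _ _ _ _ h (by omega) (by omega) (by omega) (by omega) (by omega) (by omega)

theorem IsPartialIdeal.mem_of_le (hI : IsPartialIdeal m 0 I) {A B C A' B' C' : ℕ}
    (h : (A, B, C) ∈ I) (hB : B' ≤ B) (hBC : B' + C' ≤ B + C) (hABC : A' + B' + C' ≤ A + B + C) :
    (A', B', C') ∈ I := by
  obtain ⟨k, rfl⟩ := Nat.exists_eq_add_of_le hB
  obtain ⟨l, hl⟩ := Nat.exists_eq_add_of_le (show C' ≤ C + k by omega)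
  obtain ⟨j, hj⟩ := Nat.exists_eq_add_of_le (show A' ≤ A + l by omega)
  have hsilver := hI.silver_iterate k h
  have horange := hI.orange_iterate (Nat.zero_le C') l (by rwa [← hl])
  exact hI.red_iterate j (by rwa [← hj])

theorem IsPartialIdeal.isPP_symmetrize (hI : IsPartialIdeal m 0 I) : IsPP m (symmetrize I) := by
  constructor
  · rintro ⟨i, j, k⟩ ⟨A, B, C, ⟨hmax, hmin, -⟩, h⟩
    have := hI.sum_lt h
    dsimp only at *
    omega
  · rintro i j k i' j' k' ⟨A, B, C, ⟨hmax, hmin, hsum⟩, h⟩ hi hi' hj hj' hk hk'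
    obtain ⟨A', B', C', hmax', hmin', hsum'⟩ := exists_sortsTo hi hj hk
    refine ⟨A', B', C', ⟨hmax', hmin', hsum'⟩, hI.mem_of_le h ?_ ?_ ?_⟩ <;>
      dsimp only at * <;> omega

theorem isTS_symmetrize (I : Finset (ℕ × ℕ × ℕ)) : IsTS (symmetrize I) := by
  rintro i j k ⟨A, B, C, ⟨hmax, hmin, hsum⟩, h⟩
  dsimp only at hmax hmin hsum
  refine ⟨?_, ?_, ?_, ?_, ?_⟩ <;>
    refine ⟨A, B, C, ⟨?_, ?_, ?_⟩, h⟩ <;> dsimp only <;> omega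

theorem symmetrize_tsppIdeal (hπ : IsTSPP m π) : symmetrize (tsppIdeal m π) = π := by
  ext ⟨i, j, k⟩
  constructor
  · rintro ⟨A, B, C, h, hI⟩
    exact (mem_iff_of_sortsTo hπ.2 h).2 ((mem_tsppIdeal hπ.1).1 hI)
  · intro hmem
    obtain ⟨⟨hi, -⟩, ⟨hj, -⟩, hk, -⟩ := hπ.1.1 _ hmem
    obtain ⟨A, B, C, h⟩ := exists_sortsTo hi hj hk
    exact ⟨A, B, C, h, (mem_tsppIdeal hπ.1).2 ((mem_iff_of_sortsTo hπ.2 h).1 hmem)⟩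

theorem IsPartialIdeal.tsppIdeal_symmetrize (hI : IsPartialIdeal m 0 I) :
    tsppIdeal m (symmetrize I) = I := by
  ext ⟨A, B, C⟩
  rw [mem_tsppIdeal hI.isPP_symmetrize, mem_symmetrize_iff (sortsTo_self A B C)]

theorem card_tspp (m : ℕ) :
    Nat.card {π : Set (ℕ × ℕ × ℕ) // IsTSPP m π} = (partialIdeals m 0).card := by
  rw [← Nat.card_eq_finsetCard]
  exact Nat.card_congr
    { toFun := fun π =>
        ⟨tsppIdeal m π.1, mem_partialIdeals.2 (isPartialIdeal_tsppIdeal π.2.1)⟩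
      invFun := fun I =>
        ⟨symmetrize I.1, (mem_partialIdeals.1 I.2).isPP_symmetrize, isTS_symmetrize I.1⟩
      left_inv := fun π => Subtype.ext (symmetrize_tsppIdeal π.2)
      right_inv := fun I => Subtype.ext (mem_partialIdeals.1 I.2).tsppIdeal_symmetrize }

end TotallySymmetric

section CentralPairs

variable {R M : Type*} [CommRing R] [AddCommGroup M] [Module R M]

theorem ι_mul_ι_mem_center (x y : M) :
    ι R x * ι R y ∈ Subalgebra.center R (ExteriorAlgebra R M) := by
  rw [Subalgebra.mem_center_iff]
  intro z
  induction z using ExteriorAlgebra.induction with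
  | algebraMap r => exact Algebra.commutes r _
  | ι z =>
    rw [← mul_assoc, ι_mul_ι_swap z x, neg_mul, mul_assoc, ι_mul_ι_swap z y, mul_neg,
      neg_neg, mul_assoc]
  | mul a b ha hb => rw [mul_assoc, hb, ← mul_assoc, ha, mul_assoc]
  | add a b ha hb => rw [add_mul, mul_add, ha, hb]

variable (R) in
/-- The product `x ∧ y` of two vectors. It is bundled as an element of the center, so that products
over finite sets of such pairs make sense. -/
noncomputable def centralPair (x y : M) : Subalgebra.center R (ExteriorAlgebra R M) :=
  ⟨ι R x * ι R y, ι_mul_ι_mem_center x y⟩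

theorem coe_centralPair (x y : M) : (centralPair R x y : ExteriorAlgebra R M) = ι R x * ι R y :=
  rfl

theorem mul_coe_center (z : ExteriorAlgebra R M) (c : Subalgebra.center R (ExteriorAlgebra R M)) :
    z * c = c * z :=
  Subalgebra.mem_center_iff.1 c.2 z

theorem centralPair_mul_centralPair_left (x y z : M) :
    centralPair R x y * centralPair R x z = 0 := by
  apply Subtype.ext
  push_cast
  rw [coe_centralPair, coe_centralPair, mul_assoc, ← mul_assoc (ι R y), ι_mul_ι_swap y x,
    neg_mul, mul_neg, mul_assoc, ← mul_assoc, ι_sq_zero, zero_mul, neg_zero]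

theorem centralPair_swap (x y : M) : centralPair R x y = -centralPair R y x :=
  Subtype.ext (ι_mul_ι_swap x y)

theorem centralPair_smul_left (a : R) (x y : M) :
    centralPair R (a • x) y = centralPair R x (a • y) := by
  apply Subtype.ext
  simp only [coe_centralPair, map_smul, smul_mul_assoc, mul_smul_comm]

theorem centralPair_zero_right (x : M) : centralPair R x 0 = 0 := by
  apply Subtype.ext
  simp [coe_centralPair]

theorem centralPair_add_right (x y z : M) :
    centralPair R x (y + z) = centralPair R x y + centralPair R x z := by
  apply Subtype.ext
  simp [coe_centralPair, mul_add]

theorem prod_one_add_centralPair_right {α : Type*} (s : Finset α) (x : M) (y : α → M) :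
    ∏ i ∈ s, (1 + centralPair R x (y i)) = 1 + centralPair R x (∑ i ∈ s, y i) := by
  induction s using Finset.induction_on with
  | empty => simp [centralPair_zero_right]
  | insert i s hi ih =>
    rw [prod_insert hi, sum_insert hi, ih, centralPair_add_right, mul_add, mul_one,
      add_mul, one_mul, centralPair_mul_centralPair_left, add_zero, add_assoc]

theorem prod_one_add_centralPair_left {α : Type*} (s : Finset α) (x : α → M) (y : M) :
    ∏ i ∈ s, (1 + centralPair R (x i) y) = 1 + centralPair R (∑ i ∈ s, x i) y := by
  have hswap : ∀ z, centralPair R z y = centralPair R y (-z) := fun z => by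
    rw [centralPair_swap, ← neg_one_smul R z, ← centralPair_smul_left]
    apply Subtype.ext
    simp [coe_centralPair]
  simp only [hswap, prod_one_add_centralPair_right, sum_neg_distrib]

theorem prod_one_add_centralPair_sum {α β : Type*} (s : Finset α) (t : Finset β)
    (a : α → β → R) (x : β → M) (y : α → M) :
    ∏ i ∈ s, (1 + centralPair R (∑ j ∈ t, a i j • x j) (y i)) =
      ∏ j ∈ t, (1 + centralPair R (x j) (∑ i ∈ s, a i j • y i)) := by
  simp only [← prod_one_add_centralPair_left, ← prod_one_add_centralPair_right,
    centralPair_smul_left]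
  exact prod_comm

theorem one_add_mul_mul_one_add (x y s : M) :
    (1 + ι R (x + y)) * (1 + ι R ((2 : R) • s)) * (1 + ι R (x - y)) =
      (1 + ι R ((2 : R) • (s + x))) *
        ↑(1 + centralPair R y ((4 : R) • s + (2 : R) • x)) := by
  have hswap : ∀ u v : M, ∀ z, ι R u * (ι R v * z) = -(ι R v * (ι R u * z)) := fun u v z => by
    rw [← mul_assoc, ι_mul_ι_swap, neg_mul, mul_assoc]
  have hsq : ∀ u : M, ∀ z, ι R u * (ι R u * z) = 0 := fun u z => by
    rw [← mul_assoc, ι_sq_zero, zero_mul]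
  push_cast
  simp only [coe_centralPair, map_add, map_sub, map_smul, mul_add, add_mul, mul_sub, mul_one,
    one_mul, smul_mul_assoc, mul_smul_comm, mul_assoc, ι_mul_ι_swap y x, ι_mul_ι_swap s x,
    ι_mul_ι_swap s y, hswap y x, hswap s x, hswap s y, hsq, ι_sq_zero, mul_neg, smul_neg,
    smul_zero, mul_zero, neg_zero, smul_add]
  module

theorem coe_prod_centralPair_mem {α : Type*} (t : Finset α) (x y : α → M) :
    ↑(∏ b ∈ t, centralPair R (x b) (y b)) ∈
      LinearMap.range (ι R : M →ₗ[R] _) ^ (2 * t.card) := by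
  induction t using Finset.induction_on with
  | empty => simp
  | insert b t hb ih =>
    rw [prod_insert hb, card_insert_of_notMem hb, mul_add, mul_one, add_comm, pow_add, sq]
    exact Submodule.mul_mem_mul
      (Submodule.mul_mem_mul (LinearMap.mem_range_self _ _) (LinearMap.mem_range_self _ _)) ih

theorem topForm_mul_prod_one_add_centralPair {α : Type*} {m i : ℕ} (s : Finset α)
    (x y : α → Fin m → R) {z : ExteriorAlgebra R (Fin m → R)}
    (hz : z ∈ LinearMap.range (ι R : (Fin m → R) →ₗ[R] _) ^ i)
    (h : ∀ k < s.card, i + 2 * k ≠ m) :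
    topForm R m (z * ↑(∏ b ∈ s, (1 + centralPair R (x b) (y b)))) =
      topForm R m (z * ↑(∏ b ∈ s, centralPair R (x b) (y b))) := by
  rw [prod_one_add]
  push_cast
  rw [mul_sum, map_sum, sum_eq_single s _ (by simp)]
  intro t hts hne
  have hcard := card_lt_card ((mem_powerset.1 hts).ssubset_of_ne hne)
  refine topForm_of_mem_pow (h _ hcard) ?_
  rw [pow_add]
  exact Submodule.mul_mem_mul hz (by exact_mod_cast coe_prod_centralPair_mem t x y)

theorem topForm_one_add_ι_mul_prod {α : Type*} {m : ℕ} (s : Finset α) (v : Fin m → R)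
    (x y : α → Fin m → R) (h : 2 * s.card ≤ m) (h' : m ≤ 2 * s.card + 1) :
    topForm R m ((1 + ι R v) *
        ↑(∏ b ∈ s, (1 + centralPair R (x b) (y b)))) =
      topForm R m ↑(∏ b ∈ s, centralPair R (x b) (y b)) +
        topForm R m (ι R v * ↑(∏ b ∈ s, centralPair R (x b) (y b))) := by
  have hone : (1 : ExteriorAlgebra R (Fin m → R)) ∈
      LinearMap.range (ι R : (Fin m → R) →ₗ[R] _) ^ 0 := by simp
  have hι : ι R v ∈ LinearMap.range (ι R : (Fin m → R) →ₗ[R] _) ^ 1 := by simp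
  rw [add_mul, map_add, topForm_mul_prod_one_add_centralPair s x y hone (by omega),
    topForm_mul_prod_one_add_centralPair s x y hι (by omega), one_mul]

end CentralPairs

section ReflectionFamilies

variable (R : Type*) [CommRing R]

theorem ascProd_succ_right (m r k : ℕ) : ascProd R m r (k + 1) =
    ascProd R m r k * (1 + (-1 : R) ^ (r + k) • extGen R m (r + k)) := by
  simp [ascProd, List.range'_concat]

variable {R}

theorem toLin'_stdVec {m t : ℕ} (N : Matrix (Fin m) (Fin m) R) (ht : t < m) :
    Matrix.toLin' N (stdVec R m t) = fun i => N i ⟨t, ht⟩ := by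
  have h := stdVec_coe (R := R) (⟨t, ht⟩ : Fin m)
  rw [Pi.basisFun_apply] at h
  rw [h, Matrix.toLin'_apply, Matrix.mulVec_single_one]
  rfl

/-- A sequence of polynomials with `deg q_j ≤ j` and `q_j(-1 - x) = (-1)^j q_j(x)`. The reflection
`x ↦ -1 - x` turns the binomial vectors into the signed standard vectors, so the coefficients of
such a family provide a basis adapted to both. -/
structure IsReflectionFamily (q : ℕ → R[X]) : Prop where
  natDegree_le : ∀ j, (q j).natDegree ≤ j
  comp_reflection : ∀ j, (q j).comp (-1 - X) = (-1 : R) ^ j • q j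

/-- The form `∑ g_r (2 ∑_{p < r} f_p + f_r)` on polynomials `f = ∑ f_p X^p`, `g = ∑ g_r X^r`. -/
noncomputable def skewForm (f g : R[X]) : R :=
  g.sum fun r c => c * (2 * ∑ p ∈ range r, f.coeff p + f.coeff r)

/-- The vector of the `p`-th coefficients of the even-indexed members of `q`. -/
noncomputable def evenPart (m : ℕ) (q : ℕ → R[X]) (p : ℕ) : Fin m → R :=
  fun j => if Even (j : ℕ) then (q j).coeff p else 0

/-- The vector of the `p`-th coefficients of the odd-indexed members of `q`. -/
noncomputable def oddPart (m : ℕ) (q : ℕ → R[X]) (p : ℕ) : Fin m → R :=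
  fun j => if Even (j : ℕ) then 0 else (q j).coeff p

/-- The coefficient matrix of the family `q`, with a chessboard pattern of signs. -/
noncomputable def coeffMatrix (m : ℕ) (q : ℕ → R[X]) : Matrix (Fin m) (Fin m) R :=
  Matrix.of fun j t => (-1) ^ (j : ℕ) * (-1) ^ (t : ℕ) * (q j).coeff t

/-- The vector with coordinates `2 * skewForm (q j) g` at even `j`, and `0` at odd `j`. -/
noncomputable def skewVec (m : ℕ) (q : ℕ → R[X]) (g : R[X]) : Fin m → R :=
  fun j => if Even (j : ℕ) then 2 * skewForm (q j) g else 0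

/-- The quadratic factor contributed by the `r`-th coefficients of `q`. -/
noncomputable def pairFactor (m : ℕ) (q : ℕ → R[X]) (r : ℕ) :
    Subalgebra.center R (ExteriorAlgebra R (Fin m → R)) :=
  centralPair R (oddPart m q r)
    ((4 : R) • ∑ p ∈ range r, evenPart m q p + (2 : R) • evenPart m q r)

theorem skewForm_eq (f : R[X]) {g : R[X]} {m : ℕ} (hg : g.natDegree < m) : skewForm f g =
    ∑ r ∈ range m, g.coeff r * (2 * ∑ p ∈ range r, f.coeff p + f.coeff r) :=
  Polynomial.sum_over_range' g
    (f := fun r c => c * (2 * ∑ p ∈ range r, f.coeff p + f.coeff r)) (fun _ => zero_mul _) m hg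

theorem coeff_comp_reflection {f : R[X]} {m : ℕ} (hf : f.natDegree < m) (p : ℕ) :
    (f.comp (-1 - X)).coeff p = ∑ t ∈ range m, (-1) ^ t * f.coeff t * (t.choose p : R) := by
  have hX : (-1 - X : R[X]) = C (-1) * (1 + X) := by
    rw [Polynomial.C_neg, Polynomial.C_1]
    ring
  rw [Polynomial.comp, Polynomial.eval₂_eq_sum_range' C hf, Polynomial.finsetSum_coeff]
  refine sum_congr rfl fun t _ => ?_
  rw [hX, mul_pow, ← Polynomial.C_pow, ← mul_assoc, ← Polynomial.C_mul, Polynomial.coeff_C_mul,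
    Polynomial.coeff_one_add_X_pow, mul_comm (f.coeff t)]

theorem evenPart_add_oddPart {m : ℕ} (q : ℕ → R[X]) (p : ℕ) (j : Fin m) :
    (evenPart m q p + oddPart m q p) j = (q j).coeff p := by
  by_cases h : Even (j : ℕ) <;> simp [evenPart, oddPart, h]

theorem evenPart_sub_oddPart {m : ℕ} (q : ℕ → R[X]) (p : ℕ) (j : Fin m) :
    (evenPart m q p - oddPart m q p) j = (-1) ^ (j : ℕ) * (q j).coeff p := by
  by_cases h : Even (j : ℕ)
  · simp [evenPart, oddPart, h]
  · simp [evenPart, oddPart, h, (Nat.not_even_iff_odd.1 h).neg_one_pow]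

theorem coeffMatrix_stdVec {m p : ℕ} (q : ℕ → R[X]) (hp : p < m) :
    Matrix.toLin' (coeffMatrix m q) ((-1 : R) ^ p • stdVec R m p) =
      evenPart m q p - oddPart m q p := by
  have hsq : (-1 : R) ^ p * (-1) ^ p = 1 := by rw [← mul_pow]; simp
  ext j
  rw [map_smul, toLin'_stdVec _ hp, evenPart_sub_oddPart]
  simp only [coeffMatrix, Matrix.of_apply, Pi.smul_apply, smul_eq_mul]
  linear_combination (-1) ^ (j : ℕ) * (q j).coeff p * hsq

theorem oddPart_eq (m : ℕ) (q : ℕ → R[X]) (r : ℕ) : oddPart m q r =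
    ∑ b ∈ range (m / 2), (q (2 * b + 1)).coeff r • stdVec R m (2 * b + 1) := by
  ext j
  simp only [oddPart, Finset.sum_apply, Pi.smul_apply, smul_eq_mul, stdVec, mul_ite, mul_one,
    mul_zero]
  split_ifs with hj
  · refine (sum_eq_zero fun b _ => if_neg fun h => ?_).symm
    rw [h] at hj
    exact absurd hj (by simp)
  · obtain ⟨b, hb⟩ := Nat.not_even_iff_odd.1 hj
    have hbm : b ∈ range (m / 2) := mem_range.2 (by lia)
    rw [sum_eq_single_of_mem b hbm fun c _ hc => if_neg (by lia), if_pos hb, hb]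

theorem skewVec_eq {m : ℕ} (q : ℕ → R[X]) {g : R[X]} (hg : g.natDegree < m) :
    skewVec m q g = ∑ r ∈ range m, g.coeff r •
      ((4 : R) • ∑ p ∈ range r, evenPart m q p + (2 : R) • evenPart m q r) := by
  ext j
  simp only [Finset.sum_apply, Pi.smul_apply, Pi.add_apply, smul_eq_mul, skewVec, evenPart]
  split_ifs with hj
  · rw [skewForm_eq _ hg, mul_sum]
    exact sum_congr rfl fun r _ => by ring
  · simp

namespace IsReflectionFamily

variable {q : ℕ → R[X]} {m : ℕ}

theorem det_coeffMatrix (hq : IsReflectionFamily q) :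
    (coeffMatrix m q).det = ∏ j ∈ range m, (q j).coeff j := by
  rw [Matrix.det_of_isLowerTriangular, ← Fin.prod_univ_eq_prod_range (fun j => (q j).coeff j)]
  · refine prod_congr rfl fun j _ => ?_
    rw [coeffMatrix, Matrix.of_apply, ← mul_pow, neg_one_mul, neg_neg, one_pow, one_mul]
  · intro i j hij
    have hij' : (i : ℕ) < j := by simpa using hij
    rw [coeffMatrix, Matrix.of_apply,
      Polynomial.coeff_eq_zero_of_natDegree_lt ((hq.natDegree_le i).trans_lt hij'), mul_zero]

theorem coeffMatrix_binVec (hq : IsReflectionFamily q) (p : ℕ) :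
    Matrix.toLin' (coeffMatrix m q) (binVec R m p) = evenPart m q p + oddPart m q p := by
  ext j
  have hsq : (-1 : R) ^ (j : ℕ) * (-1) ^ (j : ℕ) = 1 := by rw [← mul_pow]; simp
  calc Matrix.toLin' (coeffMatrix m q) (binVec R m p) j
    _ = ∑ t : Fin m, (-1) ^ (j : ℕ) *
          ((-1) ^ (t : ℕ) * (q j).coeff t * ((t : ℕ).choose p : R)) := by
        rw [Matrix.toLin'_apply, Matrix.mulVec, dotProduct]
        refine sum_congr rfl fun t _ => ?_
        simp only [coeffMatrix, Matrix.of_apply, binVec]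
        ring
    _ = (-1) ^ (j : ℕ) * ((q j).comp (-1 - X)).coeff p := by
        rw [← mul_sum, coeff_comp_reflection ((hq.natDegree_le j).trans_lt j.2),
          ← Fin.sum_univ_eq_sum_range fun t => (-1) ^ t * (q j).coeff t * (t.choose p : R)]
    _ = (evenPart m q p + oddPart m q p) j := by
        rw [hq.comp_reflection, Polynomial.coeff_smul, smul_eq_mul, ← mul_assoc, hsq, one_mul,
          evenPart_add_oddPart]

theorem map_binProd_mul_ascProd (hq : IsReflectionFamily q) {r : ℕ} (hr : r ≤ m) :
    ExteriorAlgebra.map (Matrix.toLin' (coeffMatrix m q)) (binProd R m r * ascProd R m 0 r) =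
      (1 + ι R ((2 : R) • ∑ p ∈ range r, evenPart m q p)) *
        ↑(∏ i ∈ range r, (1 + pairFactor m q i)) := by
  induction r with
  | zero => simp [binProd, ascProd]
  | succ r ih =>
    set c : Subalgebra.center R (ExteriorAlgebra R (Fin m → R)) :=
      ∏ i ∈ range r, (1 + pairFactor m q i)
    set s := ∑ p ∈ range r, evenPart m q p with hs
    calc ExteriorAlgebra.map _ (binProd R m (r + 1) * ascProd R m 0 (r + 1))
        = (1 + ι R (evenPart m q r + oddPart m q r)) * ((1 + ι R ((2 : R) • s)) * ↑c) *
            (1 + ι R (evenPart m q r - oddPart m q r)) := by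
          rw [binProd_succ, ascProd_succ_right, zero_add, mul_assoc, ← mul_assoc (binProd R m r),
            map_mul, map_mul, ih (by lia), map_add, map_add, map_one, map_apply_ι, extGen,
            ← map_smul (ι R), map_apply_ι, hq.coeffMatrix_binVec, coeffMatrix_stdVec q (by lia),
            ← mul_assoc]
      _ = (1 + ι R (evenPart m q r + oddPart m q r)) * (1 + ι R ((2 : R) • s)) *
            (1 + ι R (evenPart m q r - oddPart m q r)) * ↑c := by
          rw [← mul_assoc, mul_assoc _ (c : ExteriorAlgebra R (Fin m → R)), ← mul_coe_center,
            ← mul_assoc]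
      _ = (1 + ι R ((2 : R) • (s + evenPart m q r))) * ↑((1 + pairFactor m q r) * c) := by
          rw [one_add_mul_mul_one_add, mul_assoc, MulMemClass.coe_mul, pairFactor, ← hs]
      _ = _ := by rw [sum_range_succ, prod_range_succ, mul_comm c]

theorem prod_one_add_pairFactor (hq : IsReflectionFamily q) :
    ∏ r ∈ range m, (1 + pairFactor m q r) = ∏ b ∈ range (m / 2),
      (1 + centralPair R (stdVec R m (2 * b + 1)) (skewVec m q (q (2 * b + 1)))) := by
  simp only [pairFactor, oddPart_eq]
  rw [prod_one_add_centralPair_sum]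
  refine prod_congr rfl fun b hb => ?_
  rw [skewVec_eq q ((hq.natDegree_le _).trans_lt (by have := mem_range.1 hb; lia))]

theorem card_partialIdeals_mul_prod_coeff (hq : IsReflectionFamily q) :
    ((partialIdeals m 0).card : R) * ∏ j ∈ range m, (q j).coeff j =
      topForm R m ↑(∏ b ∈ range (m / 2),
          centralPair R (stdVec R m (2 * b + 1)) (skewVec m q (q (2 * b + 1)))) +
        topForm R m (ι R ((2 : R) • ∑ p ∈ range m, evenPart m q p) *
          ↑(∏ b ∈ range (m / 2),
            centralPair R (stdVec R m (2 * b + 1)) (skewVec m q (q (2 * b + 1))))) := by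
  rw [← topForm_one_add_ι_mul_prod _ _ _ _ (by rw [card_range]; lia) (by rw [card_range]; lia),
    ← hq.prod_one_add_pairFactor, ← hq.map_binProd_mul_ascProd le_rfl, topForm_map,
    LinearMap.det_toLin', hq.det_coeffMatrix, card_partialIdeals_eq_topForm, mul_comm]

end IsReflectionFamily

end ReflectionFamilies

section Evaluation

variable {R : Type*} [CommRing R] {q : ℕ → R[X]}

/-- The `j`-th column of `triMatrix m q`. Columns `2b` and `2b + 1` span the plane of the pair
attached to `q_{2b+1}`, and for odd `m` the last column is the remaining vector. -/
noncomputable def triCol (m : ℕ) (q : ℕ → R[X]) (j : ℕ) : Fin m → R :=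
  if Even j then
    if j + 1 < m then skewVec m q (q (j + 1)) else (2 : R) • ∑ p ∈ range m, evenPart m q p
  else stdVec R m j

/-- The matrix that carries `e_{m-1} ∧ ⋯ ∧ e_0` to the product of pairs that counts ideals. It is
upper triangular as soon as `skewForm (q_{2a}) (q_{2b+1}) = 0` for `b < a`. -/
noncomputable def triMatrix (m : ℕ) (q : ℕ → R[X]) : Matrix (Fin m) (Fin m) R :=
  Matrix.of fun i j => triCol m q j i

theorem toLin'_triMatrix_stdVec {m j : ℕ} (q : ℕ → R[X]) (hj : j < m) :
    Matrix.toLin' (triMatrix m q) (stdVec R m j) = triCol m q j := by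
  rw [toLin'_stdVec _ hj]
  rfl

theorem map_triMatrix_extGen {m j : ℕ} (q : ℕ → R[X]) (hj : j < m) :
    ExteriorAlgebra.map (Matrix.toLin' (triMatrix m q)) (extGen R m j) = ι R (triCol m q j) := by
  rw [extGen, map_apply_ι, toLin'_triMatrix_stdVec q hj]

theorem triCol_two_mul {m b : ℕ} (q : ℕ → R[X]) (h : 2 * b + 1 < m) :
    triCol m q (2 * b) = skewVec m q (q (2 * b + 1)) := by
  rw [triCol, if_pos (even_two_mul b), if_pos h]

theorem triCol_two_mul_add_one (m b : ℕ) (q : ℕ → R[X]) :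
    triCol m q (2 * b + 1) = stdVec R m (2 * b + 1) := by
  rw [triCol, if_neg (by simp)]

theorem triCol_last (k : ℕ) (q : ℕ → R[X]) : triCol (2 * k + 1) q (2 * k) =
    (2 : R) • ∑ p ∈ range (2 * k + 1), evenPart (2 * k + 1) q p := by
  rw [triCol, if_pos (even_two_mul k), if_neg (lt_irrefl _)]

theorem isUpperTriangular_triMatrix (m : ℕ)
    (htri : ∀ a b, b < a → skewForm (q (2 * a)) (q (2 * b + 1)) = 0) :
    (triMatrix m q).IsUpperTriangular := by
  intro i j hij
  have hij' : (j : ℕ) < i := by simpa using hij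
  rw [triMatrix, Matrix.of_apply]
  obtain ⟨b, hb | hb⟩ := Nat.even_or_odd' (j : ℕ)
  · rw [hb, triCol_two_mul q (by lia), skewVec]
    split_ifs with hi
    · obtain ⟨a, ha⟩ := hi.two_dvd
      rw [ha, htri a b (by lia), mul_zero]
    · rfl
  · rw [hb, triCol_two_mul_add_one, stdVec, if_neg (by lia)]

theorem triMatrix_apply_two_mul {m b : ℕ} (q : ℕ → R[X]) (h : 2 * b + 1 < m) :
    triMatrix m q ⟨2 * b, by lia⟩ ⟨2 * b, by lia⟩ =
      2 * skewForm (q (2 * b)) (q (2 * b + 1)) := by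
  simp [triMatrix, triCol_two_mul q h, skewVec]

theorem triMatrix_apply_two_mul_add_one {m b : ℕ} (q : ℕ → R[X]) (h : 2 * b + 1 < m) :
    triMatrix m q ⟨2 * b + 1, h⟩ ⟨2 * b + 1, h⟩ = 1 := by
  simp [triMatrix, triCol_two_mul_add_one, stdVec]

theorem prod_range_two_mul {M : Type*} [CommMonoid M] (f : ℕ → M) (k : ℕ) :
    ∏ j ∈ range (2 * k), f j = ∏ b ∈ range k, f (2 * b) * f (2 * b + 1) := by
  induction k with
  | zero => simp
  | succ k ih =>
    rw [mul_add, mul_one, prod_range_succ, prod_range_succ, ih, prod_range_succ, mul_assoc]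

theorem prod_range_diag_triMatrix {m k : ℕ} (q : ℕ → R[X]) (h : 2 * k ≤ m) :
    ∏ j ∈ range (2 * k), (if hj : j < m then triMatrix m q ⟨j, hj⟩ ⟨j, hj⟩ else 1) =
      ∏ b ∈ range k, 2 * skewForm (q (2 * b)) (q (2 * b + 1)) := by
  rw [prod_range_two_mul]
  refine prod_congr rfl fun b hb => ?_
  have hbm : 2 * b + 1 < m := by
    have := mem_range.1 hb
    lia
  rw [dif_pos (by lia), dif_pos hbm, triMatrix_apply_two_mul q hbm,
    triMatrix_apply_two_mul_add_one q hbm, mul_one]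

theorem det_triMatrix_even (htri : ∀ a b, b < a → skewForm (q (2 * a)) (q (2 * b + 1)) = 0)
    (k : ℕ) : (triMatrix (2 * k) q).det =
      ∏ b ∈ range k, 2 * skewForm (q (2 * b)) (q (2 * b + 1)) := by
  rw [Matrix.det_of_isUpperTriangular (isUpperTriangular_triMatrix _ htri),
    prod_fin_eq_prod_range, prod_range_diag_triMatrix q le_rfl]

theorem det_triMatrix_odd (hdeg : ∀ j, (q j).natDegree ≤ j)
    (htri : ∀ a b, b < a → skewForm (q (2 * a)) (q (2 * b + 1)) = 0) (k : ℕ) :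
    (triMatrix (2 * k + 1) q).det =
      (∏ b ∈ range k, 2 * skewForm (q (2 * b)) (q (2 * b + 1))) * (2 * (q (2 * k)).eval 1) := by
  rw [Matrix.det_of_isUpperTriangular (isUpperTriangular_triMatrix _ htri),
    prod_fin_eq_prod_range, prod_range_succ, prod_range_diag_triMatrix q (by lia),
    dif_pos (by lia), Polynomial.eval_eq_sum_range' ((hdeg (2 * k)).trans_lt (Nat.lt_succ_self _))]
  simp [triMatrix, triCol_last, evenPart]

theorem map_triMatrix_descProd {m k : ℕ} (q : ℕ → R[X]) (hk : 2 * k ≤ m) :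
    ExteriorAlgebra.map (Matrix.toLin' (triMatrix m q)) (descProd R m (2 * k)) =
      ↑(∏ b ∈ range k,
        centralPair R (stdVec R m (2 * b + 1)) (skewVec m q (q (2 * b + 1)))) := by
  induction k with
  | zero => simp [descProd]
  | succ k ih =>
    rw [mul_add, mul_one, descProd_succ, descProd_succ, map_mul, map_mul, ih (by lia),
      map_triMatrix_extGen q (by lia), map_triMatrix_extGen q (by lia), triCol_two_mul_add_one,
      triCol_two_mul q (by lia), ← mul_assoc, prod_range_succ, mul_comm (∏ b ∈ _, _)]
    rfl

theorem topForm_map_triMatrix_descProd (m : ℕ) (q : ℕ → R[X]) :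
    topForm R m (ExteriorAlgebra.map (Matrix.toLin' (triMatrix m q)) (descProd R m m)) =
      (triMatrix m q).det := by
  rw [topForm_map, topForm_descProd, mul_one, LinearMap.det_toLin']

theorem card_partialIdeals_even (hq : IsReflectionFamily q)
    (htri : ∀ a b, b < a → skewForm (q (2 * a)) (q (2 * b + 1)) = 0) (k : ℕ) :
    ((partialIdeals (2 * k) 0).card : R) * ∏ j ∈ range (2 * k), (q j).coeff j =
      ∏ b ∈ range k, 2 * skewForm (q (2 * b)) (q (2 * b + 1)) := by
  have hvanish (z : Fin (2 * k) → R) : topForm R (2 * k) (ι R z * ↑(∏ b ∈ range k,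
      centralPair R (stdVec R (2 * k) (2 * b + 1)) (skewVec (2 * k) q (q (2 * b + 1))))) = 0 := by
    refine topForm_of_mem_pow (i := 1 + 2 * (range k).card) (by lia) ?_
    rw [pow_add, pow_one]
    exact Submodule.mul_mem_mul (LinearMap.mem_range_self _ _) (coe_prod_centralPair_mem _ _ _)
  rw [hq.card_partialIdeals_mul_prod_coeff, Nat.mul_div_cancel_left k two_pos, hvanish, add_zero,
    ← map_triMatrix_descProd q le_rfl, topForm_map_triMatrix_descProd, det_triMatrix_even htri]

theorem card_partialIdeals_odd (hq : IsReflectionFamily q)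
    (htri : ∀ a b, b < a → skewForm (q (2 * a)) (q (2 * b + 1)) = 0) (k : ℕ) :
    ((partialIdeals (2 * k + 1) 0).card : R) * ∏ j ∈ range (2 * k + 1), (q j).coeff j =
      (∏ b ∈ range k, 2 * skewForm (q (2 * b)) (q (2 * b + 1))) * (2 * (q (2 * k)).eval 1) := by
  have hvanish : topForm R (2 * k + 1) ↑(∏ b ∈ range k, centralPair R
      (stdVec R (2 * k + 1) (2 * b + 1)) (skewVec (2 * k + 1) q (q (2 * b + 1)))) = 0 :=
    topForm_of_mem_pow (by rw [card_range]; lia) (coe_prod_centralPair_mem _ _ _)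
  rw [hq.card_partialIdeals_mul_prod_coeff, show (2 * k + 1) / 2 = k by lia, hvanish, zero_add,
    ← map_triMatrix_descProd q (by lia), ← triCol_last, ← map_triMatrix_extGen q (by lia),
    ← map_mul, ← descProd_succ, topForm_map_triMatrix_descProd,
    det_triMatrix_odd hq.natDegree_le htri]

end Evaluation

section SkewFormLinearity

variable {R : Type*} [CommRing R]

theorem skewForm_add_right (f g₁ g₂ : R[X]) :
    skewForm f (g₁ + g₂) = skewForm f g₁ + skewForm f g₂ :=
  Polynomial.sum_add_index g₁ g₂ _ (fun _ => zero_mul _) fun _ _ _ => add_mul _ _ _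

theorem skewForm_C_mul_X_pow (f : R[X]) (c : R) (r : ℕ) :
    skewForm f (C c * X ^ r) = c * (2 * ∑ p ∈ range r, f.coeff p + f.coeff r) := by
  rw [Polynomial.C_mul_X_pow_eq_monomial]
  exact Polynomial.sum_monomial_index _ _ (zero_mul _)

theorem skewForm_C_mul_add_left (c : R) (f₁ f₂ g : R[X]) :
    skewForm (C c * f₁ + f₂) g = c * skewForm f₁ g + skewForm f₂ g := by
  simp only [skewForm_eq _ (Nat.lt_succ_self g.natDegree), Polynomial.coeff_add,
    Polynomial.coeff_C_mul, sum_add_distrib, ← mul_sum]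
  rw [mul_sum, ← sum_add_distrib]
  exact sum_congr rfl fun r _ => by ring

theorem skewForm_sum_C_mul_left {α : Type*} (s : Finset α) (c : α → R) (f : α → R[X]) (g : R[X]) :
    skewForm (∑ i ∈ s, C (c i) * f i) g = ∑ i ∈ s, c i * skewForm (f i) g := by
  induction s using Finset.induction_on with
  | empty => simp [skewForm, Polynomial.sum_def]
  | insert i s hi ih => rw [sum_insert hi, sum_insert hi, skewForm_C_mul_add_left, ih]

end SkewFormLinearity

section SkewFormValues

/-- The reciprocal factorial, extended by zero to negative integers. It lets binomial coefficients
be handled without side conditions on their arguments. -/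
noncomputable def invFact (z : ℤ) : ℚ := if z < 0 then 0 else 1 / (z.toNat.factorial : ℚ)

theorem invFact_natCast (n : ℕ) : invFact n = 1 / (n.factorial : ℚ) := by
  simp [invFact]

theorem invFact_of_neg {z : ℤ} (hz : z < 0) : invFact z = 0 := if_pos hz

theorem invFact_sub_one (z : ℤ) : invFact (z - 1) = z * invFact z := by
  rcases lt_trichotomy z 0 with hz | rfl | hz
  · rw [invFact_of_neg hz, invFact_of_neg (by lia), mul_zero]
  · rw [invFact_of_neg (by lia), Int.cast_zero, zero_mul]
  · obtain ⟨n, rfl⟩ : ∃ n : ℕ, z = n + 1 := ⟨(z - 1).toNat, by lia⟩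
    rw [add_sub_cancel_right, ← Nat.cast_succ, invFact_natCast, invFact_natCast,
      Nat.factorial_succ]
    push_cast
    field_simp

theorem coeff_X_pow_mul_one_add_X_pow (c d N : ℕ) : (X ^ c * (1 + X) ^ d : ℚ[X]).coeff N =
    d.factorial * invFact (N - c) * invFact (d + c - N) := by
  rw [Polynomial.coeff_X_pow_mul']
  split_ifs with h
  · obtain ⟨j, rfl⟩ := Nat.exists_eq_add_of_le h
    rw [Nat.add_sub_cancel_left, Polynomial.coeff_one_add_X_pow,
      show ((c + j : ℕ) : ℤ) - c = (j : ℕ) by push_cast; ring, invFact_natCast]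
    rcases le_or_gt j d with hj | hj
    · rw [show (d : ℤ) + c - (c + j : ℕ) = (d - j : ℕ) by lia, invFact_natCast,
        Nat.cast_choose ℚ hj]
      field_simp
    · rw [Nat.choose_eq_zero_of_lt hj, invFact_of_neg (by lia), mul_zero, Nat.cast_zero]
  · rw [invFact_of_neg (by lia), mul_zero, zero_mul]

/-- The polynomial `X (1 + X)`, invariant under `X ↦ -1 - X`. -/
noncomputable def symPoly : ℚ[X] := X * (1 + X)

/-- The factor of `oddPoly b` that is invariant under `X ↦ -1 - X`. -/
noncomputable def oddFactor : ℕ → ℚ[X]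
  | 0 => 1
  | b + 1 => symPoly ^ b * (symPoly - 2)

/-- The odd-indexed members of the reflection family `skewFamily`. -/
noncomputable def oddPoly (b : ℕ) : ℚ[X] := (2 * X + 1) * oddFactor b

/-- The closed form of `skewForm (symPoly ^ a) (oddPoly b)`. -/
noncomputable def skewValue (a b : ℕ) : ℚ :=
  (a + b).factorial * invFact (2 * b - a + 1) * invFact (2 * a - b + 1) *
    (9 * a * b + 7 * a + 7 * b + 5)

theorem coeff_symPoly_pow (a N : ℕ) :
    (symPoly ^ a).coeff N = a.factorial * invFact (N - a) * invFact (2 * a - N) := by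
  rw [symPoly, mul_pow, coeff_X_pow_mul_one_add_X_pow, two_mul]

theorem coeff_succ_add_coeff_symPoly_pow (a r : ℕ) :
    (symPoly ^ a).coeff (r + 1) + (symPoly ^ a).coeff r =
      (X ^ r * (1 + X : ℚ[X]) ^ (a + 1)).coeff (2 * a) := by
  have hmul : X ^ a * (1 + X : ℚ[X]) ^ (a + 1) = symPoly ^ a + X * symPoly ^ a := by
    rw [symPoly, mul_pow]
    ring
  rw [← Polynomial.coeff_X_mul (symPoly ^ a) r, ← Polynomial.coeff_add, ← hmul,
    coeff_X_pow_mul_one_add_X_pow, coeff_X_pow_mul_one_add_X_pow, mul_right_comm]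
  congr 2 <;> push_cast <;> ring_nf

theorem skewForm_symPoly_pow_X_sub_one_mul (a : ℕ) (P : ℚ[X]) :
    skewForm (symPoly ^ a) ((X - 1) * P) = ((1 + X) ^ (a + 1) * P).coeff (2 * a) := by
  induction P using Polynomial.induction_on' with
  | add P Q hP hQ => rw [mul_add, skewForm_add_right, hP, hQ, mul_add, Polynomial.coeff_add]
  | monomial r c =>
    have hleft : (X - 1) * Polynomial.monomial r c = C c * X ^ (r + 1) + C (-c) * X ^ r := by
      rw [← Polynomial.C_mul_X_pow_eq_monomial, Polynomial.C_neg]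
      ring
    have hright : (1 + X) ^ (a + 1) * Polynomial.monomial r c =
        C c * (X ^ r * (1 + X : ℚ[X]) ^ (a + 1)) := by
      rw [← Polynomial.C_mul_X_pow_eq_monomial]
      ring
    rw [hleft, hright, skewForm_add_right, skewForm_C_mul_X_pow, skewForm_C_mul_X_pow,
      Polynomial.coeff_C_mul, ← coeff_succ_add_coeff_symPoly_pow, sum_range_succ]
    ring

theorem skewForm_symPoly_pow_oddPoly_zero (a : ℕ) :
    skewForm (symPoly ^ a) (oddPoly 0) = skewValue a 0 := by
  have hodd : oddPoly 0 = C 2 * X ^ 1 + C 1 * X ^ 0 := by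
    simp [oddPoly, oddFactor, Polynomial.C_ofNat]
  rw [hodd, skewForm_add_right, skewForm_C_mul_X_pow, skewForm_C_mul_X_pow, sum_range_one,
    sum_range_zero, coeff_symPoly_pow, coeff_symPoly_pow, skewValue]
  rcases a with _ | _ | a
  · norm_num [invFact]
  · norm_num [invFact, show Int.toNat 3 = 3 from rfl, Nat.factorial]
  · rw [invFact_of_neg (z := (0 : ℕ) - _) (by lia), invFact_of_neg (z := (1 : ℕ) - _) (by lia),
      invFact_of_neg (z := 2 * (0 : ℕ) - _ + 1) (by lia)]
    simp

theorem skewForm_symPoly_pow_oddPoly_succ (a b : ℕ) :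
    skewForm (symPoly ^ a) (oddPoly (b + 1)) = skewValue a (b + 1) := by
  have hodd : oddPoly (b + 1) = (X - 1) * (C 2 * (X ^ b * (1 + X) ^ (b + 2))
      + X ^ (b + 1) * (1 + X) ^ b) := by
    rw [oddPoly, oddFactor, symPoly, mul_pow, Polynomial.C_ofNat]
    ring
  have hfst := invFact_sub_one (2 * a - b)
  have hsnd := invFact_sub_one (2 * (b + 1) - a + 1)
  rw [hodd, skewForm_symPoly_pow_X_sub_one_mul, mul_add, Polynomial.coeff_add, mul_left_comm,
    Polynomial.coeff_C_mul, mul_left_comm, ← pow_add, mul_left_comm, ← pow_add,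
    coeff_X_pow_mul_one_add_X_pow, coeff_X_pow_mul_one_add_X_pow, skewValue,
    show a + 1 + (b + 2) = (a + (b + 1)) + 2 by ring, show a + 1 + b = a + (b + 1) by ring,
    Nat.factorial_succ, Nat.factorial_succ]
  push_cast at hfst hsnd ⊢
  rw [show (2 * a : ℤ) - (b + 1) = 2 * a - b - 1 by ring, hfst,
    show (2 * a : ℤ) - b - 1 + 1 = 2 * a - b by ring,
    show (a : ℤ) + (b + 1) + (b + 1) - 2 * a = 2 * (b + 1) - a + 1 - 1 by ring, hsnd,
    show (a : ℤ) + (b + 1) + 2 + b - 2 * a = 2 * (b + 1) - a + 1 by ring]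
  ring

theorem skewForm_symPoly_pow_oddPoly (a b : ℕ) :
    skewForm (symPoly ^ a) (oddPoly b) = skewValue a b := by
  cases b with
  | zero => exact skewForm_symPoly_pow_oddPoly_zero a
  | succ b => exact skewForm_symPoly_pow_oddPoly_succ a b

end SkewFormValues

section HypergeometricSums

/-- The hypergeometric term `(3 a + 2)⁻¹ c(k, a)`, where `c = evenCoeff`. -/
noncomputable def hyperTerm (k a : ℕ) : ℚ :=
  ∏ i ∈ range a, (-2 * (2 * k + 3 + 2 * i) * (k - i) / ((2 * k + 3 + i) * (2 * k - i)) : ℚ)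

/-- The coefficients of the polynomials that are orthogonal to `oddPoly b`, for `b < k`, with
respect to `skewForm`. -/
noncomputable def evenCoeff (k a : ℕ) : ℚ := (3 * a + 2) * hyperTerm k a

theorem hyperTerm_succ_self (k : ℕ) : hyperTerm k (k + 1) = 0 := by
  simp [hyperTerm, prod_range_succ]

theorem hyperTerm_succ {k a : ℕ} (ha : a ≤ k) :
    hyperTerm k (a + 1) * ((2 * k + 3 + a) * (2 * k - a)) =
      hyperTerm k a * (-2 * (2 * k + 3 + 2 * a) * (k - a)) := by
  rcases ha.eq_or_lt with rfl | ha
  · rw [hyperTerm_succ_self]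
    ring
  · have hka : (0 : ℚ) < 2 * k - a := by
      rw [sub_pos]
      exact_mod_cast (by lia : a < 2 * k)
    rw [hyperTerm, prod_range_succ, ← hyperTerm, mul_assoc, div_mul_cancel₀ _ (by positivity)]

theorem hyperTerm_ne_zero {k a : ℕ} (ha : a ≤ k) : hyperTerm k a ≠ 0 := by
  refine prod_ne_zero_iff.2 fun i hi => ?_
  have hik : (i : ℚ) + 1 ≤ k := by exact_mod_cast (mem_range.1 hi).trans_le ha
  have hsub : (0 : ℚ) < k - i := by linarith
  have hsub' : (0 : ℚ) < 2 * k - i := by linarith [i.cast_nonneg (α := ℚ)]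
  positivity

theorem evenCoeff_self_ne_zero (k : ℕ) : evenCoeff k k ≠ 0 :=
  mul_ne_zero (by positivity) (hyperTerm_ne_zero le_rfl)

/-- The value of `skewForm` at `evenPoly k` and `oddPoly b`. -/
noncomputable def skewSum (k b : ℕ) : ℚ := ∑ a ∈ range (k + 1), evenCoeff k a * skewValue a b

/-- The antidifference in `a`, found by Zeilberger's algorithm, that witnesses the first-order
recurrence of `skewSum k b` in `b`. -/
noncomputable def skewCert (k b a : ℕ) : ℚ :=
  (a + 2 * k + 2) * (a - 2 * k - 1) *
    (-(b + 1) * (3 * b + 5) + (3 * b + 4) * (b + 3) * a / 2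
      + (27 * b ^ 2 + 75 * b + 46) * a ^ 2 / 2) *
    hyperTerm k a * (a + b).factorial * invFact (2 * b + 3 - a) * invFact (2 * a - b - 1)

theorem skewCert_succ_sub {k a : ℕ} (b : ℕ) (ha : a ≤ k) :
    (b + 2) * (2 * k + 1 - b) * (2 * k + 2 + b) / 2 * (evenCoeff k a * skewValue a b) +
      (k - b - 1) * (2 * k + 2 * b + 5) * (b + 1) * (evenCoeff k a * skewValue a (b + 1)) =
      skewCert k b (a + 1) - skewCert k b a := by
  have hfirst := invFact_sub_one (2 * b + 3 - a)
  have hfirst' := invFact_sub_one (2 * b + 2 - a)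
  have hsecond := invFact_sub_one (2 * a - b + 1)
  have hsecond' := invFact_sub_one (2 * a - b)
  rw [show (2 * b + 3 - a : ℤ) - 1 = 2 * b + 2 - a by ring] at hfirst
  rw [show (2 * b + 2 - a : ℤ) - 1 = 2 * b - a + 1 by ring, hfirst] at hfirst'
  rw [show (2 * a - b + 1 : ℤ) - 1 = 2 * a - b by ring] at hsecond
  rw [hsecond] at hsecond'
  have hfact : ((a + b + 1).factorial : ℚ) = (a + b + 1) * (a + b).factorial := by
    rw [Nat.factorial_succ]
    push_cast
    ring
  simp only [evenCoeff, skewValue, skewCert]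
  rw [show a + (b + 1) = a + b + 1 by ring, show a + 1 + b = a + b + 1 by ring, hfact]
  push_cast at hfirst hfirst' hsecond hsecond' ⊢
  rw [show (2 * (b + 1) - a + 1 : ℤ) = 2 * b + 3 - a by ring,
    show (2 * a - (b + 1) + 1 : ℤ) = 2 * a - b by ring,
    show (2 * b + 3 - (a + 1) : ℤ) = 2 * b + 2 - a by ring,
    show (2 * (a + 1) - b - 1 : ℤ) = 2 * a - b + 1 by ring, hfirst, hfirst', hsecond, hsecond']
  linear_combination (-(b + 1) * (3 * b + 5) + (3 * b + 4) * (b + 3) * (a + 1) / 2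
      + (27 * b ^ 2 + 75 * b + 46) * (a + 1) ^ 2 / 2) * (a + b + 1) * (a + b).factorial *
      (2 * b + 3 - a) * invFact (2 * b + 3 - a) * invFact (2 * a - b + 1) * hyperTerm_succ ha

theorem skewSum_recurrence (k b : ℕ) :
    (b + 2) * (2 * k + 1 - b) * (2 * k + 2 + b) / 2 * skewSum k b +
      (k - b - 1) * (2 * k + 2 * b + 5) * (b + 1) * skewSum k (b + 1) = 0 := by
  have hstart : skewCert k b 0 = 0 := by
    rw [skewCert, invFact_of_neg (z := 2 * (0 : ℕ) - b - 1) (by lia), mul_zero]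
  have hend : skewCert k b (k + 1) = 0 := by
    rw [skewCert, hyperTerm_succ_self]
    ring
  rw [skewSum, skewSum, mul_sum, mul_sum, ← sum_add_distrib,
    sum_congr rfl fun a ha => skewCert_succ_sub b (Nat.lt_succ_iff.1 (mem_range.1 ha)),
    sum_range_sub, hstart, hend, sub_zero]

theorem skewSum_zero_right {k : ℕ} (hk : 0 < k) : skewSum k 0 = 0 := by
  have hvanish {a : ℕ} (ha : 2 ≤ a) : skewValue a 0 = 0 := by
    rw [skewValue, invFact_of_neg (z := 2 * (0 : ℕ) - a + 1) (by lia), mul_zero, zero_mul,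
      zero_mul]
  obtain ⟨k, rfl⟩ := Nat.exists_eq_succ_of_ne_zero hk.ne'
  rw [skewSum, ← sum_subset (range_subset_range.2 (by lia : 2 ≤ k.succ + 1)) fun a _ ha => by
    rw [hvanish (not_lt.1 fun h => ha (mem_range.2 h)), mul_zero]]
  norm_num [sum_range_succ, evenCoeff, hyperTerm, skewValue, invFact,
    show Int.toNat 3 = 3 from rfl, Nat.factorial]
  field_simp
  ring

theorem skewSum_eq_zero {k b : ℕ} (hb : b < k) : skewSum k b = 0 := by
  induction b with
  | zero => exact skewSum_zero_right hb
  | succ b ih =>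
    have hrec := skewSum_recurrence k b
    have hkb : (0 : ℚ) < k - b - 1 := by
      have : (b : ℚ) + 1 < k := by exact_mod_cast hb
      linarith
    rw [ih (by lia), mul_zero, zero_add] at hrec
    exact (mul_eq_zero.1 hrec).resolve_left (by positivity)

theorem skewSum_two_mul_add_one (k : ℕ) : skewSum k (2 * k + 1) = 2 * evenCoeff k k := by
  rw [skewSum, sum_eq_single_of_mem k (self_mem_range_succ k)]
  · rw [skewValue, show (2 * (2 * k + 1 : ℕ) - k + 1 : ℤ) = (3 * k + 3 : ℕ) by push_cast; ring,
      show (2 * k - (2 * k + 1 : ℕ) + 1 : ℤ) = (0 : ℕ) by push_cast; ring, invFact_natCast,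
      invFact_natCast, show k + (2 * k + 1) = 3 * k + 1 by ring, Nat.factorial_succ (3 * k + 2),
      Nat.factorial_succ (3 * k + 1)]
    push_cast
    field_simp
    ring
  · intro a ha hak
    rw [skewValue, invFact_of_neg (z := 2 * a - (2 * k + 1 : ℕ) + 1)
      (by have := mem_range.1 ha; lia), mul_zero, zero_mul, mul_zero]

theorem skewSum_self_eq {k i : ℕ} (hi : i ≤ k + 1) :
    skewSum k k = skewSum k (k + i) * ∏ j ∈ range i,
      ((j + 1) / (k + 1 - j) * ((k + j + 1) / (k + j + 2)) *
        (2 * (4 * k + 5 + 2 * j) / (3 * k + 2 + j)) : ℚ) := by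
  induction i with
  | zero => simp
  | succ i ih =>
    have hrec := skewSum_recurrence k (k + i)
    have hki : (0 : ℚ) < k + 1 - i := by
      rw [sub_pos]
      exact_mod_cast hi
    rw [ih (by lia), prod_range_succ, mul_comm (Finset.prod _ _), ← mul_assoc]
    congr 1
    rw [← add_assoc]
    push_cast at hrec
    field_simp
    linear_combination 2 * hrec

theorem prod_range_add_one_div (k : ℕ) :
    ∏ j ∈ range (k + 1), ((j + 1) / (k + 1 - j) : ℚ) = 1 := by
  have hreflect : ∏ j ∈ range (k + 1), (k + 1 - j : ℚ) = ∏ j ∈ range (k + 1), (j + 1 : ℚ) := by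
    rw [← prod_range_reflect]
    refine prod_congr rfl fun j hj => ?_
    rw [add_tsub_cancel_right, Nat.cast_sub (Nat.lt_succ_iff.1 (mem_range.1 hj))]
    ring
  rw [prod_div_distrib, hreflect, div_self (prod_ne_zero_iff.2 fun j _ => by positivity)]

theorem prod_range_add_div (k i : ℕ) :
    ∏ j ∈ range i, ((k + j + 1) / (k + j + 2) : ℚ) = (k + 1) / (k + i + 1) := by
  induction i with
  | zero =>
    rw [prod_range_zero, Nat.cast_zero, add_zero, div_self (by positivity)]
  | succ i ih =>
    rw [prod_range_succ, ih]
    push_cast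
    field_simp
    ring

theorem skewSum_self (k : ℕ) : skewSum k k = evenCoeff k k *
    ∏ j ∈ range (k + 1), (2 * (4 * k + 5 + 2 * j) / (3 * k + 2 + j) : ℚ) := by
  rw [skewSum_self_eq le_rfl, prod_mul_distrib, prod_mul_distrib, prod_range_add_one_div,
    prod_range_add_div, show k + (k + 1) = 2 * k + 1 by ring, skewSum_two_mul_add_one]
  push_cast
  field_simp
  ring

end HypergeometricSums

section EvaluationAtTwo

theorem hyperTerm_succ_left {k a : ℕ} (ha : a ≤ k) :
    hyperTerm (k + 1) a * ((k + 1 - a) * (2 * k + 3 + a) * (2 * k + 4 + a) * (2 * k + 1)) =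
      hyperTerm k a * ((2 * k + 3 + 2 * a) * (k + 2) * (2 * k + 2 - a) * (2 * k + 1 - a)) := by
  induction a with
  | zero =>
    simp only [hyperTerm, prod_range_zero]
    push_cast
    ring
  | succ a ih =>
    have hleft := hyperTerm_succ (k := k + 1) (a := a) (by lia)
    have hright := hyperTerm_succ (k := k) (a := a) (by lia)
    have hprev := ih (by lia)
    have hak : (a : ℚ) + 1 ≤ k := by exact_mod_cast ha
    have ha0 : (0 : ℚ) ≤ a := by positivity
    have hpos : (0 : ℚ) < 2 * k - a := by linarith
    have hpos₁ : (0 : ℚ) < 2 * (k + 1) - a := by linarith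
    have hpos₂ : (0 : ℚ) < k + 1 - a := by linarith
    have hpos₃ : (0 : ℚ) < 2 * k + 1 - a := by linarith
    push_cast at hleft ⊢
    rw [← eq_div_iff (by positivity)] at hprev hleft hright
    rw [hleft, hprev, hright]
    field_simp
    ring

/-- The value of `evenPoly k` at `1`, where `symPoly` takes the value `2`. -/
noncomputable def evenValue (k : ℕ) : ℚ := ∑ a ∈ range (k + 1), evenCoeff k a * 2 ^ a

theorem sum_range_evenValue {k n : ℕ} (hn : n ≤ k) :
    ∑ a ∈ range n, ((2 * k + 1) * (evenCoeff (k + 1) a * 2 ^ a) +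
      2 * (k + 2) * (evenCoeff k a * 2 ^ a)) =
    -((k + 2) * (4 * k + 5) * n / ((2 * k + 3 + n) * (k + 1 - n)) *
      ((2 * k + 1 - n) * hyperTerm k n) * 2 ^ n) := by
  induction n with
  | zero => simp
  | succ n ih =>
    have hleft := hyperTerm_succ_left (k := k) (a := n) (by lia)
    have hnk : (n : ℚ) + 1 ≤ k := by exact_mod_cast hn
    have hpos : (0 : ℚ) < k - n := by linarith
    have hpos' : (0 : ℚ) < k + 1 - n := by linarith
    have hsucc : (2 * k + 1 - (n + 1)) * hyperTerm k (n + 1) =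
        hyperTerm k n * (-2 * (2 * k + 3 + 2 * n) * (k - n)) / (2 * k + 3 + n) := by
      rw [eq_div_iff (by positivity)]
      linear_combination hyperTerm_succ (k := k) (a := n) (by lia)
    rw [← eq_div_iff (by positivity)] at hleft
    rw [sum_range_succ, ih (by lia), evenCoeff, evenCoeff, hleft, pow_succ]
    push_cast
    rw [hsucc, add_sub_add_right_eq_sub]
    field_simp
    ring

theorem evenValue_succ (k : ℕ) : (2 * k + 1) * evenValue (k + 1) = -2 * (k + 2) * evenValue k := by
  have hleft := hyperTerm_succ_left (k := k) (a := k) le_rfl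
  have hsucc := hyperTerm_succ (k := k + 1) (a := k) (by lia)
  have hsum := sum_range_evenValue (k := k) le_rfl
  rw [sum_add_distrib, ← mul_sum, ← mul_sum] at hsum
  rw [add_sub_cancel_left] at hleft hsum
  push_cast at hleft hsucc hsum
  rw [show (2 * (k + 1) : ℚ) - k = k + 2 by ring, add_sub_cancel_left] at hsucc
  rw [← eq_div_iff (by positivity)] at hleft hsucc
  rw [evenValue, evenValue, sum_range_succ, sum_range_succ, sum_range_succ]
  simp only [evenCoeff] at hsum ⊢
  rw [hsucc, hleft, pow_succ]
  push_cast
  rw [← sub_eq_zero] at hsum ⊢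
  rw [← hsum]
  field_simp
  ring

end EvaluationAtTwo

section ClosedForms

theorem prod_range_add_one_add (c n : ℕ) :
    ∏ i ∈ range n, ((c : ℚ) + 1 + i) = (c + n).factorial / c.factorial := by
  rw [eq_div_iff (by positivity), mul_comm, ← Nat.factorial_mul_ascFactorial,
    Nat.ascFactorial_eq_prod_range]
  push_cast
  rfl

theorem prod_range_add_sub (c n : ℕ) :
    ∏ i ∈ range n, ((c : ℚ) + n - i) = (c + n).factorial / c.factorial := by
  rw [← prod_range_add_one_add, ← prod_range_reflect]
  refine prod_congr rfl fun i hi => ?_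
  have hin := mem_range.1 hi
  rw [show n - 1 - i = n - (i + 1) by lia, Nat.cast_sub hin]
  push_cast
  ring

theorem prod_range_odd (c n : ℕ) :
    ∏ i ∈ range n, (2 * (c : ℚ) + 1 + 2 * i) =
      (2 * (c + n)).factorial * c.factorial /
        (2 ^ n * (c + n).factorial * (2 * c).factorial) := by
  induction n with
  | zero =>
    rw [add_zero, prod_range_zero, pow_zero, one_mul]
    field_simp
  | succ n ih =>
    rw [prod_range_succ, ih, show 2 * (c + (n + 1)) = 2 * (c + n) + 1 + 1 by ring,
      ← add_assoc c n 1, Nat.factorial_succ (2 * (c + n) + 1), Nat.factorial_succ (2 * (c + n)),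
      Nat.factorial_succ (c + n)]
    push_cast
    field_simp
    ring

/-- The ratio between the numbers of totally symmetric plane partitions in boxes of sides `m` and
`m - 1`. -/
noncomputable def growth (m : ℕ) : ℚ := ∏ i ∈ range m, ((i + 2 * m) / (2 * i + m) : ℚ)

theorem growth_two_mul_add_one (k : ℕ) :
    growth (2 * k + 1) = 2 ^ (2 * k + 1) * (3 * k + 1).factorial * (2 * k).factorial /
      ((4 * k + 1).factorial * k.factorial) := by
  have hnum := prod_range_add_one_add (4 * k + 1) (2 * k + 1)
  have hden := prod_range_odd k (2 * k + 1)
  rw [show 4 * k + 1 + (2 * k + 1) = 6 * k + 2 by ring] at hnum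
  rw [show 2 * (k + (2 * k + 1)) = 6 * k + 2 by ring,
    show k + (2 * k + 1) = 3 * k + 1 by ring] at hden
  rw [growth, prod_div_distrib,
    prod_congr rfl fun (i : ℕ) _ => show (i + 2 * (2 * k + 1 : ℕ) : ℚ) =
      (4 * k + 1 : ℕ) + 1 + i by push_cast; ring, hnum,
    prod_congr rfl fun (i : ℕ) _ => show (2 * i + (2 * k + 1 : ℕ) : ℚ) =
      2 * k + 1 + 2 * i by push_cast; ring, hden]
  field_simp

theorem growth_two_mul_add_two (k : ℕ) :
    growth (2 * k + 2) = (6 * k + 5).factorial * k.factorial /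
      (2 ^ (2 * k + 2) * (4 * k + 3).factorial * (3 * k + 2).factorial) := by
  have hnum := prod_range_add_one_add (4 * k + 3) (2 * k + 2)
  have hden := prod_range_add_one_add k (2 * k + 2)
  rw [show 4 * k + 3 + (2 * k + 2) = 6 * k + 5 by ring] at hnum
  rw [show k + (2 * k + 2) = 3 * k + 2 by ring] at hden
  rw [growth, prod_div_distrib,
    prod_congr rfl fun (i : ℕ) _ => show (i + 2 * (2 * k + 2 : ℕ) : ℚ) =
      (4 * k + 3 : ℕ) + 1 + i by push_cast; ring, hnum,
    prod_congr rfl fun (i : ℕ) _ => show (2 * i + (2 * k + 2 : ℕ) : ℚ) =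
      2 * (k + 1 + i) by push_cast; ring, prod_mul_distrib, hden, prod_const, card_range]
  field_simp

theorem prod_range_eq_growth_mul_growth (k : ℕ) :
    ∏ j ∈ range (k + 1), (2 * (4 * k + 5 + 2 * j) / (3 * k + 2 + j) : ℚ) =
      growth (2 * k + 1) * growth (2 * k + 2) := by
  have hnum := prod_range_odd (2 * k + 2) (k + 1)
  have hden := prod_range_add_one_add (3 * k + 1) (k + 1)
  rw [show 2 * (2 * k + 2 + (k + 1)) = 6 * k + 5 + 1 by ring,
    show 2 * k + 2 + (k + 1) = 3 * k + 2 + 1 by ring, show 2 * (2 * k + 2) = 4 * k + 3 + 1 by ring,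
    Nat.factorial_succ (6 * k + 5), Nat.factorial_succ (3 * k + 2), Nat.factorial_succ (4 * k + 3),
    Nat.factorial_succ (2 * k + 1), Nat.factorial_succ (2 * k)] at hnum
  rw [show 3 * k + 1 + (k + 1) = 4 * k + 1 + 1 by ring, Nat.factorial_succ (4 * k + 1)] at hden
  rw [growth_two_mul_add_one, growth_two_mul_add_two, prod_div_distrib, prod_mul_distrib,
    prod_const, card_range,
    prod_congr rfl fun (j : ℕ) _ => show (4 * k + 5 + 2 * j : ℚ) =
      2 * (2 * k + 2 : ℕ) + 1 + 2 * j by push_cast; ring, hnum,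
    prod_congr rfl fun (j : ℕ) _ => show (3 * k + 2 + j : ℚ) =
      (3 * k + 1 : ℕ) + 1 + j by push_cast; ring, hden]
  push_cast
  field_simp
  ring

theorem hyperTerm_self (k : ℕ) :
    hyperTerm k k = (-1) ^ k * (4 * k + 2).factorial * (k + 1).factorial * k.factorial *
      k.factorial / ((2 * k + 1).factorial * (3 * k + 2).factorial * (2 * k).factorial) := by
  have hodd := prod_range_odd (k + 1) k
  have hfact := prod_range_add_sub 0 k
  have hrising := prod_range_add_one_add (2 * k + 2) k
  have hfalling := prod_range_add_sub k k
  rw [show 2 * (k + 1 + k) = 4 * k + 2 by ring, show k + 1 + k = 2 * k + 1 by ring,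
    show 2 * (k + 1) = 2 * k + 2 by ring] at hodd
  rw [show 2 * k + 2 + k = 3 * k + 2 by ring] at hrising
  rw [← two_mul k] at hfalling
  simp only [zero_add, Nat.factorial_zero, Nat.cast_one, div_one, Nat.cast_zero] at hfact
  rw [hyperTerm, prod_div_distrib, prod_mul_distrib, prod_mul_distrib, prod_mul_distrib,
    prod_const, card_range, hfact,
    prod_congr rfl fun (j : ℕ) _ => show (2 * k + 3 + 2 * j : ℚ) =
      2 * (k + 1 : ℕ) + 1 + 2 * j by push_cast; ring, hodd,
    prod_congr rfl fun (j : ℕ) _ => show (2 * k + 3 + j : ℚ) =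
      (2 * k + 2 : ℕ) + 1 + j by push_cast; ring, hrising,
    prod_congr rfl fun (j : ℕ) _ => show (2 * k - j : ℚ) = k + k - j by ring, hfalling,
    neg_eq_neg_one_mul, mul_pow]
  field_simp

theorem evenValue_eq (k : ℕ) :
    evenValue k = 2 * (-1) ^ k * 2 ^ (2 * k) * (k + 1).factorial * k.factorial /
      (2 * k).factorial := by
  induction k with
  | zero => simp [evenValue, evenCoeff, hyperTerm]
  | succ k ih =>
    have hne : (2 * k + 1 : ℚ) ≠ 0 := by positivity
    refine mul_left_cancel₀ hne ?_
    rw [evenValue_succ, ih, show 2 * (k + 1) = 2 * k + 1 + 1 by ring,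
      Nat.factorial_succ (2 * k + 1), Nat.factorial_succ (2 * k), Nat.factorial_succ (k + 1),
      Nat.factorial_succ k]
    push_cast
    field_simp
    ring

theorem two_mul_evenValue (k : ℕ) : 2 * evenValue k = evenCoeff k k * growth (2 * k + 1) := by
  rw [evenValue_eq, evenCoeff, hyperTerm_self, growth_two_mul_add_one,
    Nat.factorial_succ (4 * k + 1), Nat.factorial_succ (3 * k + 1), Nat.factorial_succ (2 * k)]
  push_cast
  field_simp
  ring

end ClosedForms

section SkewFamily

/-- The even-indexed members of the reflection family `skewFamily`. -/
noncomputable def evenPoly (k : ℕ) : ℚ[X] :=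
  ∑ a ∈ range (k + 1), C (evenCoeff k a) * symPoly ^ a

/-- A reflection family whose even members are orthogonal, with respect to `skewForm`, to all odd
members of smaller index. -/
noncomputable def skewFamily (j : ℕ) : ℚ[X] :=
  if Even j then evenPoly (j / 2) else oddPoly (j / 2)

theorem skewFamily_two_mul (k : ℕ) : skewFamily (2 * k) = evenPoly k := by
  simp [skewFamily]

theorem skewFamily_two_mul_add_one (k : ℕ) : skewFamily (2 * k + 1) = oddPoly k := by
  rw [skewFamily, if_neg (by simp), show (2 * k + 1) / 2 = k by lia]

theorem symPoly_comp : symPoly.comp (-1 - X) = symPoly := by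
  simp only [symPoly, Polynomial.mul_comp, Polynomial.add_comp, Polynomial.X_comp,
    Polynomial.one_comp]
  ring

theorem natDegree_symPoly_pow_le (a : ℕ) : (symPoly ^ a).natDegree ≤ 2 * a := by
  have hsym : symPoly.natDegree ≤ 2 := by
    rw [symPoly]
    compute_degree
  exact (Polynomial.natDegree_pow_le_of_le a hsym).trans_eq (mul_comm a 2)

theorem coeff_symPoly_pow_two_mul (a : ℕ) : (symPoly ^ a).coeff (2 * a) = 1 := by
  rw [symPoly, mul_pow, two_mul, Polynomial.coeff_X_pow_mul, Polynomial.coeff_one_add_X_pow,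
    Nat.choose_self, Nat.cast_one]

theorem natDegree_evenPoly_le (k : ℕ) : (evenPoly k).natDegree ≤ 2 * k := by
  refine Polynomial.natDegree_sum_le_of_forall_le _ _ fun a ha => ?_
  have hak := mem_range.1 ha
  exact (Polynomial.natDegree_C_mul_le _ _).trans ((natDegree_symPoly_pow_le a).trans (by lia))

theorem coeff_evenPoly_two_mul (k : ℕ) : (evenPoly k).coeff (2 * k) = evenCoeff k k := by
  rw [evenPoly, Polynomial.finsetSum_coeff, sum_range_succ, Polynomial.coeff_C_mul,
    coeff_symPoly_pow_two_mul, mul_one, add_eq_right]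
  refine sum_eq_zero fun a ha => ?_
  have hak := mem_range.1 ha
  rw [Polynomial.coeff_C_mul, Polynomial.coeff_eq_zero_of_natDegree_lt
    ((natDegree_symPoly_pow_le a).trans_lt (by lia)), mul_zero]

theorem evenPoly_comp (k : ℕ) : (evenPoly k).comp (-1 - X) = evenPoly k := by
  simp only [evenPoly, Polynomial.sum_comp, Polynomial.mul_comp, Polynomial.C_comp,
    Polynomial.pow_comp, symPoly_comp]

theorem eval_one_evenPoly (k : ℕ) : (evenPoly k).eval 1 = evenValue k := by
  have hsym : symPoly.eval 1 = 2 := by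
    rw [symPoly, Polynomial.eval_mul, Polynomial.eval_add, Polynomial.eval_X, Polynomial.eval_one]
    norm_num
  simp only [evenPoly, evenValue, Polynomial.eval_finsetSum, Polynomial.eval_mul,
    Polynomial.eval_C, Polynomial.eval_pow, hsym]

theorem natDegree_symPoly_sub_two_le : (symPoly - 2).natDegree ≤ 2 := by
  rw [symPoly]
  compute_degree

theorem natDegree_oddFactor_le (b : ℕ) : (oddFactor b).natDegree ≤ 2 * b := by
  cases b with
  | zero => simp [oddFactor]
  | succ b =>
    exact Polynomial.natDegree_mul_le_of_le (natDegree_symPoly_pow_le b)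
      natDegree_symPoly_sub_two_le

theorem coeff_oddFactor_two_mul (b : ℕ) : (oddFactor b).coeff (2 * b) = 1 := by
  cases b with
  | zero => simp [oddFactor]
  | succ b =>
    have htwo : (symPoly - 2).coeff 2 = 1 := by
      simp [symPoly, Polynomial.coeff_X_mul, Polynomial.coeff_one, Polynomial.coeff_ofNat_succ]
    rw [oddFactor, mul_add, mul_one, Polynomial.coeff_mul_add_eq_of_natDegree_le
      (natDegree_symPoly_pow_le b) natDegree_symPoly_sub_two_le, coeff_symPoly_pow_two_mul, htwo,
      mul_one]

theorem oddFactor_comp (b : ℕ) : (oddFactor b).comp (-1 - X) = oddFactor b := by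
  cases b with
  | zero => exact Polynomial.one_comp
  | succ b =>
    simp only [oddFactor, Polynomial.mul_comp, Polynomial.pow_comp, Polynomial.sub_comp,
      Polynomial.ofNat_comp, symPoly_comp]
    rfl

theorem natDegree_two_mul_X_add_one_le : (2 * X + 1 : ℚ[X]).natDegree ≤ 1 := by
  compute_degree

theorem natDegree_oddPoly_le (b : ℕ) : (oddPoly b).natDegree ≤ 2 * b + 1 :=
  (Polynomial.natDegree_mul_le_of_le natDegree_two_mul_X_add_one_le
    (natDegree_oddFactor_le b)).trans_eq (add_comm _ _)

theorem coeff_oddPoly_two_mul_add_one (b : ℕ) : (oddPoly b).coeff (2 * b + 1) = 2 := by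
  rw [oddPoly, add_comm (2 * b) 1, Polynomial.coeff_mul_add_eq_of_natDegree_le
    natDegree_two_mul_X_add_one_le (natDegree_oddFactor_le b), coeff_oddFactor_two_mul, mul_one]
  simp [Polynomial.coeff_one]

theorem oddPoly_comp (b : ℕ) : (oddPoly b).comp (-1 - X) = -oddPoly b := by
  rw [oddPoly, Polynomial.mul_comp, oddFactor_comp, ← neg_mul]
  congr 1
  simp only [Polynomial.add_comp, Polynomial.mul_comp, Polynomial.X_comp, Polynomial.one_comp,
    Polynomial.ofNat_comp]
  ring

theorem isReflectionFamily_skewFamily : IsReflectionFamily skewFamily where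
  natDegree_le j := by
    obtain ⟨k, rfl | rfl⟩ := j.even_or_odd'
    · rw [skewFamily_two_mul]
      exact natDegree_evenPoly_le k
    · rw [skewFamily_two_mul_add_one]
      exact natDegree_oddPoly_le k
  comp_reflection j := by
    obtain ⟨k, rfl | rfl⟩ := j.even_or_odd'
    · rw [skewFamily_two_mul, evenPoly_comp, (even_two_mul k).neg_one_pow, one_smul]
    · rw [skewFamily_two_mul_add_one, oddPoly_comp, (odd_two_mul_add_one k).neg_one_pow,
        neg_one_smul]

theorem skewForm_skewFamily (a b : ℕ) :
    skewForm (skewFamily (2 * a)) (skewFamily (2 * b + 1)) = skewSum a b := by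
  rw [skewFamily_two_mul, skewFamily_two_mul_add_one, evenPoly, skewForm_sum_C_mul_left, skewSum]
  simp only [skewForm_symPoly_pow_oddPoly]

theorem skewForm_skewFamily_eq_zero (a b : ℕ) (hba : b < a) :
    skewForm (skewFamily (2 * a)) (skewFamily (2 * b + 1)) = 0 := by
  rw [skewForm_skewFamily, skewSum_eq_zero hba]

theorem skewForm_skewFamily_self (k : ℕ) :
    skewForm (skewFamily (2 * k)) (skewFamily (2 * k + 1)) =
      evenCoeff k k * (growth (2 * k + 1) * growth (2 * k + 2)) := by
  rw [skewForm_skewFamily, skewSum_self, prod_range_eq_growth_mul_growth]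

theorem prod_range_coeff_skewFamily (k : ℕ) :
    ∏ j ∈ range (2 * k), (skewFamily j).coeff j = ∏ b ∈ range k, 2 * evenCoeff b b := by
  rw [prod_range_two_mul]
  refine prod_congr rfl fun b _ => ?_
  rw [skewFamily_two_mul, skewFamily_two_mul_add_one, coeff_evenPoly_two_mul,
    coeff_oddPoly_two_mul_add_one, mul_comm]

theorem prod_two_mul_evenCoeff_ne_zero (k : ℕ) : ∏ b ∈ range k, 2 * evenCoeff b b ≠ 0 :=
  prod_ne_zero_iff.2 fun b _ => mul_ne_zero two_ne_zero (evenCoeff_self_ne_zero b)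

end SkewFamily

section Counting

theorem card_partialIdeals_two_mul (k : ℕ) : ((partialIdeals (2 * k) 0).card : ℚ) =
    ∏ b ∈ range k, growth (2 * b + 1) * growth (2 * b + 2) := by
  have heven := card_partialIdeals_even isReflectionFamily_skewFamily
    skewForm_skewFamily_eq_zero k
  simp only [skewForm_skewFamily_self, ← mul_assoc (2 : ℚ)] at heven
  rw [prod_range_coeff_skewFamily, mul_comm,
    prod_mul_distrib (f := fun b => 2 * evenCoeff b b)] at heven
  exact mul_left_cancel₀ (prod_two_mul_evenCoeff_ne_zero k) heven

theorem card_partialIdeals_two_mul_add_one (k : ℕ) : ((partialIdeals (2 * k + 1) 0).card : ℚ) =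
    (partialIdeals (2 * k) 0).card * growth (2 * k + 1) := by
  have heven := card_partialIdeals_even isReflectionFamily_skewFamily
    skewForm_skewFamily_eq_zero k
  have hodd := card_partialIdeals_odd isReflectionFamily_skewFamily
    skewForm_skewFamily_eq_zero k
  rw [← heven, prod_range_succ, prod_range_coeff_skewFamily, skewFamily_two_mul,
    coeff_evenPoly_two_mul, eval_one_evenPoly, two_mul_evenValue] at hodd
  refine mul_right_cancel₀
    (mul_ne_zero (prod_two_mul_evenCoeff_ne_zero k) (evenCoeff_self_ne_zero k)) (hodd.trans ?_)
  ring

theorem card_partialIdeals_succ (m : ℕ) : ((partialIdeals (m + 1) 0).card : ℚ) =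
    (partialIdeals m 0).card * growth (m + 1) := by
  obtain ⟨k, rfl | rfl⟩ := m.even_or_odd'
  · exact card_partialIdeals_two_mul_add_one k
  · rw [card_partialIdeals_two_mul_add_one, show 2 * k + 1 + 1 = 2 * (k + 1) by ring,
      card_partialIdeals_two_mul, card_partialIdeals_two_mul, prod_range_succ, mul_assoc]
    rfl

theorem prod_tripleIdx_succ {M : Type*} [CommMonoid M] (m : ℕ) (f : ℕ → ℕ → ℕ → M) :
    ∏ t ∈ tripleIdx (m + 1), f t.1 t.2.1 t.2.2 = (∏ t ∈ tripleIdx m, f t.1 t.2.1 t.2.2) *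
      ∏ i ∈ Icc 1 (m + 1), ∏ j ∈ Icc i (m + 1), f i j (m + 1) := by
  rw [← prod_filter_mul_prod_filter_not (tripleIdx (m + 1)) fun t => t.2.2 ≤ m]
  congr 1
  · refine prod_congr ?_ fun _ _ => rfl
    ext ⟨i, j, l⟩
    simp only [tripleIdx, mem_filter, mem_product, mem_Icc]
    lia
  · rw [prod_sigma']
    refine prod_bij' (fun t _ => ⟨t.1, t.2.1⟩) (fun p _ => (p.1, p.2, m + 1)) ?_ ?_ ?_ ?_ ?_
    · rintro ⟨i, j, l⟩
      simp only [tripleIdx, mem_filter, mem_product, mem_Icc, mem_sigma]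
      lia
    · rintro ⟨i, j⟩
      simp only [tripleIdx, mem_filter, mem_product, mem_Icc, mem_sigma]
      lia
    · rintro ⟨i, j, l⟩
      simp only [tripleIdx, mem_filter, mem_product, mem_Icc, Prod.mk.injEq, true_and]
      lia
    · rintro ⟨i, j⟩ _
      rfl
    · rintro ⟨i, j, l⟩ h
      simp only [tripleIdx, mem_filter, mem_product, mem_Icc] at h
      rw [show l = m + 1 by lia]

theorem prod_Icc_add_one_mul {R : Type*} [CommRing R] (i n : ℕ) (c : R) :
    (∏ j ∈ Icc i (i + n), (c + j + 1)) * (c + i) =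
      (∏ j ∈ Icc i (i + n), (c + j)) * (c + i + n + 1) := by
  induction n with
  | zero =>
    rw [add_zero, Icc_self, prod_singleton, prod_singleton, Nat.cast_zero]
    ring
  | succ n ih =>
    rw [← add_assoc, prod_Icc_succ_top (by lia), prod_Icc_succ_top (by lia)]
    push_cast
    linear_combination (c + i + n + 1 + 1) * ih

theorem growth_succ_eq_prod_Icc (m : ℕ) :
    growth (m + 1) = ∏ i ∈ Icc 1 (m + 1), ((i + 2 * m + 1) / (2 * i + m - 1) : ℚ) := by
  rw [growth, ← Ico_add_one_right_eq_Icc, prod_Ico_eq_prod_range, Nat.add_sub_cancel]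
  refine prod_congr rfl fun i _ => ?_
  push_cast
  ring_nf

theorem prod_Icc_sub_one {m i : ℕ} (hi : 1 ≤ i) (him : i ≤ m + 1) :
    ∏ j ∈ Icc i (m + 1), (i + j + (m + 1 : ℕ) - 1 : ℚ) =
      (i + 2 * m + 1) / (2 * i + m - 1) * ∏ j ∈ Icc i (m + 1), (i + j + (m + 1 : ℕ) - 2 : ℚ) := by
  obtain ⟨n, hn⟩ := Nat.exists_eq_add_of_le him
  have hn' : (m : ℚ) + 1 = i + n := by exact_mod_cast hn
  have hpos : (0 : ℚ) < 2 * i + m - 1 := by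
    have : (1 : ℚ) ≤ i := by exact_mod_cast hi
    linarith [m.cast_nonneg (α := ℚ)]
  have htel := prod_Icc_add_one_mul i n (i + m - 1 : ℚ)
  rw [← hn, show (i + m - 1 + i : ℚ) = 2 * i + m - 1 by ring,
    show (2 * i + m - 1 + n + 1 : ℚ) = i + 2 * m + 1 by linear_combination -hn',
    mul_comm (∏ j ∈ Icc i (m + 1), (i + m - 1 + j : ℚ))] at htel
  rw [div_mul_eq_mul_div, eq_div_iff hpos.ne']
  convert htel using 3 with j _ j
  · push_cast
    ring
  · push_cast
    ring

theorem prod_Icc_eq_growth_mul (m : ℕ) :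
    (∏ i ∈ Icc 1 (m + 1), ∏ j ∈ Icc i (m + 1), (i + j + (m + 1 : ℕ) - 1 : ℚ)) =
      growth (m + 1) *
        ∏ i ∈ Icc 1 (m + 1), ∏ j ∈ Icc i (m + 1), (i + j + (m + 1 : ℕ) - 2 : ℚ) := by
  rw [growth_succ_eq_prod_Icc, ← prod_mul_distrib]
  exact prod_congr rfl fun i hi => prod_Icc_sub_one (mem_Icc.1 hi).1 (mem_Icc.1 hi).2

theorem cast_card_partialIdeals_mul_prod (m : ℕ) :
    ((partialIdeals m 0).card : ℚ) * ∏ t ∈ tripleIdx m, (t.1 + t.2.1 + t.2.2 - 2 : ℚ) =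
      ∏ t ∈ tripleIdx m, (t.1 + t.2.1 + t.2.2 - 1 : ℚ) := by
  induction m with
  | zero =>
    have hcard := card_partialIdeals_two_mul 0
    rw [mul_zero, prod_range_zero] at hcard
    rw [hcard]
    simp [tripleIdx]
  | succ m ih =>
    rw [prod_tripleIdx_succ m fun i j l => (i + j + l - 2 : ℚ),
      prod_tripleIdx_succ m fun i j l => (i + j + l - 1 : ℚ), prod_Icc_eq_growth_mul,
      card_partialIdeals_succ, ← ih]
    ring

theorem two_le_of_mem_tripleIdx {m : ℕ} {t : ℕ × ℕ × ℕ} (ht : t ∈ tripleIdx m) :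
    2 ≤ t.1 + t.2.1 + t.2.2 := by
  simp only [tripleIdx, mem_filter, mem_product, mem_Icc] at ht
  lia

theorem cast_prod_tripleIdx_sub {m c : ℕ} (hc : c ≤ 2) :
    ((∏ t ∈ tripleIdx m, (t.1 + t.2.1 + t.2.2 - c) : ℕ) : ℚ) =
      ∏ t ∈ tripleIdx m, (t.1 + t.2.1 + t.2.2 - c : ℚ) := by
  rw [Nat.cast_prod]
  refine prod_congr rfl fun t ht => ?_
  rw [Nat.cast_sub (hc.trans (two_le_of_mem_tripleIdx ht)), Nat.cast_add, Nat.cast_add]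

theorem card_partialIdeals_mul_prod (m : ℕ) :
    (partialIdeals m 0).card * ∏ t ∈ tripleIdx m, (t.1 + t.2.1 + t.2.2 - 2) =
      ∏ t ∈ tripleIdx m, (t.1 + t.2.1 + t.2.2 - 1) := by
  refine Nat.cast_injective (R := ℚ) ?_
  rw [Nat.cast_mul, cast_prod_tripleIdx_sub le_rfl, cast_prod_tripleIdx_sub one_le_two]
  exact_mod_cast cast_card_partialIdeals_mul_prod m

end Counting

end TetrahedralPoset

/-- The number of order ideals of the full tetrahedral poset `T_n` satisfies
`|J(T_n)| · ∏_{1≤i≤j≤k≤n-1} (i+j+k-2) = ∏_{1≤i≤j≤k≤n-1} (i+j+k-1)`;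
equivalently, `|J(T_n)|` is the number of totally symmetric plane partitions in
an `(n-1)×(n-1)×(n-1)` box. -/
theorem stmt18 (n : ℕ) (hn : 1 ≤ n) :
    ((ideals3 {vr, vg, vy, vb, vo, vs} (V3 n)).card *
        ∏ t ∈ tripleIdx (n - 1), (t.1 + t.2.1 + t.2.2 - 2) =
      ∏ t ∈ tripleIdx (n - 1), (t.1 + t.2.1 + t.2.2 - 1)) ∧
    (ideals3 {vr, vg, vy, vb, vo, vs} (V3 n)).card =
      Nat.card {π : Set (ℕ × ℕ × ℕ) // IsTSPP (n - 1) π} := by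
  rw [TetrahedralPoset.card_ideals3, TetrahedralPoset.card_tspp]
  exact ⟨TetrahedralPoset.card_partialIdeals_mul_prod (n - 1), rfl⟩
end

section
/- For every integer n ≥ 1, the number of totally symmetric self-complementary plane partitions inside a 2n×2n×2n box equals the number of tournaments on vertices 1,…,n satisfying the following condition on upsets: for all 1 ≤ u < v ≤ n, the number of w with u ≤ w ≤ v−2 such that the game between w and v−1 is an upset is at most the number of w with u ≤ w ≤ v−1 such that the game between w and v is an upset. -/
open scoped Classical

/-- A tournament on vertices `1,…,n`, recorded by its upsets: `U i j = true` means
the game between `i` and `j` (for `1 ≤ i < j ≤ n`) is an upset; `U` is normalized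
to be `false` outside this index range. -/
def IsTournament (n : ℕ) (U : ℕ → ℕ → Bool) : Prop :=
  ∀ i j, ¬(1 ≤ i ∧ i < j ∧ j ≤ n) → U i j = false

/-- The upset condition: for all `1 ≤ u < v ≤ n`, the number of `w` with
`u ≤ w ≤ v-2` such that the game between `w` and `v-1` is an upset is at most the
number of `w` with `u ≤ w ≤ v-1` such that the game between `w` and `v` is an
upset. -/
def UpsetCond (n : ℕ) (U : ℕ → ℕ → Bool) : Prop :=
  ∀ u v, 1 ≤ u → u < v → v ≤ n →
    ((Finset.Icc u (v - 2)).filter (fun w => U w (v - 1) = true)).card ≤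
      ((Finset.Icc u (v - 1)).filter (fun w => U w v = true)).card

/-! Let `h u v` be the number of upsets in the games between `v` and the vertices strictly between
`u` and `v`. The tournament can be read off `h`, and the upset condition says that `h u v` is
nondecreasing in `v`. The same arrays encode the plane partitions: among the cells
`(j - d, j, n + v)` with `d < j ≤ n`, exactly the last `h d v` are missing. These cells determine a
totally symmetric self-complementary plane partition, and a cell with coordinates `a ≤ b ≤ c`
belongs to it if and only if
`b + h (b - a) (c - n) ≤ n + h (c - b) (n + 1 - a)`.
Complementation exchanges the two values of `h`, which makes self-complementarity evident. At most
one of the two is nonzero, and with either of them dropped the inequality is monotone in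
`(a, b, c)`. -/

/-- The arrays of partial upset counts of tournaments satisfying the upset condition; see
`upsetCount`. The same arrays count the cells missing from plane partitions; see `missingCount`. -/
structure IsCountArray (n : ℕ) (h : ℕ → ℕ → ℕ) : Prop where
  eq_zero_of_le : ∀ u v, v ≤ u + 1 → h u v = 0
  eq_zero_of_lt : ∀ u v, n < v → h u v = 0
  antitone : ∀ v, Antitone fun u => h u v
  monotone_add : ∀ v, Monotone fun u => u + h u v
  monotoneOn : ∀ u, MonotoneOn (h u) (Set.Iic n)

section CountArray

variable {n : ℕ} {h : ℕ → ℕ → ℕ}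

lemma IsCountArray.le_sub (hh : IsCountArray n h) (u v : ℕ) : h u v ≤ v - (u + 1) := by
  rcases le_total v (u + 1) with hvu | huv
  · rw [hh.eq_zero_of_le u v hvu]
    exact zero_le
  · have hmono : u + h u v ≤ v - 1 + h (v - 1) v := hh.monotone_add v (by omega)
    rw [hh.eq_zero_of_le (v - 1) v (by omega)] at hmono
    omega

lemma IsCountArray.add_le_add (hh : IsCountArray n h) {a b c a' b' c' : ℕ} (hab : a ≤ b)
    (ha : a ≤ a') (hb : b ≤ b') (hc : c ≤ c') (hc' : c' ≤ n) :
    b + h (b - a) c ≤ b' + h (b' - a') c' := by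
  have h₁ : h (b - a) c ≤ h (b - a) c' := hh.monotoneOn _ (hc.trans hc') hc' hc
  have h₂ : b - a + h (b - a) c' ≤ b' - a + h (b' - a) c' := hh.monotone_add c' (by omega)
  have h₃ : h (b' - a) c' ≤ h (b' - a') c' := hh.antitone c' (by omega)
  omega

end CountArray

/-! ### Tournaments -/

section Tournament

variable {n : ℕ} {U : ℕ → ℕ → Bool} {h : ℕ → ℕ → ℕ}

/-- The number of upsets in the games between `v` and the vertices `w` with `u < w < v`. Leaving
out `u` itself makes `u = 0` the count over all lower-numbered vertices. -/
def upsetCount (U : ℕ → ℕ → Bool) (u v : ℕ) : ℕ :=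
  ((Finset.Ioo u v).filter fun w => U w v = true).card

lemma upsetCount_eq_zero_of_le (U : ℕ → ℕ → Bool) {u v : ℕ} (hvu : v ≤ u + 1) :
    upsetCount U u v = 0 := by
  have hempty : Finset.Ioo u v = ∅ := by ext; simp; omega
  rw [upsetCount, hempty, Finset.filter_empty, Finset.card_empty]

lemma upsetCount_eq_upsetCount_succ_add (U : ℕ → ℕ → Bool) {u v : ℕ} (huv : u + 1 < v) :
    upsetCount U u v = upsetCount U (u + 1) v + (U (u + 1) v).toNat := by
  have hinsert : Finset.Ioo u v = insert (u + 1) (Finset.Ioo (u + 1) v) := by ext; simp; omega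
  rw [upsetCount, upsetCount, hinsert, Finset.filter_insert]
  cases hU : U (u + 1) v <;> simp

lemma upsetCond_iff_upsetCount_le :
    UpsetCond n U ↔ ∀ u v, u < v → v + 1 ≤ n → upsetCount U u v ≤ upsetCount U u (v + 1) := by
  have hIcc_pred : ∀ u v, Finset.Icc (u + 1) (v + 1 - 2) = Finset.Ioo u v := fun u v => by
    ext; rw [Finset.mem_Icc, Finset.mem_Ioo]; omega
  have hIcc : ∀ u v, Finset.Icc (u + 1) v = Finset.Ioo u (v + 1) := fun u v => by
    ext; rw [Finset.mem_Icc, Finset.mem_Ioo]; omega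
  constructor
  · intro hU u v huv hv
    simpa only [upsetCount, hIcc_pred, hIcc, Nat.add_sub_cancel] using
      hU (u + 1) (v + 1) (by omega) (by omega) hv
  · intro hU u v hu huv hv
    obtain ⟨u, rfl⟩ := Nat.exists_eq_add_of_le' hu
    obtain ⟨v, rfl⟩ := Nat.exists_eq_add_of_le' (hu.trans huv.le)
    simpa only [upsetCount, hIcc_pred, hIcc, Nat.add_sub_cancel] using hU u v (by omega) hv

lemma isCountArray_upsetCount (hT : IsTournament n U) (hU : UpsetCond n U) :
    IsCountArray n (upsetCount U) where
  eq_zero_of_le _ _ hvu := upsetCount_eq_zero_of_le U hvu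
  eq_zero_of_lt u v hv := by
    have hfalse : ∀ w, U w v = false := fun w => hT w v (by omega)
    simp only [upsetCount, hfalse, Bool.false_eq_true, Finset.filter_false, Finset.card_empty]
  antitone v u u' huu' :=
    Finset.card_le_card (Finset.filter_subset_filter _ (Finset.Ioo_subset_Ioo_left huu'))
  monotone_add v := monotone_nat_of_le_succ fun u => by
    rcases le_or_gt v (u + 1) with hvu | huv
    · rw [upsetCount_eq_zero_of_le U hvu]
      omega
    · have := Bool.toNat_le (U (u + 1) v)
      rw [upsetCount_eq_upsetCount_succ_add U huv]
      omega
  monotoneOn u := monotoneOn_of_le_add_one Set.ordConnected_Iic fun v _ _ hv => by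
    rcases le_or_gt v u with hvu | huv
    · rw [upsetCount_eq_zero_of_le U (by omega)]
      exact zero_le
    · exact upsetCond_iff_upsetCount_le.1 hU u v huv hv

/-- The tournament with partial upset counts `h`: the game between `u` and `v` is an upset when
vertex `u` contributes to the count. -/
def descentTournament (h : ℕ → ℕ → ℕ) (u v : ℕ) : Bool :=
  decide (h u v < h (u - 1) v)

lemma isTournament_descentTournament (hh : IsCountArray n h) :
    IsTournament n (descentTournament h) := by
  intro u v huv
  rw [descentTournament, decide_eq_false_iff_not, not_lt]
  by_cases hv : n < v
  · rw [hh.eq_zero_of_lt _ v hv]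
    exact zero_le
  rcases Nat.eq_zero_or_pos u with rfl | hu
  · exact le_rfl
  · rw [hh.eq_zero_of_le (u - 1) v (by omega)]
    exact zero_le

lemma upsetCount_descentTournament (hh : IsCountArray n h) :
    upsetCount (descentTournament h) = h := by
  funext u v
  rcases le_total v u with hvu | huv
  · rw [upsetCount_eq_zero_of_le _ (by omega), hh.eq_zero_of_le u v (by omega)]
  induction huv using Nat.decreasingInduction with
  | self => rw [upsetCount_eq_zero_of_le _ (by omega), hh.eq_zero_of_le v v (by omega)]
  | of_succ u huv ih =>
    rcases Nat.lt_or_eq_of_le (Nat.succ_le_of_lt huv) with huv | rfl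
    · have hanti : h (u + 1) v ≤ h u v := hh.antitone v (by omega)
      have hstep : u + h u v ≤ u + 1 + h (u + 1) v := hh.monotone_add v (by omega)
      rw [upsetCount_eq_upsetCount_succ_add _ huv, ih, descentTournament, Nat.add_sub_cancel]
      by_cases hlt : h (u + 1) v < h u v <;> simp only [hlt, decide_true, decide_false,
        Bool.toNat_true, Bool.toNat_false] <;> omega
    · rw [upsetCount_eq_zero_of_le _ le_rfl, hh.eq_zero_of_le u _ le_rfl]

lemma upsetCond_descentTournament (hh : IsCountArray n h) :
    UpsetCond n (descentTournament h) := by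
  rw [upsetCond_iff_upsetCount_le, upsetCount_descentTournament hh]
  exact fun u v _ hv => hh.monotoneOn u (Nat.le_of_succ_le hv) hv v.le_succ

lemma descentTournament_upsetCount (hT : IsTournament n U) (hU : UpsetCond n U) :
    descentTournament (upsetCount U) = U := by
  funext u v
  by_cases huv : 1 ≤ u ∧ u < v ∧ v ≤ n
  · obtain ⟨u, rfl⟩ := Nat.exists_eq_add_of_le' huv.1
    rw [descentTournament, Nat.add_sub_cancel, upsetCount_eq_upsetCount_succ_add U huv.2.1]
    cases U (u + 1) v <;> simp
  · rw [hT u v huv, isTournament_descentTournament (isCountArray_upsetCount hT hU) u v huv]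

/-- Tournaments satisfying the upset condition correspond to their partial upset counts. -/
def tournamentEquiv (n : ℕ) :
    {U : ℕ → ℕ → Bool // IsTournament n U ∧ UpsetCond n U} ≃
      {h : ℕ → ℕ → ℕ // IsCountArray n h} where
  toFun U := ⟨upsetCount U.1, isCountArray_upsetCount U.2.1 U.2.2⟩
  invFun h := ⟨descentTournament h.1, isTournament_descentTournament h.2,
    upsetCond_descentTournament h.2⟩
  left_inv U := Subtype.ext (descentTournament_upsetCount U.2.1 U.2.2)
  right_inv h := Subtype.ext (upsetCount_descentTournament h.2)

end Tournament

/-! ### Totally symmetric sets -/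

section TotallySymmetric

variable {π ρ : Set (ℕ × ℕ × ℕ)}

/-- The median of three numbers. Together with the minimum and the maximum it gives the sorted
form of a triple. -/
def med (i j k : ℕ) : ℕ :=
  max (min i j) (min (max i j) k)

lemma med_of_le_of_le {i j k : ℕ} (hij : i ≤ j) (hjk : j ≤ k) : med i j k = j := by
  unfold med
  omega

lemma min_le_med (i j k : ℕ) : min i (min j k) ≤ med i j k := by
  unfold med
  omega

lemma med_le_max (i j k : ℕ) : med i j k ≤ max i (max j k) := by
  unfold med
  omega

lemma med_mono {i j k i' j' k' : ℕ} (hi : i ≤ i') (hj : j ≤ j') (hk : k ≤ k') :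
    med i j k ≤ med i' j' k' :=
  max_le_max (min_le_min hi hj) (min_le_min (max_le_max hi hj) hk)

lemma med_swap_left (i j k : ℕ) : med j i k = med i j k := by
  rw [med, med, min_comm, max_comm j]

lemma med_swap_right (i j k : ℕ) : med i k j = med i j k := by
  unfold med
  omega

lemma med_sub_left (m i j k : ℕ) : med (m - i) (m - j) (m - k) = m - med i j k := by
  unfold med
  omega

/-- The set of triples whose sorted form satisfies `P`. -/
def symmSet (P : ℕ → ℕ → ℕ → Prop) : Set (ℕ × ℕ × ℕ) :=
  {p | P (min p.1 (min p.2.1 p.2.2)) (med p.1 p.2.1 p.2.2) (max p.1 (max p.2.1 p.2.2))}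

lemma mem_symmSet {P : ℕ → ℕ → ℕ → Prop} {i j k : ℕ} :
    (i, j, k) ∈ symmSet P ↔ P (min i (min j k)) (med i j k) (max i (max j k)) :=
  Iff.rfl

lemma mem_symmSet_of_le_of_le {P : ℕ → ℕ → ℕ → Prop} {i j k : ℕ} (hij : i ≤ j) (hjk : j ≤ k) :
    (i, j, k) ∈ symmSet P ↔ P i j k := by
  rw [mem_symmSet, med_of_le_of_le hij hjk, min_eq_left hjk, min_eq_left hij, max_eq_right hjk,
    max_eq_right (hij.trans hjk)]

lemma isTS_symmSet (P : ℕ → ℕ → ℕ → Prop) : IsTS (symmSet P) := by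
  have swap_left : ∀ i j k, (i, j, k) ∈ symmSet P → (j, i, k) ∈ symmSet P := fun i j k hp => by
    rwa [mem_symmSet, med_swap_left, min_left_comm, max_left_comm]
  have swap_right : ∀ i j k, (i, j, k) ∈ symmSet P → (i, k, j) ∈ symmSet P := fun i j k hp => by
    rwa [mem_symmSet, med_swap_right, min_comm k, max_comm k]
  exact fun i j k hp => ⟨swap_right _ _ _ hp, swap_left _ _ _ hp,
    swap_right _ _ _ (swap_left _ _ _ hp), swap_left _ _ _ (swap_right _ _ _ hp),
    swap_left _ _ _ (swap_right _ _ _ (swap_left _ _ _ hp))⟩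

lemma IsTS.symmSet_eq (hπ : IsTS π) : symmSet (fun a b c => (a, b, c) ∈ π) = π := by
  ext ⟨i, j, k⟩
  rw [mem_symmSet]
  have hsort := hπ i j k
  have hunsort := hπ (min i (min j k)) (med i j k) (max i (max j k))
  rcases le_total i j with hij | hij <;> rcases le_total j k with hjk | hjk <;>
    rcases le_total i k with hik | hik <;> grind [med]

lemma IsTS.eq_of_sorted (hπ : IsTS π) (hρ : IsTS ρ)
    (hsorted : ∀ i j k, i ≤ j → j ≤ k → ((i, j, k) ∈ π ↔ (i, j, k) ∈ ρ)) : π = ρ := by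
  rw [← hπ.symmSet_eq, ← hρ.symmSet_eq]
  ext ⟨i, j, k⟩
  exact hsorted _ _ _ (min_le_med i j k) (med_le_max i j k)

lemma IsTS.mem_reverse (hπ : IsTS π) {i j k : ℕ} : (i, j, k) ∈ π ↔ (k, j, i) ∈ π :=
  ⟨fun hp => (hπ _ _ _ hp).2.2.2.2, fun hp => (hπ _ _ _ hp).2.2.2.2⟩

end TotallySymmetric

/-! ### Plane partitions -/

section PlanePartition

variable {m n : ℕ} {π ρ : Set (ℕ × ℕ × ℕ)} {h : ℕ → ℕ → ℕ}

/-- The condition for a cell with coordinates `a ≤ b ≤ c` to belong to the plane partition encoded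
by the count array `h`. Truncated subtraction makes the left count zero if `c ≤ n` and the right
count zero if `n < a`. -/
def IsSortedCell (n : ℕ) (h : ℕ → ℕ → ℕ) (a b c : ℕ) : Prop :=
  1 ≤ a ∧ c ≤ 2 * n ∧ b + h (b - a) (c - n) ≤ n + h (c - b) (n + 1 - a)

lemma isSortedCell_compl_iff {a b c : ℕ} (ha : 1 ≤ a) (hab : a ≤ b) (hbc : b ≤ c)
    (hc : c ≤ 2 * n) :
    IsSortedCell n h (2 * n + 1 - c) (2 * n + 1 - b) (2 * n + 1 - a) ↔
      ¬IsSortedCell n h a b c := by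
  have hba : 2 * n + 1 - a - (2 * n + 1 - b) = b - a := by omega
  have hcb : 2 * n + 1 - b - (2 * n + 1 - c) = c - b := by omega
  have hna : 2 * n + 1 - a - n = n + 1 - a := by omega
  have hnc : n + 1 - (2 * n + 1 - c) = c - n := by omega
  rw [IsSortedCell, IsSortedCell, hba, hcb, hna, hnc]
  omega

lemma IsSortedCell.of_le (hh : IsCountArray n h) {a b c a' b' c' : ℕ}
    (hp : IsSortedCell n h a' b' c') (ha : 1 ≤ a) (hab : a ≤ b) (hbc' : b' ≤ c')
    (haa' : a ≤ a') (hbb' : b ≤ b') (hcc' : c ≤ c') : IsSortedCell n h a b c := by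
  obtain ⟨_, hc', hle⟩ := hp
  refine ⟨ha, hcc'.trans hc', ?_⟩
  have hleft : b + h (b - a) (c - n) ≤ b' + h (b' - a') (c' - n) :=
    hh.add_le_add hab haa' hbb' (by omega) (by omega)
  have hright : b + h (c' - b') (n + 1 - a') ≤ b' + h (c - b) (n + 1 - a) := by
    have hcompl := hh.add_le_add (a := 2 * n + 1 - c') (b := 2 * n + 1 - b')
      (a' := 2 * n + 1 - c) (b' := 2 * n + 1 - b) (c := n + 1 - a') (c' := n + 1 - a)
      (by omega) (by omega) (by omega) (by omega) (by omega)
    rw [show 2 * n + 1 - b' - (2 * n + 1 - c') = c' - b' by omega,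
      show 2 * n + 1 - b - (2 * n + 1 - c) = c - b by omega] at hcompl
    omega
  -- If one of these two counts is zero, then `hleft` or `hright` suffices. Otherwise the bounds
  -- below give `b + h (b - a) (c - n) < a + c - n ≤ a' + c' - n ≤ n`.
  have hbound := hh.le_sub (b - a) (c - n)
  have hbound' := hh.le_sub (c' - b') (n + 1 - a')
  omega

lemma isSortedCell_iff_of_le (hh : IsCountArray n h) {a b c : ℕ} (ha : 1 ≤ a) (hb : b ≤ n)
    (hc : c ≤ 2 * n) : IsSortedCell n h a b c ↔ b + h (b - a) (c - n) ≤ n := by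
  have hleft := hh.le_sub (b - a) (c - n)
  have hright := hh.le_sub (c - b) (n + 1 - a)
  unfold IsSortedCell
  omega

lemma isTSSCPP_symmSet_isSortedCell (hh : IsCountArray n h) :
    IsTSSCPP n (symmSet (IsSortedCell n h)) := by
  refine ⟨⟨?_, ?_⟩, isTS_symmSet _, ?_⟩
  · rintro ⟨i, j, k⟩ ⟨hmin, hmax, -⟩
    dsimp only at hmin hmax ⊢
    omega
  · intro i j k i' j' k' hp hi hi' hj hj' hk hk'
    exact IsSortedCell.of_le hh hp (le_min hi (le_min hj hk)) (min_le_med _ _ _)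
      (med_le_max _ _ _) (min_le_min hi' (min_le_min hj' hk')) (med_mono hi' hj' hk')
      (max_le_max hi' (max_le_max hj' hk'))
  · intro i j k hi hi' hj hj' hk hk'
    have hmin : min (2 * n + 1 - i) (min (2 * n + 1 - j) (2 * n + 1 - k)) =
        2 * n + 1 - max i (max j k) := by omega
    have hmax : max (2 * n + 1 - i) (max (2 * n + 1 - j) (2 * n + 1 - k)) =
        2 * n + 1 - min i (min j k) := by omega
    rw [mem_symmSet, mem_symmSet, hmin, hmax, med_sub_left,
      isSortedCell_compl_iff (le_min hi (le_min hj hk)) (min_le_med i j k) (med_le_max i j k)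
        (max_le hi' (max_le hj' hk')), not_not]

lemma IsTSSCPP.mem_of_add_le (hπ : IsTSSCPP n π) {i j k : ℕ} (hi : 1 ≤ i) (hj : 1 ≤ j)
    (hk : 1 ≤ k) (hjn : j ≤ n) (hik : i + k ≤ 2 * n + 1) : (i, j, k) ∈ π := by
  obtain ⟨⟨-, hdown⟩, hsymm, hcompl⟩ := hπ
  suffices hmem : (i, n, 2 * n + 1 - i) ∈ π from
    hdown _ _ _ _ _ _ hmem hi le_rfl hj hjn hk (by omega)
  by_contra hnot
  have hmem : (2 * n + 1 - i, 2 * n + 1 - n, 2 * n + 1 - (2 * n + 1 - i)) ∈ π := by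
    by_contra hnot'
    exact hnot ((hcompl i n (2 * n + 1 - i) (by omega) (by omega) (by omega) (by omega)
      (by omega) (by omega)).2 hnot')
  exact hnot (hdown _ _ _ _ _ _ (hsymm _ _ _ hmem).2.2.2.2 hi (by omega) (by omega) (by omega)
    (by omega) (by omega))

lemma IsTSSCPP.ext (hπ : IsTSSCPP n π) (hρ : IsTSSCPP n ρ)
    (hmem : ∀ i j v, 1 ≤ i → i ≤ j → j ≤ n → v ≤ n →
      ((i, j, n + v) ∈ π ↔ (i, j, n + v) ∈ ρ)) : π = ρ := by
  have hmem_of_le : ∀ i j k, 1 ≤ i → i ≤ j → j ≤ k → j ≤ n → k ≤ 2 * n →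
      ((i, j, k) ∈ π ↔ (i, j, k) ∈ ρ) := fun i j k hi hij hjk hj hk => by
    rcases le_total n k with hnk | hkn
    · obtain ⟨v, rfl⟩ := Nat.exists_eq_add_of_le hnk
      exact hmem i j v hi hij hj (by omega)
    · exact iff_of_true (hπ.mem_of_add_le hi (by omega) (by omega) hj (by omega))
        (hρ.mem_of_add_le hi (by omega) (by omega) hj (by omega))
  refine hπ.2.1.eq_of_sorted hρ.2.1 fun i j k hij hjk => ?_
  by_cases hbox : 1 ≤ i ∧ k ≤ 2 * n
  swap
  · exact iff_of_false (fun hp => hbox ⟨(hπ.1.1 _ hp).1.1, (hπ.1.1 _ hp).2.2.2⟩)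
      (fun hp => hbox ⟨(hρ.1.1 _ hp).1.1, (hρ.1.1 _ hp).2.2.2⟩)
  obtain ⟨hi, hk⟩ := hbox
  rcases le_or_gt j n with hj | hj
  · exact hmem_of_le i j k hi hij hjk hj hk
  · rw [hπ.2.2 i j k hi (by omega) (by omega) (by omega) (by omega) hk,
      hρ.2.2 i j k hi (by omega) (by omega) (by omega) (by omega) hk, not_iff_not,
      hπ.2.1.mem_reverse, hρ.2.1.mem_reverse]
    exact hmem_of_le _ _ _ (by omega) (by omega) (by omega) (by omega) (by omega)

lemma lt_add_card_filter_Ioc_iff {d n : ℕ} {P : ℕ → Prop} [DecidablePred P]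
    (hP : MonotoneOn P (Set.Ioc d n)) {j : ℕ} (hj : j ∈ Set.Ioc d n) :
    n < j + ((Finset.Ioc d n).filter P).card ↔ P j := by
  have hjn : j ≤ n := hj.2
  constructor
  · intro hlt
    by_contra hPj
    have hsubset : (Finset.Ioc d n).filter P ⊆ Finset.Ioc j n := fun i hi => by
      rw [Finset.mem_filter, Finset.mem_Ioc] at hi
      exact Finset.mem_Ioc.2 ⟨not_le.1 fun hij => hPj (hP hi.1 hj hij hi.2), hi.1.2⟩
    have hcard := Finset.card_le_card hsubset
    rw [Nat.card_Ioc] at hcard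
    omega
  · intro hPj
    have hsubset : Finset.Icc j n ⊆ (Finset.Ioc d n).filter P := fun i hi => by
      rw [Finset.mem_Icc] at hi
      have hi' : i ∈ Finset.Ioc d n := Finset.mem_Ioc.2 ⟨hj.1.trans_le hi.1, hi.2⟩
      exact Finset.mem_filter.2 ⟨hi', hP hj (Finset.mem_Ioc.1 hi') hi.1 hPj⟩
    have hcard := Finset.card_le_card hsubset
    rw [Nat.card_Icc] at hcard
    omega

/-- The number of cells `(j - d, j, n + v)` with `d < j ≤ n` that lie in the box but not in `π`. -/
noncomputable def missingCount (n : ℕ) (π : Set (ℕ × ℕ × ℕ)) (d v : ℕ) : ℕ :=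
  ((Finset.Ioc d n).filter fun j => v ≤ n ∧ (j - d, j, n + v) ∉ π).card

lemma IsPP.missingCount_antitone (hπ : IsPP m π) (n v : ℕ) :
    Antitone fun d => missingCount n π d v := fun d d' hdd' =>
  Finset.card_le_card fun j hj => by
    simp only [Finset.mem_filter, Finset.mem_Ioc] at hj ⊢
    refine ⟨by omega, hj.2.1, fun hp => hj.2.2 ?_⟩
    exact hπ.2 _ _ _ _ _ _ hp (by omega) (by omega) (by omega) le_rfl (by omega) le_rfl

lemma IsPP.missingCount_le_missingCount_succ_add_one (hπ : IsPP m π) (n d v : ℕ) :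
    missingCount n π d v ≤ missingCount n π (d + 1) v + 1 := by
  have hsubset : ((Finset.Ioc d n).filter fun j => v ≤ n ∧ (j - d, j, n + v) ∉ π).image (· + 1) ⊆
      insert (n + 1)
        ((Finset.Ioc (d + 1) n).filter fun j => v ≤ n ∧ (j - (d + 1), j, n + v) ∉ π) := by
    intro j' hj'
    obtain ⟨j, hj, rfl⟩ := Finset.mem_image.1 hj'
    simp only [Finset.mem_insert, Finset.mem_filter, Finset.mem_Ioc] at hj ⊢
    refine or_iff_not_imp_left.2 fun hjn => ⟨by omega, hj.2.1, fun hp => hj.2.2 ?_⟩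
    exact hπ.2 _ _ _ _ _ _ hp (by omega) (by omega) (by omega) (by omega) (by omega) le_rfl
  have hcard := (Finset.card_le_card hsubset).trans (Finset.card_insert_le _ _)
  rwa [Finset.card_image_of_injective _ (add_left_injective 1)] at hcard

lemma IsPP.missingCount_monotoneOn (hπ : IsPP m π) (n d : ℕ) :
    MonotoneOn (missingCount n π d) (Set.Iic n) := fun v _ v' hv' hvv' =>
  Finset.card_le_card fun j hj => by
    simp only [Finset.mem_filter, Finset.mem_Ioc] at hj ⊢
    refine ⟨hj.1, hv', fun hp => hj.2.2 ?_⟩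
    exact hπ.2 _ _ _ _ _ _ hp (by omega) le_rfl (by omega) le_rfl (by omega) (by omega)

lemma isCountArray_missingCount (hπ : IsTSSCPP n π) : IsCountArray n (missingCount n π) where
  eq_zero_of_le d v hvd := by
    rw [missingCount, Finset.card_eq_zero, Finset.filter_eq_empty_iff]
    rintro j hj ⟨-, hp⟩
    rw [Finset.mem_Ioc] at hj
    exact hp (hπ.mem_of_add_le (by omega) (by omega) (by omega) hj.2 (by omega))
  eq_zero_of_lt d v hv := by
    simp only [missingCount, hv.not_ge, false_and, Finset.filter_false, Finset.card_empty]
  antitone v := hπ.1.missingCount_antitone n v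
  monotone_add v := monotone_nat_of_le_succ fun d => by
    have := hπ.1.missingCount_le_missingCount_succ_add_one n d v
    omega
  monotoneOn d := hπ.1.missingCount_monotoneOn n d

lemma missingCount_symmSet_isSortedCell (hh : IsCountArray n h) :
    missingCount n (symmSet (IsSortedCell n h)) = h := by
  funext d v
  have hle := hh.le_sub d v
  have hfilter : ((Finset.Ioc d n).filter fun j =>
      v ≤ n ∧ (j - d, j, n + v) ∉ symmSet (IsSortedCell n h)) = Finset.Ioc (n - h d v) n := by
    ext j
    rw [Finset.mem_filter, Finset.mem_Ioc, Finset.mem_Ioc]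
    rcases lt_or_ge n v with hv | hv
    · have := hh.eq_zero_of_lt d v hv
      omega
    · by_cases hj : d < j ∧ j ≤ n
      · rw [mem_symmSet_of_le_of_le (by omega) (by omega),
          isSortedCell_iff_of_le hh (by omega) hj.2 (by omega), Nat.sub_sub_self hj.1.le,
          Nat.add_sub_cancel_left]
        omega
      · omega
  have hzero := hh.eq_zero_of_lt d v
  rw [missingCount, hfilter, Nat.card_Ioc]
  omega

lemma IsPP.mem_iff_add_missingCount_le (hπ : IsPP m π) {i j v : ℕ} (hi : 1 ≤ i) (hij : i ≤ j)
    (hj : j ≤ n) (hv : v ≤ n) :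
    (i, j, n + v) ∈ π ↔ j + missingCount n π (j - i) v ≤ n := by
  have hmono : MonotoneOn (fun j' => v ≤ n ∧ (j' - (j - i), j', n + v) ∉ π)
      (Set.Ioc (j - i) n) := by
    rintro j₁ ⟨hj₁, _⟩ j₂ - hle ⟨-, hp⟩
    refine ⟨hv, fun hp' => hp ?_⟩
    exact hπ.2 _ _ _ _ _ _ hp' (by omega) (by omega) (by omega) hle (by omega) le_rfl
  have hiff := lt_add_card_filter_Ioc_iff hmono (j := j) ⟨by omega, hj⟩
  simp only [Nat.sub_sub_self hij, hv, true_and] at hiff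
  rw [← not_iff_not, not_le, ← hiff]
  simp only [missingCount, hv, true_and]

lemma symmSet_isSortedCell_missingCount (hπ : IsTSSCPP n π) :
    symmSet (IsSortedCell n (missingCount n π)) = π := by
  have hcount := isCountArray_missingCount hπ
  refine (isTSSCPP_symmSet_isSortedCell hcount).ext hπ fun i j v hi hij hj hv => ?_
  rw [mem_symmSet_of_le_of_le hij (by omega), isSortedCell_iff_of_le hcount hi hj (by omega),
    hπ.1.mem_iff_add_missingCount_le hi hij hj hv, Nat.add_sub_cancel_left]

/-- Totally symmetric self-complementary plane partitions correspond to the arrays counting their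
missing cells. -/
noncomputable def planePartitionEquiv (n : ℕ) :
    {π : Set (ℕ × ℕ × ℕ) // IsTSSCPP n π} ≃ {h : ℕ → ℕ → ℕ // IsCountArray n h} where
  toFun π := ⟨missingCount n π.1, isCountArray_missingCount π.2⟩
  invFun h := ⟨symmSet (IsSortedCell n h.1), isTSSCPP_symmSet_isSortedCell h.2⟩
  left_inv π := Subtype.ext (symmSet_isSortedCell_missingCount π.2)
  right_inv h := Subtype.ext (missingCount_symmSet_isSortedCell h.2)

end PlanePartition

/-- The number of TSSCPPs inside a `2n×2n×2n` box equals the number of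
tournaments on `1,…,n` satisfying the upset condition. -/
theorem stmt19 (n : ℕ) (hn : 1 ≤ n) :
    Nat.card {π : Set (ℕ × ℕ × ℕ) // IsTSSCPP n π} =
      Nat.card {U : ℕ → ℕ → Bool // IsTournament n U ∧ UpsetCond n U} :=
  Nat.card_congr ((planePartitionEquiv n).trans (tournamentEquiv n).symm)
end
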